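/- For j = 0, 2, 4, 6, 8 and 10, the space S_{j,2}(Γ₂,ε) is zero. -/

import Mathlib

noncomputable section

open Matrix Complex Filter Topology

/-- The standard symplectic form matrix of size 4. -/
def J4 : Matrix (Fin 4) (Fin 4) ℤ := !![0,0,1,0; 0,0,0,1; -1,0,0,0; 0,-1,0,0]

/-- The Siegel modular group `Γ₂ = Sp(4,ℤ)`, as a set of 4×4 integer matrices. -/
def Sp4Z : Set (Matrix (Fin 4) (Fin 4) ℤ) := {γ | γᵀ * J4 * γ = J4}

/-- The principal congruence subgroup `Γ₂[2]` of level 2. -/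
def Sp4Z2 : Set (Matrix (Fin 4) (Fin 4) ℤ) :=
  {γ | γ ∈ Sp4Z ∧ ∀ i j, ((γ i j : ZMod 2) = if i = j then 1 else 0)}

/-- The Siegel upper half space of degree 2: symmetric 2×2 complex matrices with
positive definite imaginary part (encoded as functions `Fin 2 → Fin 2 → ℂ`). -/
def H2 : Set (Fin 2 → Fin 2 → ℂ) :=
  {τ | (Matrix.of τ).IsSymm ∧ (Matrix.of fun i j => (τ i j).im).PosDef}

/-- The four 2×2 blocks of a 4×4 integer matrix, as complex matrices. -/
def blk (γ : Matrix (Fin 4) (Fin 4) ℤ) (r s : Fin 2) : Matrix (Fin 2) (Fin 2) ℂ :=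
  Matrix.of fun i j =>
    ((γ ⟨2 * (r : ℕ) + (i : ℕ), by have h1 := r.isLt; have h2 := i.isLt; omega⟩
        ⟨2 * (s : ℕ) + (j : ℕ), by have h1 := s.isLt; have h2 := j.isLt; omega⟩ : ℤ) : ℂ)

/-- The factor `cτ + d`. -/
def den (γ : Matrix (Fin 4) (Fin 4) ℤ) (τ : Fin 2 → Fin 2 → ℂ) : Matrix (Fin 2) (Fin 2) ℂ :=
  blk γ 1 0 * Matrix.of τ + blk γ 1 1

/-- The action `γ·τ = (aτ+b)(cτ+d)⁻¹` of `Sp(4)` on the Siegel upper half space. -/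
def moeb (γ : Matrix (Fin 4) (Fin 4) ℤ) (τ : Fin 2 → Fin 2 → ℂ) : Fin 2 → Fin 2 → ℂ :=
  fun i j => ((blk γ 0 0 * Matrix.of τ + blk γ 0 1) * (den γ τ)⁻¹) i j

/-- Matrix coefficients of the `j`-th symmetric power of the standard representation of
`GL(2,ℂ)`, in the basis `x₁^(j-i) x₂^i`. -/
def symCoeff (j : ℕ) (m : Matrix (Fin 2) (Fin 2) ℂ) (l i : Fin (j + 1)) : ℂ :=
  (((Polynomial.C (m 0 0) + Polynomial.C (m 1 0) * Polynomial.X) ^ (j - (l : ℕ)) *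
    (Polynomial.C (m 0 1) + Polynomial.C (m 1 1) * Polynomial.X) ^ (l : ℕ)).coeff i)

/-- The `j`-th symmetric power `Sym^j(m)` acting on coordinate vectors. -/
def symAct (j : ℕ) (m : Matrix (Fin 2) (Fin 2) ℂ) (v : Fin (j + 1) → ℂ) : Fin (j + 1) → ℂ :=
  fun i => ∑ l, symCoeff j m l i * v l

lemma symAct_add (j : ℕ) (m : Matrix (Fin 2) (Fin 2) ℂ) (v w : Fin (j + 1) → ℂ) :
    symAct j m (v + w) = symAct j m v + symAct j m w := by
  funext i
  simp [symAct, mul_add, Finset.sum_add_distrib]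

lemma symAct_smul (j : ℕ) (m : Matrix (Fin 2) (Fin 2) ℂ) (a : ℂ) (v : Fin (j + 1) → ℂ) :
    symAct j m (a • v) = a • symAct j m v := by
  funext i
  simp only [symAct, Pi.smul_apply, smul_eq_mul, Finset.mul_sum]
  exact Finset.sum_congr rfl fun l _ => by ring

lemma symAct_zero (j : ℕ) (m : Matrix (Fin 2) (Fin 2) ℂ) : symAct j m 0 = 0 := by
  funext i; simp [symAct]

/-- The weight `(j,k)` automorphy action `Sym^j(m) ⊗ det(m)^k`. -/
def wt (j : ℕ) (k : ℤ) (m : Matrix (Fin 2) (Fin 2) ℂ) (v : Fin (j + 1) → ℂ) :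
    Fin (j + 1) → ℂ :=
  (m.det ^ k) • symAct j m v

lemma wt_add (j : ℕ) (k : ℤ) (m : Matrix (Fin 2) (Fin 2) ℂ) (v w : Fin (j + 1) → ℂ) :
    wt j k m (v + w) = wt j k m v + wt j k m w := by
  simp [wt, symAct_add, smul_add]

lemma wt_smul (j : ℕ) (k : ℤ) (m : Matrix (Fin 2) (Fin 2) ℂ) (a : ℂ) (v : Fin (j + 1) → ℂ) :
    wt j k m (a • v) = a • wt j k m v := by
  rw [wt, wt, symAct_smul, smul_comm]

lemma wt_zero (j : ℕ) (k : ℤ) (m : Matrix (Fin 2) (Fin 2) ℂ) : wt j k m 0 = 0 := by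
  simp [wt, symAct_zero]

/-- The slash operation `(F|γ)(τ) = Sym^j(cτ+d)⁻¹ det(cτ+d)⁻ᵏ F(γ·τ)`. -/
def slashS (j : ℕ) (k : ℤ) (γ : Matrix (Fin 4) (Fin 4) ℤ)
    (F : (Fin 2 → Fin 2 → ℂ) → (Fin (j + 1) → ℂ)) (τ : Fin 2 → Fin 2 → ℂ) :
    Fin (j + 1) → ℂ :=
  ((den γ τ).det ^ (-k)) • symAct j ((den γ τ)⁻¹) (F (moeb γ τ))

lemma slashS_add (j : ℕ) (k : ℤ) (γ : Matrix (Fin 4) (Fin 4) ℤ)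
    (F G : (Fin 2 → Fin 2 → ℂ) → (Fin (j + 1) → ℂ)) (τ : Fin 2 → Fin 2 → ℂ) :
    slashS j k γ (F + G) τ = slashS j k γ F τ + slashS j k γ G τ := by
  simp [slashS, symAct_add, smul_add]

lemma slashS_smul (j : ℕ) (k : ℤ) (γ : Matrix (Fin 4) (Fin 4) ℤ) (a : ℂ)
    (F : (Fin 2 → Fin 2 → ℂ) → (Fin (j + 1) → ℂ)) (τ : Fin 2 → Fin 2 → ℂ) :
    slashS j k γ (a • F) τ = a • slashS j k γ F τ := by
  simp only [slashS, Pi.smul_apply, symAct_smul]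
  rw [smul_comm]

lemma slashS_zero (j : ℕ) (k : ℤ) (γ : Matrix (Fin 4) (Fin 4) ℤ) (τ : Fin 2 → Fin 2 → ℂ) :
    slashS j k γ (0 : (Fin 2 → Fin 2 → ℂ) → (Fin (j + 1) → ℂ)) τ = 0 := by
  simp [slashS, symAct_zero]

/-- The diagonal point `diag(τ₁,τ₂)` of the Siegel upper half space. -/
def diagH (τ₁ τ₂ : ℂ) : Fin 2 → Fin 2 → ℂ :=
  fun i j => if i = j then (if i = 0 then τ₁ else τ₂) else 0

/-- `F` is a Siegel cusp form of degree 2 and weight `(j,k)` on `Γ`, with character `χ`: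
holomorphic on `ℍ₂`, transforming by `F(γ·τ) = χ(γ) Sym^j(cτ+d) det(cτ+d)^k F(τ)` for `γ ∈ Γ`,
with `(F|γ)(diag(τ₁,it)) → 0` as `t → ∞` for every `γ ∈ Γ₂`, and (normalization) vanishing
off `ℍ₂`. -/
def IsSiegelCuspForm (j : ℕ) (k : ℤ) (Γ : Set (Matrix (Fin 4) (Fin 4) ℤ))
    (χ : Matrix (Fin 4) (Fin 4) ℤ → ℂ)
    (F : (Fin 2 → Fin 2 → ℂ) → (Fin (j + 1) → ℂ)) : Prop :=
  DifferentiableOn ℂ F H2 ∧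
  (∀ γ ∈ Γ, ∀ τ ∈ H2, F (moeb γ τ) = χ γ • wt j k (den γ τ) (F τ)) ∧
  (∀ γ ∈ Sp4Z, ∀ τ₁ : ℂ, 0 < τ₁.im →
    Tendsto (fun t : ℝ => slashS j k γ F (diagH τ₁ (t * Complex.I))) atTop (𝓝 0)) ∧
  (∀ τ, τ ∉ H2 → F τ = 0)

/-- The space `S_{j,k}(Γ, χ)` of Siegel cusp forms of degree 2 and weight `(j,k)` on `Γ`
with character `χ`, as a complex vector space. -/
def SiegelCusp (j : ℕ) (k : ℤ) (Γ : Set (Matrix (Fin 4) (Fin 4) ℤ))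
    (χ : Matrix (Fin 4) (Fin 4) ℤ → ℂ) :
    Submodule ℂ ((Fin 2 → Fin 2 → ℂ) → (Fin (j + 1) → ℂ)) where
  carrier := {F | IsSiegelCuspForm j k Γ χ F}
  add_mem' := by
    rintro F G hF hG
    refine ⟨hF.1.add hG.1, ?_, ?_, ?_⟩
    · intro γ hγ τ hτ
      show F (moeb γ τ) + G (moeb γ τ) = χ γ • wt j k (den γ τ) (F τ + G τ)
      rw [wt_add, smul_add, hF.2.1 γ hγ τ hτ, hG.2.1 γ hγ τ hτ]
    · intro γ hγ τ₁ hτ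
      have h := (hF.2.2.1 γ hγ τ₁ hτ).add (hG.2.2.1 γ hγ τ₁ hτ)
      rw [add_zero] at h
      exact h.congr fun t => (slashS_add j k γ F G _).symm
    · intro τ hτ
      show F τ + G τ = 0
      rw [hF.2.2.2 τ hτ, hG.2.2.2 τ hτ, add_zero]
  zero_mem' := by
    refine ⟨?_, ?_, ?_, ?_⟩
    · exact differentiableOn_const 0
    · intro γ hγ τ hτ
      show (0 : Fin (j + 1) → ℂ) = χ γ • wt j k (den γ τ) 0
      rw [wt_zero, smul_zero]
    · intro γ hγ τ₁ hτ
      have : (fun t : ℝ => slashS j k γ (0 : (Fin 2 → Fin 2 → ℂ) → (Fin (j + 1) → ℂ))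
          (diagH τ₁ (t * Complex.I))) = fun _ => 0 := by
        funext t; exact slashS_zero j k γ _
      rw [this]
      exact tendsto_const_nhds
    · intro τ _; rfl
  smul_mem' := by
    rintro a F hF
    refine ⟨hF.1.const_smul a, ?_, ?_, ?_⟩
    · intro γ hγ τ hτ
      show a • F (moeb γ τ) = χ γ • wt j k (den γ τ) (a • F τ)
      rw [hF.2.1 γ hγ τ hτ, wt_smul, smul_comm]
    · intro γ hγ τ₁ hτ
      have h := (hF.2.2.1 γ hγ τ₁ hτ).const_smul a
      rw [smul_zero] at h
      exact h.congr fun t => (slashS_smul j k γ a F _).symm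
    · intro τ hτ
      show a • F τ = 0
      rw [hF.2.2.2 τ hτ, smul_zero]

/-- `ε` is (on `Γ₂`) the unique nontrivial homomorphism `Γ₂ → {±1}`. -/
def IsEps (ε : Matrix (Fin 4) (Fin 4) ℤ → ℂ) : Prop :=
  (∀ γ ∈ Sp4Z, ε γ = 1 ∨ ε γ = -1) ∧
  (∀ γ ∈ Sp4Z, ∀ δ ∈ Sp4Z, ε (γ * δ) = ε γ * ε δ) ∧
  (∃ γ ∈ Sp4Z, ε γ ≠ 1)


def ei1 (p q r s : ℤ) : Matrix (Fin 4) (Fin 4) ℤ := !![p,0,q,0; 0,1,0,0; r,0,s,0; 0,0,0,1]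
def ei2 (p q r s : ℤ) : Matrix (Fin 4) (Fin 4) ℤ := !![1,0,0,0; 0,p,0,q; 0,0,1,0; 0,r,0,s]
def edU (e p q r s : ℤ) : Matrix (Fin 4) (Fin 4) ℤ :=
  !![p,q,0,0;r,s,0,0;0,0,e*s,-e*r;0,0,-e*q,e*p]
def etr (a b c : ℤ) : Matrix (Fin 4) (Fin 4) ℤ := !![1,0,a,b;0,1,b,c;0,0,1,0;0,0,0,1]

lemma J4_eq : J4 = Matrix.of ![![0,0,1,0], ![0,0,0,1], ![-1,0,0,0], ![0,-1,0,0]] := rfl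

lemma sp4_iff (γ : Matrix (Fin 4) (Fin 4) ℤ) : γ ∈ Sp4Z ↔
    (γ 0 0 * γ 2 1 + γ 1 0 * γ 3 1 - γ 2 0 * γ 0 1 - γ 3 0 * γ 1 1 = 0 ∧
     γ 0 0 * γ 2 2 + γ 1 0 * γ 3 2 - γ 2 0 * γ 0 2 - γ 3 0 * γ 1 2 = 1 ∧
     γ 0 0 * γ 2 3 + γ 1 0 * γ 3 3 - γ 2 0 * γ 0 3 - γ 3 0 * γ 1 3 = 0 ∧
     γ 0 1 * γ 2 2 + γ 1 1 * γ 3 2 - γ 2 1 * γ 0 2 - γ 3 1 * γ 1 2 = 0 ∧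
     γ 0 1 * γ 2 3 + γ 1 1 * γ 3 3 - γ 2 1 * γ 0 3 - γ 3 1 * γ 1 3 = 1 ∧
     γ 0 2 * γ 2 3 + γ 1 2 * γ 3 3 - γ 2 2 * γ 0 3 - γ 3 2 * γ 1 3 = 0) := by
  have key : γ ∈ Sp4Z ↔ ∀ i j, (γᵀ * J4 * γ) i j = J4 i j := by
    constructor
    · intro h i j; rw [show γᵀ * J4 * γ = J4 from h]
    · intro h; exact Matrix.ext h
  rw [key]
  simp only [Fin.forall_fin_succ, J4, Matrix.mul_apply, Fin.sum_univ_four,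
    Matrix.transpose_apply]
  simp
  constructor
  · intro h
    obtain ⟨⟨_, h2, h3, h4⟩, ⟨_, _, h5, h6⟩, ⟨_, _, _, h7⟩, _⟩ := h
    refine ⟨?_, ?_, ?_, ?_, ?_, ?_⟩ <;> linarith
  · rintro ⟨h1, h2, h3, h4, h5, h6⟩
    refine ⟨⟨?_, ?_, ?_, ?_⟩, ⟨?_, ?_, ?_, ?_⟩, ⟨?_, ?_, ?_, ?_⟩, ?_, ?_, ?_, ?_⟩ <;> linarith

lemma sp4_mul {γ δ : Matrix (Fin 4) (Fin 4) ℤ} (hγ : γ ∈ Sp4Z) (hδ : δ ∈ Sp4Z) :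
    γ * δ ∈ Sp4Z := by
  show (γ * δ)ᵀ * J4 * (γ * δ) = J4
  have h1 : γᵀ * J4 * γ = J4 := hγ
  have h2 : δᵀ * J4 * δ = J4 := hδ
  calc (γ * δ)ᵀ * J4 * (γ * δ) = δᵀ * (γᵀ * J4 * γ) * δ := by
        rw [Matrix.transpose_mul]; simp only [Matrix.mul_assoc]
    _ = J4 := by rw [h1, h2]

lemma ei1_mem {p q r s : ℤ} (h : p * s - q * r = 1) : ei1 p q r s ∈ Sp4Z := by
  rw [sp4_iff]; simp [ei1]; linarith
lemma ei2_mem {p q r s : ℤ} (h : p * s - q * r = 1) : ei2 p q r s ∈ Sp4Z := by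
  rw [sp4_iff]; simp [ei2]; linarith
lemma edU_mem {e p q r s : ℤ} (he : e * e = 1) (h : p * s - q * r = e) : edU e p q r s ∈ Sp4Z := by
  rw [sp4_iff]; simp [edU]
  refine ⟨?_, ?_, ?_, ?_⟩
  · linear_combination e * h + he
  · ring
  · ring
  · linear_combination e * h + he
lemma etr_mem (a b c : ℤ) : etr a b c ∈ Sp4Z := by
  rw [sp4_iff]; simp [etr]

lemma ei1_mul (p q r s p' q' r' s' : ℤ) : ei1 p q r s * ei1 p' q' r' s' =
    ei1 (p*p'+q*r') (p*q'+q*s') (r*p'+s*r') (r*q'+s*s') := by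
  ext i j; fin_cases i <;> fin_cases j <;> simp [ei1, Matrix.mul_apply, Fin.sum_univ_four]
lemma ei2_mul (p q r s p' q' r' s' : ℤ) : ei2 p q r s * ei2 p' q' r' s' =
    ei2 (p*p'+q*r') (p*q'+q*s') (r*p'+s*r') (r*q'+s*s') := by
  ext i j; fin_cases i <;> fin_cases j <;> simp [ei2, Matrix.mul_apply, Fin.sum_univ_four]
lemma edU_mul (e p q r s e' p' q' r' s' : ℤ) : edU e p q r s * edU e' p' q' r' s' =
    edU (e*e') (p*p'+q*r') (p*q'+q*s') (r*p'+s*r') (r*q'+s*s') := by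
  ext i j; fin_cases i <;> fin_cases j <;> simp [edU, Matrix.mul_apply, Fin.sum_univ_four] <;> ring
lemma etr_mul (a b c a' b' c' : ℤ) : etr a b c * etr a' b' c' = etr (a+a') (b+b') (c+c') := by
  ext i j; fin_cases i <;> fin_cases j <;> simp [etr, Matrix.mul_apply, Fin.sum_univ_four] <;> ring

lemma sl2_hom_trivial (f : ℤ → ℤ → ℤ → ℤ → ℂ)
    (hpm : ∀ p q r s, p*s-q*r=1 → f p q r s = 1 ∨ f p q r s = -1)
    (hmul : ∀ p q r s p' q' r' s', p*s-q*r=1 → p'*s'-q'*r'=1 →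
      f (p*p'+q*r') (p*q'+q*s') (r*p'+s*r') (r*q'+s*s') = f p q r s * f p' q' r' s')
    (hT : f 1 1 0 1 = 1) : ∀ p q r s, p*s-q*r=1 → f p q r s = 1 := by
  have h1 : f 1 0 0 1 = 1 := by
    have := hmul 1 0 0 1 1 0 0 1 (by norm_num) (by norm_num)
    norm_num at this
    rcases hpm 1 0 0 1 (by norm_num) with h | h
    · exact h
    · rw [h] at this; norm_num at this
  have sq : ∀ p q r s, p*s-q*r=1 → f p q r s * f p q r s = 1 := by
    intro p q r s h
    rcases hpm p q r s h with h | h <;> rw [h] <;> norm_num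
  have hS : f 0 (-1) 1 0 = 1 := by
    have a1 := hmul 0 (-1) 1 0 1 1 0 1 (by norm_num) (by norm_num)
    norm_num at a1
    have a2 := hmul 0 (-1) 1 1 0 (-1) 1 1 (by norm_num) (by norm_num)
    norm_num at a2
    have a3 := hmul (-1) (-1) 1 0 0 (-1) 1 1 (by norm_num) (by norm_num)
    norm_num at a3
    have a4 := hmul 0 (-1) 1 0 0 (-1) 1 0 (by norm_num) (by norm_num)
    norm_num at a4
    have b := sq 0 (-1) 1 0 (by norm_num)
    rw [a1, hT, mul_one] at a2
    rw [a2, a1, hT, mul_one, a4, b] at a3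
    rw [← one_mul (f 0 (-1) 1 0), ← a3]
  intro p q r s h
  let A : Matrix.SpecialLinearGroup (Fin 2) ℤ := ⟨!![p,q;r,s], by rw [Matrix.det_fin_two_of]; exact h⟩
  have hA : A ∈ Subgroup.closure {ModularGroup.S, ModularGroup.T} := by
    rw [SpecialLinearGroup.SL2Z_generators]; trivial
  have dd : ∀ B : Matrix.SpecialLinearGroup (Fin 2) ℤ, B.1 0 0 * B.1 1 1 - B.1 0 1 * B.1 1 0 = 1 := by
    intro B; have := B.2; rwa [Matrix.det_fin_two] at this
  have : f (A.1 0 0) (A.1 0 1) (A.1 1 0) (A.1 1 1) = 1 := by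
    refine Subgroup.closure_induction (p := fun B _ => f (B.1 0 0) (B.1 0 1) (B.1 1 0) (B.1 1 1) = 1)
      ?_ ?_ ?_ ?_ hA
    · rintro B (rfl | rfl)
      · simpa [ModularGroup.S] using hS
      · simpa [ModularGroup.T] using hT
    · simpa using h1
    · intro B C _ _ hB hC
      have := hmul (B.1 0 0) (B.1 0 1) (B.1 1 0) (B.1 1 1) (C.1 0 0) (C.1 0 1) (C.1 1 0) (C.1 1 1)
        (dd B) (dd C)
      simp only [Matrix.SpecialLinearGroup.coe_mul, Matrix.mul_apply, Fin.sum_univ_two]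
      rw [this, hB, hC, one_mul]
    · intro B _ hB
      have e1 := hmul (B.1 0 0) (B.1 0 1) (B.1 1 0) (B.1 1 1) (B.1 1 1) (-B.1 0 1) (-B.1 1 0) (B.1 0 0)
        (dd B) (by linarith [dd B])
      rw [hB, one_mul] at e1
      have i1 : (B⁻¹).1 0 0 = B.1 1 1 := by simp [Matrix.SpecialLinearGroup.coe_inv, Matrix.adjugate_fin_two]
      have i2 : (B⁻¹).1 0 1 = -B.1 0 1 := by simp [Matrix.SpecialLinearGroup.coe_inv, Matrix.adjugate_fin_two]
      have i3 : (B⁻¹).1 1 0 = -B.1 1 0 := by simp [Matrix.SpecialLinearGroup.coe_inv, Matrix.adjugate_fin_two]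
      have i4 : (B⁻¹).1 1 1 = B.1 0 0 := by simp [Matrix.SpecialLinearGroup.coe_inv, Matrix.adjugate_fin_two]
      rw [i1, i2, i3, i4, ← e1, ← h1]
      have := dd B
      congr 1 <;> linarith
  simpa [A] using this

lemma exists_sl2_kill (a c : ℤ) : ∃ p q r s : ℤ, p * s - q * r = 1 ∧ r * a + s * c = 0 := by
  by_cases h : Int.gcd a c = 0
  · rw [Int.gcd_eq_zero_iff] at h
    exact ⟨1, 0, 0, 1, by norm_num, by simp [h.1, h.2]⟩
  · have hb := Int.gcd_eq_gcd_ab a c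
    obtain ⟨a', ha⟩ := Int.gcd_dvd_left a c
    obtain ⟨c', hc⟩ := Int.gcd_dvd_right a c
    set g : ℤ := (Int.gcd a c : ℤ) with hg
    have hg0 : g ≠ 0 := by rw [hg]; exact_mod_cast h
    refine ⟨Int.gcdA a c, Int.gcdB a c, -c', a', ?_, ?_⟩
    · apply mul_left_cancel₀ hg0
      generalize Int.gcdA a c = u at *
      generalize Int.gcdB a c = v at *
      linear_combination (-u) * ha - v * hc - hb
    · generalize Int.gcdA a c = u at *
      generalize Int.gcdB a c = v at *
      linear_combination (-c') * ha + a' * hc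

section eps
variable {ε : Matrix (Fin 4) (Fin 4) ℤ → ℂ}

lemma eps_sq (hε : IsEps ε) {γ : Matrix (Fin 4) (Fin 4) ℤ} (h : γ ∈ Sp4Z) : ε γ * ε γ = 1 := by
  rcases hε.1 γ h with h | h <;> rw [h] <;> norm_num

lemma eps_ne (hε : IsEps ε) {γ : Matrix (Fin 4) (Fin 4) ℤ} (h : γ ∈ Sp4Z) : ε γ ≠ 0 := by
  rcases hε.1 γ h with h | h <;> rw [h] <;> norm_num

/-- conjugate elements have equal sign -/
lemma eps_conj (hε : IsEps ε) {g γ δ : Matrix (Fin 4) (Fin 4) ℤ} (hg : g ∈ Sp4Z) (h : γ ∈ Sp4Z)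
    (hd : δ ∈ Sp4Z) (he : g * γ = δ * g) : ε γ = ε δ := by
  have h1 := hε.2.1 g hg γ h
  have h2 := hε.2.1 δ hd g hg
  rw [he, h2, mul_comm] at h1
  exact (mul_left_cancel₀ (eps_ne hε hg) h1).symm

lemma eps_swap (hε : IsEps ε) : ε (ei2 1 1 0 1) = ε (ei1 1 1 0 1) := by
  refine eps_conj hε (g := edU (-1) 0 1 1 0) (edU_mem (by norm_num) (by norm_num))
    (ei2_mem (by norm_num)) (ei1_mem (by norm_num)) ?_
  ext i j; fin_cases i <;> fin_cases j <;> simp [edU, ei1, ei2, Matrix.mul_apply, Fin.sum_univ_four]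

lemma eps_12 (hε : IsEps ε) : ε (etr 0 1 0) = ε (ei1 1 1 0 1) := by
  have h1 : ε (etr 1 1 1) = ε (ei1 1 1 0 1) := by
    refine eps_conj hε (g := edU 1 1 0 (-1) 1) (edU_mem (by norm_num) (by norm_num))
      (etr_mem _ _ _) (ei1_mem (by norm_num)) ?_
    ext i j; fin_cases i <;> fin_cases j <;> simp [edU, ei1, etr, Matrix.mul_apply, Fin.sum_univ_four]
  have h2 : etr 1 1 1 = ei1 1 1 0 1 * (ei2 1 1 0 1 * etr 0 1 0) := by
    ext i j; fin_cases i <;> fin_cases j <;> simp [ei2, ei1, etr, Matrix.mul_apply, Fin.sum_univ_four]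
  have m1 : ei1 1 1 0 1 ∈ Sp4Z := ei1_mem (by norm_num)
  have m2 : ei2 1 1 0 1 ∈ Sp4Z := ei2_mem (by norm_num)
  rw [h2, hε.2.1 _ m1 _ (sp4_mul m2 (etr_mem _ _ _)), hε.2.1 _ m2 _ (etr_mem _ _ _), eps_swap hε,
    ← mul_assoc, eps_sq hε m1, one_mul] at h1
  exact h1

lemma eps_conj12 (hε : IsEps ε) (c : ℤ) : ε (etr 0 c 0) = ε (edU 1 1 c 0 1) := by
  refine eps_conj hε (g := ei2 0 1 (-1) 0) (ei2_mem (by norm_num))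
      (etr_mem _ _ _) (edU_mem (by norm_num) (by norm_num)) ?_
  ext i j; fin_cases i <;> fin_cases j <;> simp [edU, ei2, etr, Matrix.mul_apply, Fin.sum_univ_four]

lemma eps_T (hε : IsEps ε) : ε (ei1 1 1 0 1) = -1 := by
  rcases hε.1 _ (ei1_mem (p := 1) (q := 1) (r := 0) (s := 1) (by norm_num)) with hT | hT
  swap
  · exact hT
  exfalso
  have t1 : ∀ p q r s, p*s-q*r=1 → ε (ei1 p q r s) = 1 :=
    sl2_hom_trivial _ (fun p q r s h => hε.1 _ (ei1_mem h))
      (fun p q r s p' q' r' s' h h' => by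
        rw [← ei1_mul]; exact hε.2.1 _ (ei1_mem h) _ (ei1_mem h')) hT
  have t2 : ∀ p q r s, p*s-q*r=1 → ε (ei2 p q r s) = 1 :=
    sl2_hom_trivial _ (fun p q r s h => hε.1 _ (ei2_mem h))
      (fun p q r s p' q' r' s' h h' => by
        rw [← ei2_mul]; exact hε.2.1 _ (ei2_mem h) _ (ei2_mem h')) (by rw [eps_swap hε, hT])
  have t3 : ∀ p q r s, p*s-q*r=1 → ε (edU 1 p q r s) = 1 :=
    sl2_hom_trivial _ (fun p q r s h => hε.1 _ (edU_mem (by norm_num) h))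
      (fun p q r s p' q' r' s' h h' => by
        rw [← hε.2.1 _ (edU_mem (by norm_num) h) _ (edU_mem (by norm_num) h'), edU_mul]
        norm_num) (by rw [← eps_conj12 hε, eps_12 hε, hT])
  obtain ⟨γ, hγ, hne⟩ := hε.2.2
  apply hne
  -- step 1
  obtain ⟨p, q, r, s, hd, hk⟩ := exists_sl2_kill (γ 0 0) (γ 2 0)
  obtain ⟨γ1, hγ1, he1, z20⟩ : ∃ δ ∈ Sp4Z, ε δ = ε γ ∧ δ 2 0 = 0 := by
    refine ⟨ei1 p q r s * γ, sp4_mul (ei1_mem hd) hγ, ?_, ?_⟩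
    · rw [hε.2.1 _ (ei1_mem hd) _ hγ, t1 _ _ _ _ hd, one_mul]
    · simpa [ei1, Matrix.mul_apply, Fin.sum_univ_four] using hk
  rw [← he1]
  clear he1 hk hd hne hγ
  obtain ⟨p, q, r, s, hd, hk⟩ := exists_sl2_kill (γ1 1 0) (γ1 3 0)
  obtain ⟨γ2, hγ2, he2, y20, y30⟩ : ∃ δ ∈ Sp4Z, ε δ = ε γ1 ∧ δ 2 0 = 0 ∧ δ 3 0 = 0 := by
    refine ⟨ei2 p q r s * γ1, sp4_mul (ei2_mem hd) hγ1, ?_, ?_, ?_⟩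
    · rw [hε.2.1 _ (ei2_mem hd) _ hγ1, t2 _ _ _ _ hd, one_mul]
    · simpa [ei2, Matrix.mul_apply, Fin.sum_univ_four] using z20
    · simpa [ei2, Matrix.mul_apply, Fin.sum_univ_four] using hk
  rw [← he2]
  clear he2 hk hd z20 hγ1
  obtain ⟨p, q, r, s, hd, hk⟩ := exists_sl2_kill (γ2 0 0) (γ2 1 0)
  obtain ⟨γ3, hγ3, he3, x10, x20, x30⟩ :
      ∃ δ ∈ Sp4Z, ε δ = ε γ2 ∧ δ 1 0 = 0 ∧ δ 2 0 = 0 ∧ δ 3 0 = 0 := by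
    refine ⟨edU 1 p q r s * γ2, sp4_mul (edU_mem (by norm_num) hd) hγ2, ?_, ?_, ?_, ?_⟩
    · rw [hε.2.1 _ (edU_mem (by norm_num) hd) _ hγ2, t3 _ _ _ _ hd, one_mul]
    · simpa [edU, Matrix.mul_apply, Fin.sum_univ_four] using hk
    · simp [edU, Matrix.mul_apply, Fin.sum_univ_four, y20, y30]
    · simp [edU, Matrix.mul_apply, Fin.sum_univ_four, y20, y30]
  rw [← he3]
  clear he3 hk hd y20 y30 hγ2
  obtain ⟨γ4, hγ4, he4, w00, w10, w20, w30⟩ :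
      ∃ δ ∈ Sp4Z, ε δ = ε γ3 ∧ δ 0 0 = 1 ∧ δ 1 0 = 0 ∧ δ 2 0 = 0 ∧ δ 3 0 = 0 := by
    have := ((sp4_iff _).1 hγ3).2.1
    rw [x10, x20, x30] at this
    have h1 : γ3 0 0 * γ3 2 2 = 1 := by linarith
    rcases Int.eq_one_or_neg_one_of_mul_eq_one h1 with h | h
    · exact ⟨γ3, hγ3, rfl, h, x10, x20, x30⟩
    · refine ⟨ei1 (-1) 0 0 (-1) * γ3, sp4_mul (ei1_mem (by norm_num)) hγ3, ?_, ?_, ?_, ?_, ?_⟩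
      · rw [hε.2.1 _ (ei1_mem (by norm_num)) _ hγ3, t1 _ _ _ _ (by norm_num), one_mul]
      all_goals simp [ei1, Matrix.mul_apply, Fin.sum_univ_four, x10, x20, x30, h]
  rw [← he4]
  clear he4 x10 x20 x30 hγ3
  obtain ⟨k1, k2, k3, k4, k5, k6⟩ := (sp4_iff _).1 hγ4
  rw [w00, w10, w20, w30] at k1 k2 k3
  have v21 : γ4 2 1 = 0 := by linarith
  have v22 : γ4 2 2 = 1 := by linarith
  have v23 : γ4 2 3 = 0 := by linarith
  rw [v21, v23] at k5
  have hdet : γ4 1 1 * γ4 3 3 - γ4 1 3 * γ4 3 1 = 1 := by linarith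
  have hdet' : γ4 3 3 * γ4 1 1 - (-γ4 1 3) * (-γ4 3 1) = 1 := by linarith
  -- kill the second block
  set g := ei2 (γ4 3 3) (-γ4 1 3) (-γ4 3 1) (γ4 1 1) with hg
  have hgm : g ∈ Sp4Z := ei2_mem hdet'
  have he5 : ε (g * γ4) = ε γ4 := by
    rw [hε.2.1 _ hgm _ hγ4, t2 _ _ _ _ hdet', one_mul]
  rw [← he5]
  have hm := sp4_mul hgm hγ4
  obtain ⟨δ, hδ⟩ : ∃ δ, δ = g * γ4 := ⟨_, rfl⟩
  rw [← hδ] at hm ⊢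
  have d00 : δ 0 0 = 1 := by rw [hδ]; simp [hg, ei2, Matrix.mul_apply, Fin.sum_univ_four, w00]
  have d10 : δ 1 0 = 0 := by rw [hδ]; simp [hg, ei2, Matrix.mul_apply, Fin.sum_univ_four, w10, w30]
  have d20 : δ 2 0 = 0 := by rw [hδ]; simp [hg, ei2, Matrix.mul_apply, Fin.sum_univ_four, w20]
  have d30 : δ 3 0 = 0 := by rw [hδ]; simp [hg, ei2, Matrix.mul_apply, Fin.sum_univ_four, w10, w30]
  have d21 : δ 2 1 = 0 := by rw [hδ]; simp [hg, ei2, Matrix.mul_apply, Fin.sum_univ_four, v21]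
  have d22 : δ 2 2 = 1 := by rw [hδ]; simp [hg, ei2, Matrix.mul_apply, Fin.sum_univ_four, v22]
  have d23 : δ 2 3 = 0 := by rw [hδ]; simp [hg, ei2, Matrix.mul_apply, Fin.sum_univ_four, v23]
  have d11 : δ 1 1 = 1 := by
    rw [hδ]; simp [hg, ei2, Matrix.mul_apply, Fin.sum_univ_four]; linarith
  have d13 : δ 1 3 = 0 := by
    rw [hδ]; simp [hg, ei2, Matrix.mul_apply, Fin.sum_univ_four]; ring
  have d31 : δ 3 1 = 0 := by
    rw [hδ]; simp [hg, ei2, Matrix.mul_apply, Fin.sum_univ_four]; ring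
  have d33 : δ 3 3 = 1 := by
    rw [hδ]; simp [hg, ei2, Matrix.mul_apply, Fin.sum_univ_four]; linarith
  obtain ⟨-, -, -, l4, -, l6⟩ := (sp4_iff _).1 hm
  rw [d22, d11, d21, d31] at l4
  rw [d23, d33, d22, d13] at l6
  have hfin : δ = edU 1 1 (δ 0 1) 0 1 * (ei1 1 (δ 0 2 - δ 0 1 * δ 0 3) 0 1 * etr 0 (δ 0 3) 0) := by
    have l4' : δ 3 2 = - δ 0 1 := by linarith
    have l6' : δ 1 2 = δ 0 3 := by linarith
    ext i j
    fin_cases i <;> fin_cases j <;>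
      simp [edU, ei1, etr, Matrix.mul_apply, Fin.sum_univ_four, d00, d10, d20, d30, d21, d22, d23,
        d11, d13, d31, d33, l4', l6']
  have m1 := edU_mem (e := 1) (p := 1) (q := δ 0 1) (r := 0) (s := 1) (by norm_num) (by norm_num)
  have m2 := ei1_mem (p := 1) (q := δ 0 2 - δ 0 1 * δ 0 3) (r := 0) (s := 1) (by norm_num)
  rw [hfin, hε.2.1 _ m1 _ (sp4_mul m2 (etr_mem _ _ _)), hε.2.1 _ m2 _ (etr_mem _ _ _),
    eps_conj12 hε, t3 _ _ _ _ (by norm_num), t3 _ _ _ _ (by norm_num), t1 _ _ _ _ (by norm_num)]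
  norm_num

lemma eps_tr1 (hε : IsEps ε) : ε (etr 1 0 0) = -1 := by
  rw [← eps_T hε]; congr 1
lemma eps_tr2 (hε : IsEps ε) : ε (etr 0 1 0) = -1 := by
  rw [eps_12 hε, eps_T hε]
lemma eps_tr3 (hε : IsEps ε) : ε (etr 0 0 1) = -1 := by
  rw [← eps_T hε, ← eps_swap hε]; congr 1

lemma eps_diag (hε : IsEps ε) : ε (edU (-1) 1 0 0 (-1)) = 1 := by
  have h : edU (-1) 1 0 0 (-1) = ei2 0 (-1) 1 0 * ei2 0 (-1) 1 0 := by
    ext i j; fin_cases i <;> fin_cases j <;> simp [edU, ei2, Matrix.mul_apply, Fin.sum_univ_four]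
  have m : ei2 0 (-1) 1 0 ∈ Sp4Z := ei2_mem (by norm_num)
  rw [h, hε.2.1 _ m _ m, eps_sq hε m]

lemma eps_one (hε : IsEps ε) : ε 1 = 1 := by
  have m : (1 : Matrix (Fin 4) (Fin 4) ℤ) ∈ Sp4Z := by rw [sp4_iff]; simp
  have := hε.2.1 1 m 1 m
  rw [mul_one, eps_sq hε m] at this
  exact this

lemma eps_rot (hε : IsEps ε) : ε (edU 1 0 (-1) 1 (-1)) = 1 := by
  have m : edU 1 0 (-1) 1 (-1) ∈ Sp4Z := edU_mem (by norm_num) (by norm_num)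
  have h : edU 1 0 (-1) 1 (-1) * (edU 1 0 (-1) 1 (-1) * edU 1 0 (-1) 1 (-1)) = 1 := by
    rw [edU_mul, edU_mul]
    ext i j; fin_cases i <;> fin_cases j <;> simp [edU]
  have := eps_one hε
  rwa [← h, hε.2.1 _ m _ (sp4_mul m m), hε.2.1 _ m _ m, eps_sq hε m, mul_one] at this
end eps

lemma mem_H2_iff (τ : Fin 2 → Fin 2 → ℂ) : τ ∈ H2 ↔
    τ 1 0 = τ 0 1 ∧ 0 < (τ 0 0).im ∧ (τ 0 1).im ^ 2 < (τ 0 0).im * (τ 1 1).im := by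
  constructor
  · rintro ⟨h1, h2⟩
    have hs : τ 1 0 = τ 0 1 := by simpa using h1.apply 0 1
    have hp : 0 < (τ 0 0).im := by simpa using h2.diag_pos (i := 0)
    refine ⟨hs, hp, ?_⟩
    have := h2.dotProduct_mulVec_pos (x := ![-(τ 0 1).im, (τ 0 0).im])
      (by intro h; have := congrFun h 1; simp at this; exact hp.ne' this)
    simp [Matrix.mulVec, dotProduct, Fin.sum_univ_two, hs] at this
    by_contra hc
    push Not at hc
    nlinarith
  · rintro ⟨hs, hp, hd⟩
    refine ⟨?_, ?_⟩
    · ext i j; fin_cases i <;> fin_cases j <;> simp [hs]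
    · rw [Matrix.posDef_iff_dotProduct_mulVec]
      refine ⟨?_, ?_⟩
      · ext i j; fin_cases i <;> fin_cases j <;> simp [hs]
      · intro x hx
        simp [Matrix.mulVec, dotProduct, Fin.sum_univ_two, hs]
        have key : 0 < (τ 0 0).im * (x 0 * ((τ 0 0).im * x 0 + (τ 0 1).im * x 1) + x 1 * ((τ 0 1).im * x 0 + (τ 1 1).im * x 1)) := by
          have e : (τ 0 0).im * (x 0 * ((τ 0 0).im * x 0 + (τ 0 1).im * x 1) + x 1 * ((τ 0 1).im * x 0 + (τ 1 1).im * x 1))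
            = ((τ 0 0).im * x 0 + (τ 0 1).im * x 1)^2 + ((τ 0 0).im * (τ 1 1).im - (τ 0 1).im ^ 2) * x 1 ^ 2 := by ring
          rw [e]
          by_cases h1 : x 1 = 0
          · have h0 : x 0 ≠ 0 := by
              intro h0; apply hx; ext i; fin_cases i <;> simp [h0, h1]
            rw [h1]; have := mul_pos hp hp
            have := sq_pos_of_ne_zero h0
            have : 0 < (τ 0 0).im * x 0 * ((τ 0 0).im * x 0) := by nlinarith
            nlinarith
          · have := sq_pos_of_ne_zero h1
            have : 0 < ((τ 0 0).im * (τ 1 1).im - (τ 0 1).im ^ 2) * x 1 ^ 2 := mul_pos (by linarith) this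
            positivity
        exact pos_of_mul_pos_right key hp.le

/-- the Hermitian form attached to adj(Y) -/
def hY (τ : Fin 2 → Fin 2 → ℂ) (x y : ℂ) : ℝ :=
  (τ 1 1).im * normSq x - 2 * (τ 0 1).im * (x * (starRingEnd ℂ) y).re + (τ 0 0).im * normSq y
def dY (τ : Fin 2 → Fin 2 → ℂ) : ℝ := (τ 0 0).im * (τ 1 1).im - (τ 0 1).im ^ 2
def tY (τ : Fin 2 → Fin 2 → ℂ) : ℝ := (τ 0 0).im + (τ 1 1).im

lemma dY_pos {τ} (h : τ ∈ H2) : 0 < dY τ := by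
  have := ((mem_H2_iff τ).1 h).2.2; unfold dY; linarith
lemma y1_pos {τ} (h : τ ∈ H2) : 0 < (τ 0 0).im := ((mem_H2_iff τ).1 h).2.1
lemma y2_pos {τ} (h : τ ∈ H2) : 0 < (τ 1 1).im := by
  have h1 := y1_pos h; have h2 := ((mem_H2_iff τ).1 h).2.2
  by_contra hc; push Not at hc
  nlinarith [sq_nonneg (τ 0 1).im]
lemma tY_pos {τ} (h : τ ∈ H2) : 0 < tY τ := add_pos (y1_pos h) (y2_pos h)

lemma hY_lower (τ : Fin 2 → Fin 2 → ℂ) (x y : ℂ) :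
    dY τ * (normSq x + normSq y) ≤ tY τ * hY τ x y := by
  simp only [dY, tY, hY, normSq_apply, mul_re, conj_re, conj_im]
  have e1 := sq_nonneg ((τ 1 1).im * x.re - (τ 0 1).im * y.re)
  have e2 := sq_nonneg ((τ 1 1).im * x.im - (τ 0 1).im * y.im)
  have e3 := sq_nonneg ((τ 0 0).im * y.re - (τ 0 1).im * x.re)
  have e4 := sq_nonneg ((τ 0 0).im * y.im - (τ 0 1).im * x.im)
  nlinarith

lemma hY_pos {τ} (h : τ ∈ H2) {x y : ℂ} (hxy : x ≠ 0 ∨ y ≠ 0) : 0 < hY τ x y := by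
  have h1 := hY_lower τ x y
  have : 0 < normSq x + normSq y := by
    rcases hxy with h | h
    · exact add_pos_of_pos_of_nonneg (normSq_pos.2 h) (normSq_nonneg _)
    · exact add_pos_of_nonneg_of_pos (normSq_nonneg _) (normSq_pos.2 h)
  have h2 : 0 < tY τ * hY τ x y := lt_of_lt_of_le (mul_pos (dY_pos h) this) h1
  exact pos_of_mul_pos_right h2 (tY_pos h).le

lemma hY_nonneg {τ} (h : τ ∈ H2) (x y : ℂ) : 0 ≤ hY τ x y := by
  by_cases hxy : x ≠ 0 ∨ y ≠ 0
  · exact (hY_pos h hxy).le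
  · push Not at hxy; simp [hY, hxy.1, hxy.2]

lemma blk_mul (γ δ : Matrix (Fin 4) (Fin 4) ℤ) (r s : Fin 2) :
    blk (γ * δ) r s = blk γ r 0 * blk δ 0 s + blk γ r 1 * blk δ 1 s := by
  ext i j
  fin_cases r <;> fin_cases s <;> fin_cases i <;> fin_cases j <;>
    simp [blk, Matrix.mul_apply, Fin.sum_univ_four, Fin.sum_univ_two] <;> ring

lemma blk_conj (γ : Matrix (Fin 4) (Fin 4) ℤ) (r s : Fin 2) : (blk γ r s)ᴴ = (blk γ r s)ᵀ := by
  ext i j; simp [blk]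

lemma blk_rel {γ : Matrix (Fin 4) (Fin 4) ℤ} (h : γ ∈ Sp4Z) :
    (blk γ 0 0)ᵀ * blk γ 1 0 = (blk γ 1 0)ᵀ * blk γ 0 0 ∧
    (blk γ 0 1)ᵀ * blk γ 1 1 = (blk γ 1 1)ᵀ * blk γ 0 1 ∧
    (blk γ 0 0)ᵀ * blk γ 1 1 = 1 + (blk γ 1 0)ᵀ * blk γ 0 1 ∧
    (blk γ 1 1)ᵀ * blk γ 0 0 = 1 + (blk γ 0 1)ᵀ * blk γ 1 0 := by
  obtain ⟨h1, h2, h3, h4, h5, h6⟩ := (sp4_iff γ).1 h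
  have h1 := congrArg (Int.cast : ℤ → ℂ) h1
  have h2 := congrArg (Int.cast : ℤ → ℂ) h2
  have h3 := congrArg (Int.cast : ℤ → ℂ) h3
  have h4 := congrArg (Int.cast : ℤ → ℂ) h4
  have h5 := congrArg (Int.cast : ℤ → ℂ) h5
  have h6 := congrArg (Int.cast : ℤ → ℂ) h6
  push_cast at h1 h2 h3 h4 h5 h6
  refine ⟨?_, ?_, ?_, ?_⟩ <;> ext i j <;> fin_cases i <;> fin_cases j <;>
    simp [blk, Matrix.mul_apply, Fin.sum_univ_two]
  all_goals first | ring1 | linear_combination h1 | linear_combination -h1 | linear_combination h2 | linear_combination h3 | linear_combination h4 | linear_combination h5 | linear_combination h6 | linear_combination -h6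

def num (γ : Matrix (Fin 4) (Fin 4) ℤ) (τ : Fin 2 → Fin 2 → ℂ) : Matrix (Fin 2) (Fin 2) ℂ :=
  blk γ 0 0 * Matrix.of τ + blk γ 0 1

lemma num_den_symm {γ} (h : γ ∈ Sp4Z) {τ} (hτ : τ ∈ H2) :
    (num γ τ)ᵀ * den γ τ = (den γ τ)ᵀ * num γ τ := by
  obtain ⟨h1, h2, h3, h4⟩ := blk_rel h
  have ht : (Matrix.of τ)ᵀ = Matrix.of τ := hτ.1
  simp only [num, den, transpose_add, transpose_mul, ht, Matrix.add_mul, Matrix.mul_add]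
  generalize Matrix.of τ = T at *
  generalize blk γ 0 0 = A at *
  generalize blk γ 0 1 = B at *
  generalize blk γ 1 0 = C at *
  generalize blk γ 1 1 = D at *
  rw [show T * Aᵀ * (C * T) = T * (Aᵀ * C) * T by simp only [Matrix.mul_assoc], h1,
    show T * Aᵀ * D = T * (Aᵀ * D) by simp only [Matrix.mul_assoc], h3, h2,
    show Dᵀ * (A * T) = (Dᵀ * A) * T by simp only [Matrix.mul_assoc], h4]
  noncomm_ring

lemma num_den_herm {γ} (h : γ ∈ Sp4Z) {τ} :
    (num γ τ)ᴴ * den γ τ - (den γ τ)ᴴ * num γ τ = (Matrix.of τ)ᴴ - Matrix.of τ := by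
  obtain ⟨h1, h2, h3, h4⟩ := blk_rel h
  simp only [num, den, conjTranspose_add, conjTranspose_mul, blk_conj, Matrix.add_mul, Matrix.mul_add]
  generalize Matrix.of τ = T at *
  generalize blk γ 0 0 = A at *
  generalize blk γ 0 1 = B at *
  generalize blk γ 1 0 = C at *
  generalize blk γ 1 1 = D at *
  rw [show Tᴴ * Aᵀ * (C * T) = Tᴴ * (Aᵀ * C) * T by simp only [Matrix.mul_assoc], h1,
    show Tᴴ * Aᵀ * D = Tᴴ * (Aᵀ * D) by simp only [Matrix.mul_assoc], h3, h2,
    show Dᵀ * (A * T) = (Dᵀ * A) * T by simp only [Matrix.mul_assoc], h4]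
  noncomm_ring

lemma den_det_ne {γ} (h : γ ∈ Sp4Z) {τ} (hτ : τ ∈ H2) : (den γ τ).det ≠ 0 := by
  intro h0
  obtain ⟨v, hv, hDv⟩ := Matrix.exists_mulVec_eq_zero_iff.2 h0
  have key := num_den_herm h (τ := τ)
  have h1 : star v ⬝ᵥ (((num γ τ)ᴴ * den γ τ - (den γ τ)ᴴ * num γ τ) *ᵥ v) = 0 := by
    rw [Matrix.sub_mulVec, ← Matrix.mulVec_mulVec, hDv, ← Matrix.mulVec_mulVec, dotProduct_sub,
      Matrix.dotProduct_mulVec _ (den γ τ)ᴴ, ← Matrix.star_mulVec, hDv]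
    simp
  rw [key] at h1
  have h2 : star v ⬝ᵥ (((Matrix.of τ)ᴴ - Matrix.of τ) *ᵥ v) =
      -(2 * I * ((hY τ (v 1) (-v 0) : ℝ) : ℂ)) := by
    have hs := ((mem_H2_iff τ).1 hτ).1
    apply Complex.ext <;>
    simp [Matrix.mulVec, dotProduct, Fin.sum_univ_two, hs, hY, normSq_apply] <;> ring
  rw [h2] at h1
  have : hY τ (v 1) (-v 0) = 0 := by simpa using h1
  have hpos := hY_pos hτ (x := v 1) (y := -v 0) (by
    by_contra hc; push Not at hc; apply hv; ext i; fin_cases i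
    · simpa using hc.2
    · simpa using hc.1)
  exact hpos.ne' this

def Yc (τ : Fin 2 → Fin 2 → ℂ) : Matrix (Fin 2) (Fin 2) ℂ := Matrix.of fun i j => ((τ i j).im : ℂ)

lemma moeb_mul_den {γ} (h : γ ∈ Sp4Z) {τ} (hτ : τ ∈ H2) :
    Matrix.of (moeb γ τ) * den γ τ = num γ τ := by
  have : Matrix.of (moeb γ τ) = num γ τ * (den γ τ)⁻¹ := rfl
  rw [this, Matrix.mul_assoc, Matrix.nonsing_inv_mul _ (isUnit_iff_ne_zero.2 (den_det_ne h hτ)),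
    Matrix.mul_one]

lemma moeb_symm {γ} (h : γ ∈ Sp4Z) {τ} (hτ : τ ∈ H2) :
    (Matrix.of (moeb γ τ))ᵀ = Matrix.of (moeb γ τ) := by
  have hu := isUnit_iff_ne_zero.2 (den_det_ne h hτ)
  have h1 := num_den_symm h hτ
  rw [← moeb_mul_den h hτ] at h1
  set D := den γ τ
  set T := Matrix.of (moeb γ τ)
  rw [transpose_mul, ← Matrix.mul_assoc Dᵀ] at h1
  have h2 := congrArg (· * D⁻¹) h1
  simp only [Matrix.mul_assoc, Matrix.mul_nonsing_inv _ hu, Matrix.mul_one] at h2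
  have hu' : IsUnit (Dᵀ).det := by rwa [Matrix.det_transpose]
  have h3 := congrArg ((Dᵀ)⁻¹ * ·) h2
  simpa only [← Matrix.mul_assoc, Matrix.nonsing_inv_mul _ hu', Matrix.one_mul] using h3

lemma herm_sub {τ : Fin 2 → Fin 2 → ℂ} (h : τ 1 0 = τ 0 1) :
    (Matrix.of τ)ᴴ - Matrix.of τ = (-(2 * I)) • Yc τ := by
  ext i j
  fin_cases i <;> fin_cases j <;> apply Complex.ext <;> simp [Yc, h] <;> ring

lemma moeb_Yc {γ} (h : γ ∈ Sp4Z) {τ} (hτ : τ ∈ H2) :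
    (den γ τ)ᴴ * Yc (moeb γ τ) * den γ τ = Yc τ := by
  have h1 := num_den_herm h (τ := τ)
  have hs := ((mem_H2_iff τ).1 hτ).1
  have hs' : moeb γ τ 1 0 = moeb γ τ 0 1 := by
    have := congrFun (congrFun (moeb_symm h hτ) 0) 1
    simpa using this
  rw [← moeb_mul_den h hτ, herm_sub hs, conjTranspose_mul, Matrix.mul_assoc, ← Matrix.mul_sub,
    ← Matrix.sub_mul, herm_sub hs', Matrix.smul_mul, Matrix.mul_smul, ← Matrix.mul_assoc] at h1
  exact smul_right_injective _ (by simp : (-(2 * I)) ≠ 0) h1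

lemma Yc_dY {τ : Fin 2 → Fin 2 → ℂ} (h : τ 1 0 = τ 0 1) : (Yc τ).det = (dY τ : ℂ) := by
  rw [Matrix.det_fin_two]; simp [Yc, dY, h]; ring

lemma Yc_hY {τ : Fin 2 → Fin 2 → ℂ} (h : τ 1 0 = τ 0 1) (x y : ℂ) :
    (hY τ x y : ℂ) = Yc τ 1 1 * (x * (starRingEnd ℂ) x) - Yc τ 1 0 * ((starRingEnd ℂ) x * y)
      - Yc τ 0 1 * (x * (starRingEnd ℂ) y) + Yc τ 0 0 * (y * (starRingEnd ℂ) y) := by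
  apply Complex.ext <;> simp [Yc, hY, h, normSq_apply] <;> ring

lemma moeb_s {γ} (h : γ ∈ Sp4Z) {τ} (hτ : τ ∈ H2) : moeb γ τ 1 0 = moeb γ τ 0 1 := by
  have := congrFun (congrFun (moeb_symm h hτ) 0) 1
  simpa using this

lemma moeb_dY {γ} (h : γ ∈ Sp4Z) {τ} (hτ : τ ∈ H2) :
    dY (moeb γ τ) * normSq (den γ τ).det = dY τ := by
  have hs := ((mem_H2_iff τ).1 hτ).1
  have := congrArg Matrix.det (moeb_Yc h hτ)
  rw [Matrix.det_mul, Matrix.det_mul, Matrix.det_conjTranspose, Yc_dY hs, Yc_dY (moeb_s h hτ)] at this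
  have e : (star (den γ τ).det) * (den γ τ).det = (normSq (den γ τ).det : ℂ) := by
    rw [mul_comm]; exact Complex.mul_conj _
  have : ((dY (moeb γ τ) * normSq (den γ τ).det : ℝ) : ℂ) = (dY τ : ℂ) := by
    push_cast; rw [← e, ← this]; ring
  exact_mod_cast this

lemma moeb_hY {γ} (h : γ ∈ Sp4Z) {τ} (hτ : τ ∈ H2) (x y : ℂ) :
    hY (moeb γ τ) x y * normSq (den γ τ).det =
    hY τ (den γ τ 0 0 * x + den γ τ 1 0 * y) (den γ τ 0 1 * x + den γ τ 1 1 * y) := by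
  have hs := ((mem_H2_iff τ).1 hτ).1
  have := moeb_Yc h hτ
  have key : ((hY (moeb γ τ) x y * normSq (den γ τ).det : ℝ) : ℂ) =
    (hY τ (den γ τ 0 0 * x + den γ τ 1 0 * y) (den γ τ 0 1 * x + den γ τ 1 1 * y) : ℂ) := by
    rw [Yc_hY hs, ← this]
    push_cast
    rw [Yc_hY (moeb_s h hτ), ← Complex.mul_conj, Matrix.det_fin_two]
    generalize den γ τ = D
    generalize Yc (moeb γ τ) = Y
    simp [Matrix.mul_apply, Fin.sum_univ_two]
    ring
  exact_mod_cast key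

lemma moeb_mem {γ} (h : γ ∈ Sp4Z) {τ} (hτ : τ ∈ H2) : moeb γ τ ∈ H2 := by
  have hn : 0 < normSq (den γ τ).det := normSq_pos.2 (den_det_ne h hτ)
  rw [mem_H2_iff]
  refine ⟨moeb_s h hτ, ?_, ?_⟩
  · have h1 := moeb_hY h hτ 0 1
    have h2 : hY (moeb γ τ) 0 1 = (moeb γ τ 0 0).im := by simp [hY]
    rw [h2] at h1
    have h3 : 0 < hY τ (den γ τ 0 0 * 0 + den γ τ 1 0 * 1) (den γ τ 0 1 * 0 + den γ τ 1 1 * 1) := by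
      apply hY_pos hτ
      by_contra hc; push Not at hc
      apply den_det_ne h hτ
      rw [Matrix.det_fin_two]
      have e1 : den γ τ 1 0 = 0 := by simpa using hc.1
      have e2 : den γ τ 1 1 = 0 := by simpa using hc.2
      rw [e1, e2]; ring
    rw [← h1] at h3
    exact pos_of_mul_pos_left h3 hn.le
  · have h1 := moeb_dY h hτ
    have h3 := dY_pos hτ
    rw [← h1] at h3
    have := pos_of_mul_pos_left h3 hn.le
    unfold dY at this; linarith

lemma moeb_moeb {γ δ} (hγ : γ ∈ Sp4Z) (hδ : δ ∈ Sp4Z) {τ} (hτ : τ ∈ H2) :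
    moeb (γ * δ) τ = moeb γ (moeb δ τ) := by
  have hm := moeb_mul_den hδ hτ
  have hu := isUnit_iff_ne_zero.2 (den_det_ne hδ hτ)
  have hd : den (γ * δ) τ = den γ (moeb δ τ) * den δ τ := by
    have : den γ (moeb δ τ) * den δ τ = blk γ 1 0 * (Matrix.of (moeb δ τ) * den δ τ) + blk γ 1 1 * den δ τ := by
      rw [← Matrix.mul_assoc, ← Matrix.add_mul]; rfl
    rw [this, hm]
    simp only [den, num, blk_mul]
    noncomm_ring
  have hn : num (γ * δ) τ = num γ (moeb δ τ) * den δ τ := by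
    have : num γ (moeb δ τ) * den δ τ = blk γ 0 0 * (Matrix.of (moeb δ τ) * den δ τ) + blk γ 0 1 * den δ τ := by
      rw [← Matrix.mul_assoc, ← Matrix.add_mul]; rfl
    rw [this, hm]
    simp only [den, num, blk_mul]
    noncomm_ring
  have : Matrix.of (moeb (γ * δ) τ) = Matrix.of (moeb γ (moeb δ τ)) := by
    show num (γ * δ) τ * (den (γ * δ) τ)⁻¹ = num γ (moeb δ τ) * (den γ (moeb δ τ))⁻¹
    rw [hd, hn, Matrix.mul_inv_rev, ← Matrix.mul_assoc, Matrix.mul_assoc (num γ _),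
      Matrix.mul_nonsing_inv _ hu, Matrix.mul_one]
  exact Matrix.of.injective this

lemma den_edU {e p q r s : ℤ} (τ) : den (edU e p q r s) τ = !![(e*s:ℂ), -e*r; -e*q, e*p] := by
  ext i j; fin_cases i <;> fin_cases j <;> simp [den, blk, edU, Matrix.mul_apply]

lemma moeb_edU {e p q r s : ℤ} (he : e * e = 1) (h : p * s - q * r = e) (τ : Fin 2 → Fin 2 → ℂ) :
    moeb (edU e p q r s) τ = ![![p*p*τ 0 0+p*q*(τ 0 1 + τ 1 0)+q*q*τ 1 1,
      p*r*τ 0 0+p*s*τ 0 1+q*r*τ 1 0+q*s*τ 1 1],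
      ![p*r*τ 0 0+p*s*τ 1 0+q*r*τ 0 1+q*s*τ 1 1, r*r*τ 0 0+r*s*(τ 0 1+τ 1 0)+s*s*τ 1 1]] := by
  have he' : (e * e : ℂ) = 1 := by exact_mod_cast he
  have h' : (p * s - q * r : ℂ) = e := by exact_mod_cast h
  have hinv : (den (edU e p q r s) τ)⁻¹ = !![(p:ℂ), r; q, s] := by
    apply Matrix.inv_eq_right_inv
    rw [den_edU]
    ext i j; fin_cases i <;> fin_cases j <;> simp [Matrix.mul_apply, Fin.sum_univ_two]
    · linear_combination e * h' + he'
    · ring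
    · ring
    · linear_combination e * h' + he'
  funext i j
  simp only [moeb, hinv]
  fin_cases i <;> fin_cases j <;> simp [blk, edU, Matrix.mul_apply, Fin.sum_univ_two] <;> ring

lemma moeb_etr {a b c : ℤ} (τ : Fin 2 → Fin 2 → ℂ) :
    moeb (etr a b c) τ = ![![τ 0 0 + a, τ 0 1 + b], ![τ 1 0 + b, τ 1 1 + c]] := by
  have hd : den (etr a b c) τ = 1 := by
    ext i j; fin_cases i <;> fin_cases j <;> simp [den, blk, etr, Matrix.mul_apply]
  funext i j
  simp only [moeb, hd, inv_one, Matrix.mul_one]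
  fin_cases i <;> fin_cases j <;> simp [blk, etr, Matrix.mul_apply, Fin.sum_univ_two]

lemma den_etr {a b c : ℤ} (τ : Fin 2 → Fin 2 → ℂ) : den (etr a b c) τ = 1 := by
  ext i j; fin_cases i <;> fin_cases j <;> simp [den, blk, etr, Matrix.mul_apply]

lemma den_inv1 (τ : Fin 2 → Fin 2 → ℂ) : (den (ei1 0 (-1) 1 0) τ).det = τ 0 0 := by
  rw [Matrix.det_fin_two]
  simp [den, blk, ei1, Matrix.mul_apply, Fin.sum_univ_two]

/-- Minkowski reduction of the imaginary part. -/
lemma exists_mink {τ} (hτ : τ ∈ H2) : ∃ γ ∈ Sp4Z, dY (moeb γ τ) = dY τ ∧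
    2 * |(moeb γ τ 0 1).im| ≤ (moeb γ τ 0 0).im ∧ (moeb γ τ 0 0).im ≤ (moeb γ τ 1 1).im := by
  have hs := ((mem_H2_iff τ).1 hτ).1
  have h1 := y1_pos hτ
  have h2 := dY_pos hτ
  set a := (τ 0 0).im with ha
  set b := (τ 0 1).im with hb
  set c := (τ 1 1).im with hc
  set d := Real.sqrt (dY τ) with hd
  have hd2 : d ^ 2 = a * c - b ^ 2 := by rw [hd, Real.sq_sqrt h2.le]; rfl
  have hdp : 0 < d := Real.sqrt_pos.2 h2
  let z : UpperHalfPlane := ⟨⟨b / a, d / a⟩, by positivity⟩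
  obtain ⟨g, hg⟩ := ModularGroup.exists_smul_mem_fd z
  obtain ⟨hg1, hg2⟩ := hg
  have hdet : g.1 0 0 * g.1 1 1 - g.1 0 1 * g.1 1 0 = 1 := by
    have := g.2; rwa [Matrix.det_fin_two] at this
  have hco : ((g • z : UpperHalfPlane) : ℂ) = ((g.1 0 0 : ℂ) * z + g.1 0 1) / ((g.1 1 0 : ℂ) * z + g.1 1 1) := by
    rw [UpperHalfPlane.specialLinearGroup_apply]; simp
  generalize g.1 0 0 = A at *
  generalize g.1 0 1 = B at *
  generalize g.1 1 0 = C at *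
  generalize g.1 1 1 = D at *
  have hz : (z : ℂ) = ⟨b / a, d / a⟩ := rfl
  rw [UpperHalfPlane.re] at hg2
  rw [hco] at hg1 hg2
  set w1 : ℂ := (A : ℂ) * z + B with hw1
  set w2 : ℂ := (C : ℂ) * z + D with hw2
  have hn2 : a * normSq w2 = a * D^2 + 2 * b * C * D + c * C^2 := by
    rw [hw2, hz, normSq_apply]; simp; field_simp; linear_combination (C^2 : ℝ) * hd2
  have hn1 : a * normSq w1 = a * B^2 + 2 * b * A * B + c * A^2 := by
    rw [hw1, hz, normSq_apply]; simp; field_simp; linear_combination (A^2 : ℝ) * hd2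
  have hn12 : a * (w1.re * w2.re + w1.im * w2.im) = a * B * D + b * (A * D + B * C) + c * A * C := by
    rw [hw1, hw2, hz]; simp; field_simp; linear_combination (A * C : ℝ) * hd2
  have hw2p : 0 < normSq w2 := by
    apply normSq_pos.2
    intro h0
    rw [hw2, hz, Complex.ext_iff] at h0
    simp at h0
    obtain ⟨h3, h4⟩ := h0
    rcases h4 with h4 | h4
    · rw [h4] at h3; simp at h3; rw [h3, h4] at hdet; simp at hdet
    · rcases h4 with h4 | h4
      · exact hdp.ne' h4
      · exact h1.ne' h4
  rw [normSq_div, le_div_iff₀ hw2p, one_mul] at hg1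
  rw [Complex.div_re, ← add_div, abs_div, abs_of_pos hw2p, div_le_iff₀ hw2p] at hg2
  refine ⟨edU 1 D C B A, edU_mem (by norm_num) (by linarith), ?_, ?_, ?_⟩
  · have := moeb_dY (edU_mem (e := 1) (p := D) (q := C) (r := B) (s := A) (by norm_num) (by linarith)) hτ
    rw [← this, den_edU, Matrix.det_fin_two]
    have hdet' : (A * D - B * C : ℂ) = 1 := by exact_mod_cast hdet
    have : (!![((1:ℤ) * A : ℂ), -(1:ℤ)*B; -(1:ℤ)*C, (1:ℤ)*D]) 0 0 * (!![((1:ℤ) * A : ℂ), -(1:ℤ)*B; -(1:ℤ)*C, (1:ℤ)*D]) 1 1 - (!![((1:ℤ) * A : ℂ), -(1:ℤ)*B; -(1:ℤ)*C, (1:ℤ)*D]) 0 1 * (!![((1:ℤ) * A : ℂ), -(1:ℤ)*B; -(1:ℤ)*C, (1:ℤ)*D]) 1 0 = 1 := by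
      simp; linear_combination hdet'
    rw [this]; simp
  · rw [moeb_edU (by norm_num) (by linarith)]
    simp [hs, ← ha, ← hb, ← hc]
    have e1 : (D:ℝ) * B * a + D * A * b + C * B * b + C * A * c = a * (w1.re * w2.re + w1.im * w2.im) := by
      rw [hn12]; ring
    have e2 : (D:ℝ) * D * a + D * C * (b + b) + C * C * c = a * normSq w2 := by rw [hn2]; ring
    rw [e1, e2, abs_mul, abs_of_pos h1]
    nlinarith
  · rw [moeb_edU (by norm_num) (by linarith)]
    simp [hs, ← ha, ← hb, ← hc]
    have e1 : (B:ℝ) * B * a + B * A * (b + b) + A * A * c = a * normSq w1 := by rw [hn1]; ring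
    have e2 : (D:ℝ) * D * a + D * C * (b + b) + C * C * c = a * normSq w2 := by rw [hn2]; ring
    rw [e1, e2]
    exact mul_le_mul_of_nonneg_left hg1 h1.le

lemma row_lower {τ} (hτ : τ ∈ H2) (p0 p1 q0 q1 : ℤ) (hne : ¬ (p0 = 0 ∧ p1 = 0 ∧ q0 = 0 ∧ q1 = 0)) :
    min 1 ((dY τ / tY τ)^2) ≤ normSq (p0 * τ 0 0 + p1 * τ 1 0 + q0) + normSq (p0 * τ 0 1 + p1 * τ 1 1 + q1) := by
  have hs := ((mem_H2_iff τ).1 hτ).1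
  have ht := tY_pos hτ
  have hd := dY_pos hτ
  have h1 := y1_pos hτ
  by_cases hp : p0 = 0 ∧ p1 = 0
  · obtain ⟨rfl, rfl⟩ := hp
    refine (min_le_left _ _).trans ?_
    simp only [normSq_apply]
    simp
    have : (1:ℤ) ≤ q0 * q0 + q1 * q1 := by
      by_contra hc
      have e0 : q0 = 0 := by nlinarith [mul_self_nonneg q0, mul_self_nonneg q1]
      have e1 : q1 = 0 := by nlinarith [mul_self_nonneg q0, mul_self_nonneg q1]
      exact hne ⟨rfl, rfl, e0, e1⟩
    exact_mod_cast this
  · refine (min_le_right _ _).trans ?_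
    have hpp : (1:ℝ) ≤ p0^2 + p1^2 := by
      have : (1:ℤ) ≤ p0^2 + p1^2 := by
        by_contra hc
        have e0 : p0 = 0 := by nlinarith [sq_nonneg p0, sq_nonneg p1]
        have e1 : p1 = 0 := by nlinarith [sq_nonneg p0, sq_nonneg p1]
        exact hp ⟨e0, e1⟩
      exact_mod_cast this
    rw [div_pow, div_le_iff₀ (by positivity)]
    set a := (τ 0 0).im with ha
    set b := (τ 0 1).im with hb
    set c := (τ 1 1).im with hc
    set w0 := p0 * a + p1 * b with hw0
    set w1 := p0 * b + p1 * c with hw1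
    have k1 : w0^2 ≤ normSq (p0 * τ 0 0 + p1 * τ 1 0 + q0) := by
      rw [normSq_apply]; simp [hs, ← ha, ← hb, ← hw0]
      nlinarith [mul_self_nonneg ((p0:ℝ) * (τ 0 0).re + p1 * (τ 0 1).re + q0)]
    have k2 : w1^2 ≤ normSq (p0 * τ 0 1 + p1 * τ 1 1 + q1) := by
      rw [normSq_apply]; simp [← hb, ← hc, ← hw1]
      nlinarith [mul_self_nonneg ((p0:ℝ) * (τ 0 1).re + p1 * (τ 1 1).re + q1)]
    have hdd : dY τ = a * c - b^2 := rfl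
    have htt : tY τ = a + c := rfl
    have k3 : 0 ≤ a * w0^2 + 2 * b * w0 * w1 + c * w1^2 := by
      have : 0 ≤ a * (a * w0^2 + 2 * b * w0 * w1 + c * w1^2) := by
        have e : a * (a * w0^2 + 2 * b * w0 * w1 + c * w1^2) = (a * w0 + b * w1)^2 + dY τ * w1^2 := by
          rw [hdd]; ring
        rw [e]; positivity
      exact nonneg_of_mul_nonneg_right this h1
    have k4 : (tY τ)^2 * (w0^2+w1^2) - (dY τ)^2 * (p0^2+p1^2) =
        tY τ * (a * w0^2 + 2 * b * w0 * w1 + c * w1^2) + dY τ * (w0^2 + w1^2) := by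
      rw [hdd, htt, hw0, hw1]; ring
    have k5 : 0 ≤ tY τ * (a * w0^2 + 2 * b * w0 * w1 + c * w1^2) + dY τ * (w0^2 + w1^2) := by
      positivity
    have k6 : (dY τ)^2 ≤ (dY τ)^2 * (p0^2+p1^2) := le_mul_of_one_le_right (by positivity) hpp
    have k7 : (tY τ)^2 * (w0^2+w1^2) ≤ (tY τ)^2 * (normSq (p0 * τ 0 0 + p1 * τ 1 0 + q0) + normSq (p0 * τ 0 1 + p1 * τ 1 1 + q1)) :=
      mul_le_mul_of_nonneg_left (by linarith) (by positivity)
    linarith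

lemma den_row (γ : Matrix (Fin 4) (Fin 4) ℤ) (τ : Fin 2 → Fin 2 → ℂ) :
    den γ τ 0 0 = γ 2 0 * τ 0 0 + γ 2 1 * τ 1 0 + γ 2 2 ∧ den γ τ 0 1 = γ 2 0 * τ 0 1 + γ 2 1 * τ 1 1 + γ 2 3 ∧
    den γ τ 1 0 = γ 3 0 * τ 0 0 + γ 3 1 * τ 1 0 + γ 3 2 ∧ den γ τ 1 1 = γ 3 0 * τ 0 1 + γ 3 1 * τ 1 1 + γ 3 3 := by
  refine ⟨?_, ?_, ?_, ?_⟩ <;> simp [den, blk, Matrix.mul_apply, Fin.sum_univ_two]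

lemma orbit_bdd {τ} (hτ : τ ∈ H2) : ∃ B, ∀ γ ∈ Sp4Z, dY (moeb γ τ) ≤ B := by
  have ht := tY_pos hτ
  have hd := dY_pos hτ
  set m := min 1 ((dY τ / tY τ)^2) with hm
  have hmp : 0 < m := lt_min one_pos (by positivity)
  refine ⟨4 / 3 * (tY τ / m)^2, ?_⟩
  intro γ hγ
  obtain ⟨δ, hδ, e1, e2, e3⟩ := exists_mink (moeb_mem hγ hτ)
  rw [← moeb_moeb hδ hγ hτ] at e1 e2 e3
  rw [← e1]
  have hg := sp4_mul hδ hγ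
  set g := δ * γ
  have hd' := dY_pos (moeb_mem hg hτ)
  have hn : 0 < normSq (den g τ).det := normSq_pos.2 (den_det_ne hg hτ)
  have a1 := moeb_hY hg hτ 0 1
  have a2 := moeb_hY hg hτ 1 0
  have a3 := moeb_dY hg hτ
  simp only [mul_zero, mul_one, zero_add, add_zero] at a1 a2
  have b1 : hY (moeb g τ) 0 1 = (moeb g τ 0 0).im := by simp [hY]
  have b2 : hY (moeb g τ) 1 0 = (moeb g τ 1 1).im := by simp [hY]
  rw [b1] at a1
  rw [b2] at a2
  have c1 := hY_lower τ (den g τ 1 0) (den g τ 1 1)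
  have c2 := hY_lower τ (den g τ 0 0) (den g τ 0 1)
  have hdet := den_det_ne hg hτ
  rw [Matrix.det_fin_two] at hdet
  obtain ⟨r1, r2, r3, r4⟩ := den_row g τ
  have d1 : m ≤ normSq (den g τ 1 0) + normSq (den g τ 1 1) := by
    rw [r3, r4]; apply row_lower hτ
    rintro ⟨z1, z2, z3, z4⟩
    apply hdet; rw [r3, r4, z1, z2, z3, z4]; simp
  have d2 : m ≤ normSq (den g τ 0 0) + normSq (den g τ 0 1) := by
    rw [r1, r2]; apply row_lower hτ
    rintro ⟨z1, z2, z3, z4⟩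
    apply hdet; rw [r1, r2, z1, z2, z3, z4]; simp
  rw [← a1, ← a3] at c1
  rw [← a2, ← a3] at c2
  set N := normSq (den g τ).det
  set d' := dY (moeb g τ) with hd'e
  set y1 := (moeb g τ 0 0).im
  set y2 := (moeb g τ 1 1).im
  set t := tY τ
  have f1 : d' * m ≤ t * y1 := by
    have : d' * N * m ≤ t * (y1 * N) := (mul_le_mul_of_nonneg_left d1 (by positivity)).trans c1
    have : (d' * m) * N ≤ (t * y1) * N := by linarith
    exact le_of_mul_le_mul_right this hn
  have f2 : d' * m ≤ t * y2 := by
    have : d' * N * m ≤ t * (y2 * N) := (mul_le_mul_of_nonneg_left d2 (by positivity)).trans c2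
    have : (d' * m) * N ≤ (t * y2) * N := by linarith
    exact le_of_mul_le_mul_right this hn
  have g1 : y1 * y2 ≤ 4 / 3 * d' := by
    have : d' = y1 * y2 - (moeb g τ 0 1).im ^ 2 := rfl
    have hy1 : 0 < y1 := y1_pos (moeb_mem hg hτ)
    have : (moeb g τ 0 1).im ^ 2 ≤ (y1/2)^2 := by
      rw [← sq_abs]; apply pow_le_pow_left₀ (abs_nonneg _); linarith
    nlinarith
  have g2 : (d' * m) * (d' * m) ≤ (t * y1) * (t * y2) := mul_le_mul f1 f2 (by positivity) (by
    have := y1_pos (moeb_mem hg hτ); positivity)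
  have g3 : d' * (d' * m^2) ≤ d' * (4/3 * t^2) := by nlinarith [sq_nonneg t, mul_pos ht ht]
  have g4 := le_of_mul_le_mul_left g3 hd'
  rw [div_pow, ← mul_div_assoc, le_div_iff₀ (by positivity)]
  exact g4

/-- reduced points -/
def RR : Set (Fin 2 → Fin 2 → ℂ) := {τ | τ ∈ H2 ∧ 2 * |(τ 0 1).im| ≤ (τ 0 0).im ∧
  (τ 0 0).im ≤ (τ 1 1).im ∧ 0.86 ≤ (τ 0 0).im}

lemma exists_red {τ} (hτ : τ ∈ H2) : ∃ γ ∈ Sp4Z, moeb γ τ ∈ RR := by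
  obtain ⟨B, hB⟩ := orbit_bdd hτ
  set S : Set ℝ := {x | ∃ γ ∈ Sp4Z, dY (moeb γ τ) = x} with hS
  have hne : S.Nonempty := ⟨_, etr 0 0 0, etr_mem _ _ _, rfl⟩
  have hbd : BddAbove S := ⟨B, by rintro x ⟨γ, hγ, rfl⟩; exact hB γ hγ⟩
  have hpos : 0 < sSup S := by
    obtain ⟨x, γ, hγ, hx⟩ := id hne
    exact lt_of_lt_of_le (hx ▸ dY_pos (moeb_mem hγ hτ)) (le_csSup hbd ⟨γ, hγ, hx⟩)
  obtain ⟨x, ⟨γ, hγ, rfl⟩, hx⟩ := exists_lt_of_lt_csSup hne (show 0.99 * sSup S < sSup S by linarith)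
  obtain ⟨δ, hδ, e1, e2, e3⟩ := exists_mink (moeb_mem hγ hτ)
  rw [← moeb_moeb hδ hγ hτ] at e1 e2 e3
  have hg := sp4_mul hδ hγ
  set g := δ * γ
  rw [← e1] at hx
  have htr := etr_mem (-round (moeb g τ 0 0).re) 0 0
  have hg2 := sp4_mul htr hg
  have hmo := moeb_moeb htr hg hτ
  set σ := moeb g τ with hσ
  have hmem : σ ∈ H2 := moeb_mem hg hτ
  set g2 := etr (-round (σ 0 0).re) 0 0 * g
  rw [moeb_etr] at hmo
  have i00 : (moeb g2 τ 0 0).im = (σ 0 0).im := by rw [hmo]; simp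
  have i01 : (moeb g2 τ 0 1).im = (σ 0 1).im := by rw [hmo]; simp
  have i11 : (moeb g2 τ 1 1).im = (σ 1 1).im := by rw [hmo]; simp
  have r00 : |(moeb g2 τ 0 0).re| ≤ 1/2 := by
    have : (moeb g2 τ 0 0).re = (σ 0 0).re - round (σ 0 0).re := by rw [hmo]; simp; ring
    rw [this]; exact abs_sub_round _
  have hdd : dY (moeb g2 τ) = dY σ := by simp only [dY, i00, i01, i11]
  refine ⟨g2, hg2, moeb_mem hg2 hτ, ?_, ?_, ?_⟩
  · rw [i00, i01]; exact e2
  · rw [i00, i11]; exact e3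
  · have hi : ei1 0 (-1) 1 0 ∈ Sp4Z := ei1_mem (by norm_num)
    have h1 := moeb_dY hi (moeb_mem hg2 hτ)
    rw [den_inv1, ← moeb_moeb hi hg2 hτ] at h1
    have h2 : dY (moeb (ei1 0 (-1) 1 0 * g2) τ) ≤ sSup S := le_csSup hbd ⟨_, sp4_mul hi hg2, rfl⟩
    set q := moeb g2 τ 0 0
    have hq : 0.99 < normSq q := by
      by_contra hc; push Not at hc
      have h3 : dY (moeb (ei1 0 (-1) 1 0 * g2) τ) * normSq q ≤ sSup S * 0.99 :=
        mul_le_mul h2 hc (normSq_nonneg _) hpos.le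
      rw [h1, hdd] at h3
      linarith
    have hy : 0 < q.im := y1_pos (moeb_mem hg2 hτ)
    rw [normSq_apply] at hq
    have : q.re * q.re ≤ 1/4 := by
      have := abs_le.1 r00; nlinarith [this.1, this.2]
    by_contra hc; push Not at hc
    nlinarith

def PP (j : ℕ) (v : Fin (j + 1) → ℂ) (x y : ℂ) : ℂ := ∑ i : Fin (j+1), v i * (x ^ (j - (i:ℕ)) * y ^ (i:ℕ))

lemma PP_smul (j : ℕ) (c : ℂ) (v : Fin (j + 1) → ℂ) (x y : ℂ) : PP j (c • v) x y = c * PP j v x y := by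
  simp [PP, Finset.mul_sum, mul_assoc]

lemma PP_zero (j : ℕ) (x y : ℂ) : PP j 0 x y = 0 := by simp [PP]

lemma hom_aux (j l : ℕ) (hl : l ≤ j) (a b c d x y : ℂ) :
    ∑ i : Fin (j+1), ((Polynomial.C a + Polynomial.C b * Polynomial.X) ^ (j - l) *
    (Polynomial.C c + Polynomial.C d * Polynomial.X) ^ l).coeff i * (x ^ (j - (i:ℕ)) * y ^ (i:ℕ)) =
    (a * x + b * y) ^ (j - l) * (c * x + d * y) ^ l := by
  set q := ((Polynomial.C a + Polynomial.C b * Polynomial.X) ^ (j - l) *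
    (Polynomial.C c + Polynomial.C d * Polynomial.X) ^ l) with hq
  have hdeg : q.natDegree < j + 1 := by
    have h1 : ∀ a b : ℂ, (Polynomial.C a + Polynomial.C b * Polynomial.X).natDegree ≤ 1 := by
      intro a b; compute_degree
    have h2 : q.natDegree ≤ (j - l) * 1 + l * 1 := by
      refine Polynomial.natDegree_mul_le_of_le ?_ ?_
      · exact Polynomial.natDegree_pow_le_of_le _ (h1 a b)
      · exact Polynomial.natDegree_pow_le_of_le _ (h1 c d)
    omega
  revert x
  rw [← funext_iff]
  refine Continuous.ext_on (s := {(0:ℂ)}ᶜ) (dense_compl_singleton 0) (by fun_prop) (by fun_prop) ?_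
  intro x hx
  have hx : x ≠ 0 := hx
  have h1 : q.eval (y / x) = ∑ i : Fin (j+1), q.coeff i * (y/x)^(i:ℕ) := by
    rw [Polynomial.eval_eq_sum_range' hdeg, Finset.sum_range]
  have h2 : x ^ j * q.eval (y/x) = (a * x + b * y) ^ (j - l) * (c * x + d * y) ^ l := by
    rw [hq]; simp
    have : x ^ j = x ^ (j - l) * x ^ l := by rw [← pow_add]; congr 1; omega
    rw [this, show a * x + b * y = x * (a + b * (y / x)) by field_simp,
      show c * x + d * y = x * (c + d * (y / x)) by field_simp, mul_pow, mul_pow]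
    ring
  rw [h1, Finset.mul_sum] at h2
  refine Eq.trans ?_ h2
  refine Finset.sum_congr rfl fun i _ => ?_
  have : x ^ j = x ^ (j - (i:ℕ)) * x ^ (i:ℕ) := by
    rw [← pow_add]; congr 1; have := i.2; omega
  rw [this, div_pow]
  field_simp

lemma PP_symAct (j : ℕ) (m : Matrix (Fin 2) (Fin 2) ℂ) (v : Fin (j + 1) → ℂ) (x y : ℂ) :
    PP j (symAct j m v) x y = PP j v (m 0 0 * x + m 1 0 * y) (m 0 1 * x + m 1 1 * y) := by
  simp only [PP, symAct, Finset.sum_mul]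
  rw [Finset.sum_comm]
  refine Finset.sum_congr rfl fun l _ => ?_
  rw [← hom_aux j l (by have := l.2; omega), Finset.mul_sum]
  refine Finset.sum_congr rfl fun i _ => ?_
  simp only [symCoeff]; ring

lemma PP_eq_zero (j : ℕ) (v : Fin (j + 1) → ℂ) (h : ∀ y, PP j v 1 y = 0) : v = 0 := by
  let q : Polynomial ℂ := ∑ i : Fin (j+1), Polynomial.C (v i) * Polynomial.X ^ (i:ℕ)
  have hq : q = 0 := by
    apply Polynomial.funext
    intro y
    have := h y
    simp only [PP, one_pow, one_mul] at this
    simp [q, Polynomial.eval_finset_sum, this]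
  funext i
  have := congrArg (fun p => Polynomial.coeff p (i:ℕ)) hq
  simp only [q, Polynomial.finset_sum_coeff, Polynomial.coeff_C_mul, Polynomial.coeff_X_pow] at this
  simp only [Fin.val_inj] at this
  simpa using this

lemma PP_sub (j : ℕ) (v w : Fin (j + 1) → ℂ) (x y : ℂ) : PP j (v - w) x y = PP j v x y - PP j w x y := by
  simp [PP, sub_mul, Finset.sum_sub_distrib]

lemma PP_ext (j : ℕ) (v w : Fin (j + 1) → ℂ) (h : ∀ x y, PP j v x y = PP j w x y) : v = w := by
  rw [← sub_eq_zero]; apply PP_eq_zero; intro y; rw [PP_sub, h, sub_self]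

abbrev T3 := UnitAddTorus (Fin 3)

def muT : MeasureTheory.Measure T3 := MeasureTheory.Measure.pi fun _ => AddCircle.haarAddCircle

instance muT_prob : MeasureTheory.IsProbabilityMeasure muT := by unfold muT; infer_instance

instance muT_inv : muT.IsAddLeftInvariant := by unfold muT; infer_instance

lemma mFourierCoeff_muT (f : T3 → ℂ) (n : Fin 3 → ℤ) :
    UnitAddTorus.mFourierCoeff f n = ∫ t, UnitAddTorus.mFourier (-n) t • f t ∂muT := rfl

def tcoe (x : Fin 3 → ℝ) : T3 := fun i => (x i : UnitAddCircle)

def trep (t : T3) : Fin 3 → ℝ := fun i => Function.surjInv QuotientAddGroup.mk_surjective (t i)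

lemma tcoe_trep (t : T3) : tcoe (trep t) = t := by
  funext i
  exact Function.surjInv_eq QuotientAddGroup.mk_surjective (t i)

lemma tcoe_eq {x y : Fin 3 → ℝ} (h : tcoe x = tcoe y) : ∃ m : Fin 3 → ℤ, ∀ i, x i = y i + m i := by
  have : ∀ i, ∃ m : ℤ, x i = y i + m := by
    intro i
    have h1 := congrFun h i
    have h2 := (QuotientAddGroup.eq_iff_sub_mem).1 h1
    obtain ⟨m, hm⟩ := AddSubgroup.mem_zmultiples_iff.1 h2
    exact ⟨m, by simp at hm; linarith⟩
  choose m hm using this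
  exact ⟨m, hm⟩

lemma tcoe_quot : IsOpenQuotientMap tcoe := by
  have := IsOpenQuotientMap.piMap (f := fun (_ : Fin 3) (x : ℝ) => (x : UnitAddCircle))
    (fun i => QuotientAddGroup.isOpenQuotientMap_mk)
  exact this

lemma tcoe_add (x y : Fin 3 → ℝ) : tcoe (x + y) = tcoe x + tcoe y := by
  funext i; simp [tcoe]

/-- pairing -/
def dot3 (n : Fin 3 → ℤ) (z : Fin 3 → ℂ) : ℂ := ∑ i, (n i : ℂ) * z i
def dotR (n : Fin 3 → ℤ) (y : Fin 3 → ℝ) : ℝ := ∑ i, (n i : ℝ) * y i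

def CC : Set (Fin 3 → ℝ) := {y | 0 < y 0 ∧ y 1 ^ 2 < y 0 * y 2}
def Om : Set (Fin 3 → ℂ) := {z | (fun i => (z i).im) ∈ CC}

lemma CC_open : IsOpen CC := by
  apply IsOpen.inter
  · exact isOpen_lt continuous_const (continuous_apply 0)
  · exact isOpen_lt (f := fun y : Fin 3 → ℝ => y 1 ^ 2) (g := fun y => y 0 * y 2) (by fun_prop) (by fun_prop)

lemma Om_open : IsOpen Om := CC_open.preimage (by fun_prop)

def zz (x Y : Fin 3 → ℝ) : Fin 3 → ℂ := fun i => 2 * (x i : ℂ) + I * (Y i : ℂ)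

lemma zz_mem {x Y : Fin 3 → ℝ} (hY : Y ∈ CC) : zz x Y ∈ Om := by
  have : (fun i => (zz x Y i).im) = Y := by funext i; simp [zz]
  simpa [Om, this] using hY

def gT (h : (Fin 3 → ℂ) → ℂ) (Y : Fin 3 → ℝ) (t : T3) : ℂ := h (zz (trep t) Y)

def Per (h : (Fin 3 → ℂ) → ℂ) : Prop :=
  ∀ z (m : Fin 3 → ℤ), h (fun i => z i + 2 * (m i : ℂ)) = h z

lemma gT_coe {h : (Fin 3 → ℂ) → ℂ} (hp : Per h) (Y x : Fin 3 → ℝ) :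
    gT h Y (tcoe x) = h (zz x Y) := by
  obtain ⟨m, hm⟩ := tcoe_eq (tcoe_trep (tcoe x))
  unfold gT
  rw [← hp (zz x Y) m]
  congr 1
  funext i
  simp [zz, hm i]; ring

lemma gT_cont {h : (Fin 3 → ℂ) → ℂ} (hp : Per h) (hc : ContinuousOn h Om) {Y : Fin 3 → ℝ}
    (hY : Y ∈ CC) : Continuous (gT h Y) := by
  rw [tcoe_quot.isQuotientMap.continuous_iff]
  have : gT h Y ∘ tcoe = fun x => h (zz x Y) := by funext x; exact gT_coe hp Y x
  rw [this]
  refine hc.comp_continuous ?_ fun x => zz_mem hY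
  unfold zz; fun_prop

lemma mFourier_coe (n : Fin 3 → ℤ) (x : Fin 3 → ℝ) :
    UnitAddTorus.mFourier n (tcoe x) = cexp (2 * Real.pi * I * dot3 n fun i => x i) := by
  simp only [UnitAddTorus.mFourier, ContinuousMap.coe_mk, tcoe, fourier_coe_apply, dot3]
  rw [← Complex.exp_sum]
  congr 1
  rw [Finset.mul_sum]
  apply Finset.sum_congr rfl
  intro i _
  push_cast; ring

/-- uniqueness -/
theorem fourier_unique (b : (Fin 3 → ℤ) → ℂ) (hb : Summable fun n => ‖b n‖)
    (h : ∀ x : Fin 3 → ℝ, HasSum (fun n => b n * cexp (Real.pi * I * dot3 n fun i => x i)) 0) :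
    b = 0 := by
  have h1 : Summable fun n => b n • UnitAddTorus.mFourier (d := Fin 3) n := by
    apply Summable.of_norm
    simpa [norm_smul, UnitAddTorus.mFourier_norm] using hb
  have h2 : ∑' n, b n • UnitAddTorus.mFourier (d := Fin 3) n = 0 := by
    ext t
    rw [← tcoe_trep t]
    set x := trep t
    have h3 := ContinuousMap.hasSum_apply h1.hasSum (tcoe x)
    refine h3.unique ?_
    have h4 := h (fun i => 2 * x i)
    simp only [ContinuousMap.zero_apply]
    convert h4 using 2 with n
    simp only [ContinuousMap.smul_apply, mFourier_coe, smul_eq_mul]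
    congr 2
    simp only [dot3, Finset.mul_sum]
    apply Finset.sum_congr rfl
    intro i _
    push_cast; ring
  have h5 : HasSum (fun n => b n • UnitAddTorus.mFourier (d := Fin 3) n) 0 := h2 ▸ h1.hasSum
  have h6 := h5.mapL (ContinuousMap.toLp (E := ℂ) 2 muT ℂ)
  funext m
  have h8 : ∀ i j, inner ℂ (ContinuousMap.toLp (E := ℂ) 2 muT ℂ (UnitAddTorus.mFourier i))
      (ContinuousMap.toLp (E := ℂ) 2 muT ℂ (UnitAddTorus.mFourier j)) = if i = j then (1:ℂ) else 0 :=
    orthonormal_iff_ite.1 (UnitAddTorus.orthonormal_mFourier (d := Fin 3))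
  have h7 := h6.mapL (innerSL ℂ (ContinuousMap.toLp (E := ℂ) 2 muT ℂ (UnitAddTorus.mFourier m)))
  have h9 : HasSum (fun n => if n = m then b m else 0) (0:ℂ) := by
    rw [map_zero, map_zero] at h7
    have e : (fun n => if n = m then b m else 0) = fun n =>
        innerSL ℂ (ContinuousMap.toLp (E := ℂ) 2 muT ℂ (UnitAddTorus.mFourier m))
        (ContinuousMap.toLp (E := ℂ) 2 muT ℂ (b n • UnitAddTorus.mFourier n)) := by
      funext n
      rw [map_smul, map_smul, innerSL_apply_apply, h8]
      by_cases hmn : n = m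
      · subst hmn; simp
      · simp [hmn, Ne.symm hmn]
    rw [e]; exact h7
  exact (h9.unique (hasSum_ite_eq m (b m))).symm

lemma avg_T (G : T3 → ℂ) (hG : Continuous G) (i : Fin 3) :
    ∫ t, G t ∂muT = ∫ t, (∫ s in (0:ℝ)..1, G (tcoe (Pi.single i s) + t)) ∂muT := by
  rw [← MeasureTheory.intervalIntegral_integral_swap]
  · have : ∀ s : ℝ, ∫ t, G (tcoe (Pi.single i s) + t) ∂muT = ∫ t, G t ∂muT := fun s =>
      MeasureTheory.integral_add_left_eq_self G _
    simp [this]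
  · have hb : ∃ C, ∀ t, ‖G t‖ ≤ C := by
      obtain ⟨C, hC⟩ := isCompact_univ.exists_bound_of_continuousOn hG.continuousOn
      exact ⟨C, fun t => hC t trivial⟩
    obtain ⟨C, hC⟩ := hb
    have hf : MeasureTheory.IsFiniteMeasure
        ((MeasureTheory.volume : MeasureTheory.Measure ℝ).restrict (Set.uIoc 0 1)) := ⟨by simp⟩
    refine MeasureTheory.Integrable.of_bound ?_ C (Eventually.of_forall fun p => hC _)
    have h1 : Continuous (Function.uncurry fun (s : ℝ) (t : T3) => G (tcoe (Pi.single i s) + t)) := by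
      refine hG.comp ?_
      have h2 : Continuous fun s : ℝ => tcoe (Pi.single i s) :=
        tcoe_quot.continuous.comp (continuous_single (A := fun _ : Fin 3 => ℝ) i)
      exact (h2.comp continuous_fst).add continuous_snd
    exact h1.aestronglyMeasurable

lemma shift_i {h : (Fin 3 → ℂ) → ℂ} (hp : Per h) (hd : DifferentiableOn ℂ h Om) {Y : Fin 3 → ℝ}
    (i : Fin 3) (v : ℝ) (hv : 0 ≤ v) (hY : ∀ s ∈ Set.Icc 0 v, Y + Pi.single i s ∈ CC) :
    ∫ t, gT h Y t ∂muT = ∫ t, gT h (Y + Pi.single i v) t ∂muT := by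
  have hY0 : Y ∈ CC := by simpa using hY 0 ⟨le_rfl, hv⟩
  have hYv := hY v ⟨hv, le_rfl⟩
  rw [avg_T _ (gT_cont hp hd.continuousOn hY0) i, avg_T _ (gT_cont hp hd.continuousOn hYv) i]
  congr 1
  funext t
  rw [← tcoe_trep t]
  set x := trep t
  simp only [← tcoe_add, gT_coe hp]
  let k : ℂ → ℂ := fun ζ => h (zz x Y + Pi.single i (2 * ζ))
  have hk : DifferentiableOn ℂ k (Set.uIcc (0:ℂ).re (1 + (v/2:ℝ) * I : ℂ).re ×ℂ Set.uIcc (0:ℂ).im (1 + (v/2:ℝ) * I : ℂ).im) := by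
    refine hd.comp (t := Om) ?_ ?_
    · apply Differentiable.differentiableOn
      apply Differentiable.add (differentiable_const _)
      rw [differentiable_pi]
      intro l
      by_cases hl : l = i
      · subst hl; simp; fun_prop
      · simp [hl]
    · intro ζ hζ
      have h2 := hζ.2
      simp at h2
      rw [Set.uIcc_of_le (by positivity : (0:ℝ) ≤ v / 2)] at h2
      have h3 := hY (2 * ζ.im) ⟨by linarith [h2.1], by linarith [h2.2]⟩
      have : (fun l => ((zz x Y + Pi.single i (2 * ζ) : Fin 3 → ℂ) l).im) = Y + Pi.single i (2 * ζ.im) := by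
        funext l
        by_cases hl : l = i
        · subst hl; simp [zz]
        · simp [zz, hl]
      show (fun l => ((zz x Y + Pi.single i (2 * ζ) : Fin 3 → ℂ) l).im) ∈ CC
      rw [this]; exact h3
  have hr := Complex.integral_boundary_rect_eq_zero_of_differentiableOn k 0 (1 + (v/2:ℝ) * I) hk
  have hper : ∀ ζ, k (1 + ζ) = k ζ := by
    intro ζ
    show h _ = h _
    refine Eq.trans ?_ (hp _ (Pi.single i 1))
    congr 1
    funext l
    by_cases hl : l = i
    · subst hl; simp; ring
    · simp [hl]
  simp at hr
  simp only [hper] at hr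
  have e1 : ∀ s : ℝ, k s = h (zz (Pi.single i s + x) Y) := by
    intro s
    show h _ = h _
    congr 1
    funext l
    by_cases hl : l = i
    · subst hl; simp [zz]; ring
    · simp [zz, hl]
  have e2 : ∀ s : ℝ, k (s + v/2 * I) = h (zz (Pi.single i s + x) (Y + Pi.single i v)) := by
    intro s
    show h _ = h _
    congr 1
    funext l
    by_cases hl : l = i
    · subst hl; simp [zz]; ring
    · simp [zz, hl]
  simp only [e1, e2] at hr
  linear_combination hr

lemma mem_CC (y : Fin 3 → ℝ) : y ∈ CC ↔ 0 < y 0 ∧ y 1 ^ 2 < y 0 * y 2 := Iff.rfl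

lemma shift_i' {h : (Fin 3 → ℂ) → ℂ} (hp : Per h) (hd : DifferentiableOn ℂ h Om) {Y Y' : Fin 3 → ℝ}
    (i : Fin 3) (v : ℝ) (hY' : Y' = Y + Pi.single i v) (hv : 0 ≤ v)
    (hY : ∀ s ∈ Set.Icc 0 v, Y + Pi.single i s ∈ CC) :
    ∫ t, gT h Y t ∂muT = ∫ t, gT h Y' t ∂muT := by
  rw [hY']; exact shift_i hp hd i v hv hY

lemma shift_all {h : (Fin 3 → ℂ) → ℂ} (hp : Per h) (hd : DifferentiableOn ℂ h Om) {Y : Fin 3 → ℝ}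
    (hY : Y ∈ CC) : ∫ t, gT h Y t ∂muT = ∫ t, gT h ![1, 0, 1] t ∂muT := by
  have key : ∀ Y ∈ CC, ∀ N, Y 0 ≤ N → Y 2 ≤ N → 
      ∫ t, gT h Y t ∂muT = ∫ t, gT h ![N, Y 1, N] t ∂muT := by
    intro Y hY N h0 h2
    obtain ⟨a, b⟩ := hY
    have c : 0 < Y 2 := by by_contra hc; push Not at hc; nlinarith [sq_nonneg (Y 1)]
    refine (shift_i' hp hd (Y' := ![N, Y 1, Y 2]) 0 (N - Y 0) ?_ (by linarith) ?_).trans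
      (shift_i' hp hd 2 (N - Y 2) ?_ (by linarith) ?_)
    · funext l
      fin_cases l <;> simp
    · intro s hs
      simp [CC]
      exact ⟨by linarith [hs.1], by nlinarith [hs.1]⟩
    · funext l
      fin_cases l <;> simp only [Pi.add_apply, Pi.single_apply] <;> simp
    · intro s hs
      rw [mem_CC]
      simp only [Pi.add_apply, Pi.single_apply]
      simp
      exact ⟨by linarith, by nlinarith [hs.1]⟩
  have key2 : ∀ N u v : ℝ, 0 < N → u ≤ v → u ^ 2 < N * N → v ^ 2 < N * N →
      ∫ t, gT h ![N, u, N] t ∂muT = ∫ t, gT h ![N, v, N] t ∂muT := by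
    intro N u v hN huv hu hv
    refine shift_i' hp hd 1 (v - u) ?_ (by linarith) ?_
    · funext l
      fin_cases l <;> simp only [Pi.add_apply, Pi.single_apply] <;> simp
    · intro s hs
      rw [mem_CC]
      simp only [Pi.add_apply, Pi.single_apply]
      simp
      refine ⟨hN, ?_⟩
      have h1 : |u| < N := abs_lt_of_sq_lt_sq (by nlinarith) hN.le
      have h2 : |v| < N := abs_lt_of_sq_lt_sq (by nlinarith) hN.le
      have := abs_lt.1 h1; have := abs_lt.1 h2; have := hs.1; have := hs.2
      nlinarith
  have c : 0 < Y 2 := by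
    obtain ⟨a, b⟩ := hY
    by_contra hc; push Not at hc; nlinarith [sq_nonneg (Y 1)]
  have hY' := hY
  obtain ⟨a, b⟩ := hY'
  have hb : Y 1 ^ 2 < (1 + Y 0 + Y 2) * (1 + Y 0 + Y 2) := by nlinarith
  rw [key Y hY (1 + Y 0 + Y 2) (by linarith) (by linarith),
    key ![1, 0, 1] (by simp [CC]) (1 + Y 0 + Y 2) (by simp; linarith) (by simp; linarith)]
  rcases le_total 0 (Y 1) with h1 | h1
  · exact (key2 _ _ _ (by linarith) h1 (by simp; positivity) hb).symm
  · exact key2 _ _ _ (by linarith) h1 hb (by simp; positivity)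

lemma summable_expabs (δ : ℝ) (hδ : 0 < δ) : Summable fun m : ℤ => Real.exp (-(δ * |(m:ℝ)|)) := by
  have h : Summable fun k : ℕ => Real.exp (-(δ * (k:ℝ))) := by
    have := summable_geometric_of_lt_one (Real.exp_pos (-δ)).le (by rw [Real.exp_lt_one_iff]; linarith)
    refine this.congr fun k => ?_
    rw [← Real.exp_nat_mul]; congr 1; ring
  apply Summable.of_nat_of_neg
  · simpa using h
  · simpa using h

def eZ3 : (Fin 3 → ℤ) ≃ ℤ × ℤ × ℤ where
  toFun n := (n 0, n 1, n 2)
  invFun p := ![p.1, p.2.1, p.2.2]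
  left_inv n := by funext i; fin_cases i <;> rfl
  right_inv p := rfl

lemma summable_exp3 (δ : ℝ) (hδ : 0 < δ) :
    Summable fun n : Fin 3 → ℤ => Real.exp (-(δ * ∑ i, |(n i:ℝ)|)) := by
  have h := summable_expabs δ hδ
  have h2 := h.mul_of_nonneg h (fun _ => (Real.exp_pos _).le) (fun _ => (Real.exp_pos _).le)
  have h3 := h.mul_of_nonneg h2 (fun _ => (Real.exp_pos _).le)
    (fun _ => mul_nonneg (Real.exp_pos _).le (Real.exp_pos _).le)
  have h4 := (eZ3.summable_iff).2 h3
  refine h4.congr fun n => ?_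
  simp only [Function.comp, Fin.sum_univ_three]
  show Real.exp (-(δ * |((n 0 : ℤ):ℝ)|)) * (Real.exp (-(δ * |((n 1:ℤ):ℝ)|)) * Real.exp (-(δ * |((n 2:ℤ):ℝ)|))) = _
  rw [← Real.exp_add, ← Real.exp_add]; congr 1; ring

lemma gT_bdd {h : (Fin 3 → ℂ) → ℂ} (hp : Per h) (hc : ContinuousOn h Om) {Y : Fin 3 → ℝ}
    (hY : Y ∈ CC) : ∃ C, ∀ t, ‖gT h Y t‖ ≤ C := by
  obtain ⟨C, hC⟩ := isCompact_univ.exists_bound_of_continuousOn (gT_cont hp hc hY).continuousOn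
  exact ⟨C, fun t => hC t trivial⟩

lemma dot3_zz (n : Fin 3 → ℤ) (x Y : Fin 3 → ℝ) :
    dot3 n (zz x Y) = 2 * dot3 n (fun i => x i) + I * (dotR n Y : ℝ) := by
  simp only [dot3, dotR, zz, Finset.mul_sum, ← Finset.sum_add_distrib, ofReal_sum]
  apply Finset.sum_congr rfl; intro i _; push_cast; ring

theorem fourier_tube {f : (Fin 3 → ℂ) → ℂ} (hp : Per f) (hd : DifferentiableOn ℂ f Om) :
    ∃ a : (Fin 3 → ℤ) → ℂ, ∀ z ∈ Om,
      (Summable fun n => ‖a n‖ * Real.exp (-(Real.pi * dotR n fun i => (z i).im))) ∧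
      HasSum (fun n => a n * cexp (Real.pi * I * dot3 n z)) (f z) := by
  let hh : (Fin 3 → ℤ) → (Fin 3 → ℂ) → ℂ := fun n z => f z * cexp (-(Real.pi * I * dot3 n z))
  have hhp : ∀ n, Per (hh n) := by
    intro n z m
    simp only [hh]
    rw [hp z m]
    congr 1
    have : -(Real.pi * I * dot3 n (fun i => z i + 2 * (m i : ℂ))) =
        -(Real.pi * I * dot3 n z) + ((-∑ i, n i * m i : ℤ) : ℂ) * (2 * Real.pi * I) := by
      simp only [dot3, Fin.sum_univ_three]; push_cast; ring
    rw [this, Complex.exp_add, Complex.exp_int_mul_two_pi_mul_I, mul_one]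
  have hhd : ∀ n, DifferentiableOn ℂ (hh n) Om := by
    intro n
    apply hd.mul
    apply Differentiable.differentiableOn
    unfold dot3
    fun_prop
  let a : (Fin 3 → ℤ) → ℂ := fun n => ∫ t, gT (hh n) ![1, 0, 1] t ∂muT
  have hc : ∀ Y ∈ CC, ∀ n, UnitAddTorus.mFourierCoeff (gT f Y) n = a n * Real.exp (-(Real.pi * dotR n Y)) := by
    intro Y hY n
    have h1 : a n = ∫ t, gT (hh n) Y t ∂muT := (shift_all (hhp n) (hhd n) hY).symm
    have h2 : ∀ t, gT (hh n) Y t = (Real.exp (Real.pi * dotR n Y) : ℂ) * (UnitAddTorus.mFourier (-n) t • gT f Y t) := by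
      intro t
      rw [← tcoe_trep t, gT_coe (hhp n), gT_coe hp, mFourier_coe, smul_eq_mul]
      simp only [hh]
      rw [← mul_assoc, mul_comm (f _), dot3_zz, ofReal_exp, ← Complex.exp_add]
      congr 2
      have : dot3 (-n) (fun i => (trep t i : ℂ)) = - dot3 n (fun i => (trep t i : ℂ)) := by
        simp [dot3]
      rw [this]
      push_cast
      linear_combination (-(Real.pi : ℂ) * dotR n Y) * I_sq
    rw [mFourierCoeff_muT, h1]
    simp only [h2]
    rw [MeasureTheory.integral_const_mul]
    rw [mul_right_comm, ← ofReal_mul, ← Real.exp_add]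
    simp
  have hbd : ∀ Y ∈ CC, ∃ C, ∀ n, ‖a n‖ * Real.exp (-(Real.pi * dotR n Y)) ≤ C := by
    intro Y hY
    obtain ⟨C, hC⟩ := gT_bdd hp hd.continuousOn hY
    refine ⟨C, fun n => ?_⟩
    have h1 := congrArg norm (hc Y hY n)
    rw [norm_mul, norm_real, Real.norm_eq_abs, abs_of_pos (Real.exp_pos _)] at h1
    rw [← h1, mFourierCoeff_muT]
    refine (MeasureTheory.norm_integral_le_of_norm_le_const (C := C) (Eventually.of_forall fun t => ?_)).trans ?_
    · rw [norm_smul]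
      have := (UnitAddTorus.mFourier (-n)).norm_coe_le_norm t
      rw [UnitAddTorus.mFourier_norm] at this
      have h3 := hC t
      have h4 := norm_nonneg (gT f Y t)
      nlinarith
    · simp
  have hsum : ∀ Y ∈ CC, Summable fun n => ‖a n‖ * Real.exp (-(Real.pi * dotR n Y)) := by
    intro Y hY
    obtain ⟨r, hr, hball⟩ := Metric.isOpen_iff.1 CC_open Y hY
    let sg : Bool → ℝ := fun b => if b then 1 else -1
    let YY : (Fin 3 → Bool) → Fin 3 → ℝ := fun σ i => Y i - r / 2 * sg (σ i)
    have hYY : ∀ σ, YY σ ∈ CC := by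
      intro σ
      apply hball
      rw [Metric.mem_ball, dist_pi_lt_iff hr]
      intro i
      simp only [YY, Real.dist_eq, sg]
      rw [show Y i - r / 2 * (if σ i = true then 1 else -1) - Y i = - (r / 2 * (if σ i = true then 1 else -1)) by ring, abs_neg]
      split_ifs
      · rw [abs_of_pos] <;> linarith
      · rw [abs_of_neg] <;> linarith
    choose C hC using fun σ => hbd (YY σ) (hYY σ)
    obtain ⟨M, hM⟩ := (Set.finite_range C).bddAbove
    refine Summable.of_nonneg_of_le (fun n => by positivity) (fun n => ?_)
      ((summable_exp3 (Real.pi * (r / 2)) (by positivity)).mul_left M)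
    let σ : Fin 3 → Bool := fun i => decide (0 ≤ n i)
    have h1 : dotR n (YY σ) + r / 2 * ∑ i, |(n i : ℝ)| = dotR n Y := by
      simp only [dotR, Finset.mul_sum, ← Finset.sum_add_distrib]
      apply Finset.sum_congr rfl
      intro i _
      simp only [YY, sg, σ]
      by_cases h : 0 ≤ n i
      · have h' : (0:ℝ) ≤ n i := by exact_mod_cast h
        simp [h, abs_of_nonneg h']; ring
      · have h' : (n i : ℝ) < 0 := by exact_mod_cast (not_le.1 h)
        simp [h, abs_of_neg h']; ring
    rw [← h1, show -(Real.pi * (dotR n (YY σ) + r / 2 * ∑ i, |(n i : ℝ)|)) = -(Real.pi * dotR n (YY σ)) +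
      -(Real.pi * (r / 2) * ∑ i, |(n i : ℝ)|) by ring, Real.exp_add, ← mul_assoc]
    gcongr
    exact (hC σ n).trans (hM ⟨σ, rfl⟩)
  refine ⟨a, fun z hz => ⟨hsum _ hz, ?_⟩⟩
  set Y : Fin 3 → ℝ := fun i => (z i).im with hYd
  have hY : Y ∈ CC := hz
  let x : Fin 3 → ℝ := fun i => (z i).re / 2
  have hzz : zz x Y = z := by
    funext i
    simp only [zz, x, Y]
    push_cast
    conv_rhs => rw [← re_add_im (z i)]
    ring
  have hs : Summable (UnitAddTorus.mFourierCoeff (gT f Y)) := by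
    apply Summable.of_norm
    refine (hsum Y hY).congr fun n => ?_
    rw [hc Y hY, norm_mul, norm_real, Real.norm_eq_abs, abs_of_pos (Real.exp_pos _)]
  have h1 := UnitAddTorus.hasSum_mFourier_series_apply_of_summable (f := ⟨gT f Y, gT_cont hp hd.continuousOn hY⟩) hs (tcoe x)
  simp only [ContinuousMap.coe_mk, gT_coe hp, hzz] at h1
  convert h1 using 2 with n
  rw [hc Y hY, mFourier_coe, smul_eq_mul, mul_assoc (a n), ofReal_exp, ← Complex.exp_add, ← hzz, dot3_zz]
  congr 2
  push_cast
  linear_combination (Real.pi : ℂ) * dotR n Y * I_sq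

lemma hs_cg {α : Type*} {f g : α → ℂ} {c : ℂ} (h : HasSum g c) (e : ∀ n, f n = g n) : HasSum f c := by
  rw [funext e]; exact h

def TT (z : Fin 3 → ℂ) : Fin 2 → Fin 2 → ℂ := ![![z 0, z 1], ![z 1, z 2]]

lemma TT_mem (z : Fin 3 → ℂ) : TT z ∈ H2 ↔ z ∈ Om := by
  rw [mem_H2_iff]; simp [TT, Om, CC]

lemma TT_surj {τ} (hτ : τ ∈ H2) : TT ![τ 0 0, τ 0 1, τ 1 1] = τ := by
  have := ((mem_H2_iff τ).1 hτ).1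
  funext i j; fin_cases i <;> fin_cases j <;> simp [TT, this]

/-- Fourier expansion predicate -/
def IsExp (j : ℕ) (F : (Fin 2 → Fin 2 → ℂ) → (Fin (j + 1) → ℂ)) (a : (Fin 3 → ℤ) → Fin (j + 1) → ℂ) : Prop :=
  ∀ i, ∀ z ∈ Om, (Summable fun n => ‖a n i‖ * Real.exp (-(Real.pi * dotR n fun i => (z i).im))) ∧
      HasSum (fun n => a n i * cexp (Real.pi * I * dot3 n z)) (F (TT z) i)

lemma symAct_one (j : ℕ) (v : Fin (j + 1) → ℂ) : symAct j 1 v = v := by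
  apply PP_ext; intro x y; rw [PP_symAct]; simp

section
variable {ε : Matrix (Fin 4) (Fin 4) ℤ → ℂ} {j : ℕ} {F : (Fin 2 → Fin 2 → ℂ) → (Fin (j + 1) → ℂ)}

lemma F_etr (hF : IsSiegelCuspForm j 2 Sp4Z ε F) (a b c : ℤ) {z : Fin 3 → ℂ} (hz : z ∈ Om) :
    F (TT fun i => z i + (![a, b, c] i : ℤ)) = ε (etr a b c) • F (TT z) := by
  have h := hF.2.1 (etr a b c) (etr_mem _ _ _) (TT z) ((TT_mem z).2 hz)
  rw [den_etr, moeb_etr] at h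
  simp only [wt, det_one, _root_.one_zpow, one_smul, symAct_one] at h
  rw [← h]
  congr 1

lemma F_per (hε : IsEps ε) (hF : IsSiegelCuspForm j 2 Sp4Z ε F) (i : Fin (j + 1)) : Per fun z => F (TT z) i := by
  intro z m
  have hm : (fun i => z i + 2 * (m i : ℂ)) = fun i => z i + (![m 0 + m 0, m 1 + m 1, m 2 + m 2] i : ℤ) := by
    funext i; fin_cases i <;> simp <;> ring
  by_cases hz : z ∈ Om
  · simp only []
    rw [hm, F_etr hF _ _ _ hz, ← etr_mul, hε.2.1 _ (etr_mem _ _ _) _ (etr_mem _ _ _), eps_sq hε (etr_mem _ _ _), one_smul]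
  · have hz' : (fun i => z i + 2 * (m i : ℂ)) ∉ Om := by
      intro h; apply hz
      simpa [Om] using h
    simp only []
    rw [hF.2.2.2 _ (fun h => hz ((TT_mem _).1 h)), hF.2.2.2 _ (fun h => hz' ((TT_mem _).1 h))]

lemma exists_exp (hε : IsEps ε) (hF : IsSiegelCuspForm j 2 Sp4Z ε F) : ∃ a, IsExp j F a := by
  have h : ∀ i : Fin (j + 1), DifferentiableOn ℂ (fun z => F (TT z) i) Om := by
    intro i
    have h1 : DifferentiableOn ℂ (fun z => F (TT z)) Om := by
      refine hF.1.comp ?_ (fun z hz => (TT_mem z).2 hz)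
      apply Differentiable.differentiableOn
      rw [differentiable_pi]; intro k
      rw [differentiable_pi]; intro l
      fin_cases k <;> fin_cases l <;> simp [TT] <;> fun_prop
    exact (differentiableOn_pi.1 h1) i
  choose a ha using fun i => fourier_tube (F_per hε hF i) (h i)
  exact ⟨fun n i => a i n, fun i z hz => ha i z hz⟩

lemma exp_norm (n : Fin 3 → ℤ) (z : Fin 3 → ℂ) :
    ‖cexp (Real.pi * I * dot3 n z)‖ = Real.exp (-(Real.pi * dotR n fun i => (z i).im)) := by
  rw [Complex.norm_exp]
  congr 1
  have : (dot3 n z).im = dotR n fun i => (z i).im := by simp [dot3, dotR]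
  rw [mul_assoc, re_ofReal_mul, I_mul_re, this]; ring

variable {a : (Fin 3 → ℤ) → Fin (j + 1) → ℂ}

lemma PP_hasSum (ha : IsExp j F a) (x y : ℂ) {z} (hz : z ∈ Om) :
    HasSum (fun n => PP j (a n) x y * cexp (Real.pi * I * dot3 n z)) (PP j (F (TT z)) x y) := by
  unfold PP
  have := hasSum_sum (s := Finset.univ) fun i _ => ((ha i z hz).2.mul_right (x ^ (j - (i:ℕ)) * y ^ (i:ℕ)))
  refine hs_cg this fun n => ?_
  rw [Finset.sum_mul]
  refine Finset.sum_congr rfl fun i _ => by ring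

lemma PP_summable (ha : IsExp j F a) (x y : ℂ) {z} (hz : z ∈ Om) :
    Summable fun n => ‖PP j (a n) x y‖ * Real.exp (-(Real.pi * dotR n fun i => (z i).im)) := by
  have := (PP_hasSum ha x y hz).summable.norm
  simpa only [norm_mul, exp_norm] using this

lemma uniq {b : (Fin 3 → ℤ) → ℂ}
    (h : ∀ z ∈ Om, HasSum (fun n => b n * cexp (Real.pi * I * dot3 n z)) 0) : b = 0 := by
  have hm : ∀ x : Fin 3 → ℝ, (fun i => (x i : ℂ) + (![1, 0, 1] i : ℝ) * I) ∈ Om := by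
    intro x; simp [Om, CC]
  have h1 := fourier_unique (fun n => b n * cexp (Real.pi * I * dot3 n fun i => (![1, 0, 1] i : ℝ) * I)) ?_ ?_
  · funext n
    have := congrFun h1 n
    simpa using this
  · have := (h _ (hm 0)).summable.norm
    simpa using this
  · intro x
    convert h _ (hm x) using 2 with n
    rw [mul_assoc, ← Complex.exp_add]
    congr 2
    simp only [dot3, Fin.sum_univ_three]; ring

lemma a_odd (hε : IsEps ε) (hF : IsSiegelCuspForm j 2 Sp4Z ε F) (ha : IsExp j F a) (n : Fin 3 → ℤ) (i : Fin 3)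
    (hn : Even (n i)) : a n = 0 := by
  have hs : ∀ z ∈ Om, F (TT fun l => z l + ((Pi.single i 1 : Fin 3 → ℤ) l : ℤ)) = - F (TT z) := by
    intro z hz
    have e1 := F_etr hF 1 0 0 hz
    have e2 := F_etr hF 0 1 0 hz
    have e3 := F_etr hF 0 0 1 hz
    rw [eps_tr1 hε, neg_one_smul] at e1
    rw [eps_tr2 hε, neg_one_smul] at e2
    rw [eps_tr3 hε, neg_one_smul] at e3
    fin_cases i
    · rw [← e1]; congr 2; funext l; fin_cases l <;> simp
    · rw [← e2]; congr 2; funext l; fin_cases l <;> simp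
    · rw [← e3]; congr 2; funext l; fin_cases l <;> simp
  funext k
  have key := uniq (b := fun n => a n k * (cexp (Real.pi * I * n i) + 1)) ?_
  · have := congrFun key n
    obtain ⟨m, hm⟩ := hn
    have h1 : cexp (Real.pi * I * n i) = 1 := by
      rw [hm, Complex.exp_eq_one_iff]; exact ⟨m, by push_cast; ring⟩
    simp only [h1, Pi.zero_apply] at this
    simpa [show (1:ℂ) + 1 ≠ 0 by norm_num] using this
  · intro z hz
    have hz' : (fun l => z l + ((Pi.single i 1 : Fin 3 → ℤ) l : ℤ)) ∈ Om := by simpa [Om] using hz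
    have h1 := (ha k _ hz').2.add (ha k z hz).2
    rw [hs z hz] at h1
    simp only [Pi.neg_apply, neg_add_cancel] at h1
    convert h1 using 2 with n
    have : dot3 n (fun l => z l + ((Pi.single i 1 : Fin 3 → ℤ) l : ℤ)) = dot3 n z + n i := by
      simp only [dot3, mul_add, Finset.sum_add_distrib]
      congr 1
      simp [Pi.single_apply]
    rw [this, mul_add, mul_add (↑Real.pi * I), Complex.exp_add]; ring

def NU (p q r s : ℤ) (n : Fin 3 → ℤ) : Fin 3 → ℤ :=
  ![p*p*n 0 + p*r*n 1 + r*r*n 2, 2*p*q*n 0 + (p*s+q*r)*n 1 + 2*r*s*n 2, q*q*n 0 + q*s*n 1 + s*s*n 2]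

def NUe (e p q r s : ℤ) (he : e * e = 1) (h : p * s - q * r = e) : (Fin 3 → ℤ) ≃ (Fin 3 → ℤ) where
  toFun := NU p q r s
  invFun := NU s (-q) (-r) p
  left_inv n := by
    have h2 : (p*s-q*r)*(p*s-q*r) = 1 := by rw [h, he]
    funext i; fin_cases i <;> simp [NU]
    · linear_combination (n 0) * h2
    · linear_combination (n 1) * h2
    · linear_combination (n 2) * h2
  right_inv n := by
    have h2 : (p*s-q*r)*(p*s-q*r) = 1 := by rw [h, he]
    funext i; fin_cases i <;> simp [NU]
    · linear_combination (n 0) * h2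
    · linear_combination (n 1) * h2
    · linear_combination (n 2) * h2

lemma a_equiv (hF : IsSiegelCuspForm j 2 Sp4Z ε F) (ha : IsExp j F a) {e p q r s : ℤ}
    (he : e * e = 1) (h : p * s - q * r = e) (n : Fin 3 → ℤ) (x y : ℂ) :
    PP j (a n) x y = ε (edU e p q r s) * PP j (a (NU p q r s n)) (e * (s * x - q * y)) (e * (-r * x + p * y)) := by
  set x' : ℂ := e * (s * x - q * y) with hx'
  set y' : ℂ := e * (-r * x + p * y) with hy'
  have key := uniq (b := fun m => PP j (a ((NUe e p q r s he h).symm m)) x y - ε (edU e p q r s) * PP j (a m) x' y') ?_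
  · have := congrFun key (NUe e p q r s he h n)
    simp only [Equiv.symm_apply_apply, Pi.zero_apply] at this
    exact sub_eq_zero.1 this
  · intro z hz
    have hm := edU_mem he h
    have hτ := (TT_mem z).2 hz
    let w : Fin 3 → ℂ := ![p*p*z 0+p*q*(z 1+z 1)+q*q*z 2, p*r*z 0+p*s*z 1+q*r*z 1+q*s*z 2, r*r*z 0+r*s*(z 1+z 1)+s*s*z 2]
    have hw : TT w = moeb (edU e p q r s) (TT z) := by
      rw [moeb_edU he h]
      funext i l; fin_cases i <;> fin_cases l <;> simp [TT, w] <;> ring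
    have hwO : w ∈ Om := by rw [← TT_mem, hw]; exact moeb_mem hm hτ
    have h1 := PP_hasSum ha x y hwO
    have h2 : PP j (F (TT w)) x y = ε (edU e p q r s) * PP j (F (TT z)) x' y' := by
      rw [hw, hF.2.1 _ hm _ hτ, PP_smul, wt, PP_smul, PP_symAct, den_edU]
      have : (!![(e * s:ℂ), -e * r; -e * q, e * p]).det = e := by
        rw [det_fin_two_of]
        have he' : (e * e : ℂ) = 1 := by exact_mod_cast he
        have h' : (p * s - q * r : ℂ) = e := by exact_mod_cast h
        linear_combination he' * (p * s - q * r) + h'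
      rw [this]
      have he2 : (e : ℂ) ^ (2:ℤ) = 1 := by
        have he' : (e * e : ℂ) = 1 := by exact_mod_cast he
        rw [zpow_two, he']
      rw [he2, one_mul]
      congr 2
      · simp [hx']; ring
      · simp [hy']; ring
    rw [h2] at h1
    have h3 := (PP_hasSum ha x' y' hz).mul_left (ε (edU e p q r s))
    have h4 := ((NUe e p q r s he h).symm.hasSum_iff).2 h1
    have h5 := h4.sub h3
    rw [sub_self] at h5
    refine hs_cg h5 fun m => ?_
    simp only [Function.comp]
    have : dot3 ((NUe e p q r s he h).symm m) w = dot3 m z := by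
      conv_rhs => rw [← (NUe e p q r s he h).apply_symm_apply m]
      generalize (NUe e p q r s he h).symm m = k
      show _ = dot3 (NU p q r s k) z
      simp [dot3, Fin.sum_univ_three, w, NU]; ring
    rw [this]; ring
end

section
variable {ε : Matrix (Fin 4) (Fin 4) ℤ → ℂ} {j : ℕ} {F : (Fin 2 → Fin 2 → ℂ) → (Fin (j + 1) → ℂ)}
  {a : (Fin 3 → ℤ) → Fin (j + 1) → ℂ}

lemma a_bound (ha : IsExp j F a) (i : Fin (j + 1)) :
    ∃ C, ∀ n, ‖a n i‖ ≤ C * Real.exp (Real.pi * (n 0 + n 2)) := by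
  have hz : (fun l => (![1, 0, 1] l : ℝ) * I : Fin 3 → ℂ) ∈ Om := by simp [Om, CC]
  have h := (ha i _ hz).1
  refine ⟨∑' n : Fin 3 → ℤ, ‖a n i‖ * Real.exp (-(Real.pi * dotR n fun i => ((![1, 0, 1] i : ℝ) * I).im)), fun n => ?_⟩
  have h1 := h.le_tsum n (fun m _ => by positivity)
  have h2 : dotR n (fun l => ((![1, 0, 1] l : ℝ) * I).im) = n 0 + n 2 := by
    simp [dotR, Fin.sum_univ_three]
  rw [h2, Real.exp_neg, ← div_eq_mul_inv, div_le_iff₀ (Real.exp_pos _)] at h1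
  exact h1

lemma PP_norm_le (v : Fin (j + 1) → ℂ) (x y : ℂ) (B M : ℝ) (hB : 1 ≤ B) (hx : ‖x‖ ≤ B) (hy : ‖y‖ ≤ B)
    (hv : ∀ i, ‖v i‖ ≤ M) : ‖PP j v x y‖ ≤ (j + 1) * (M * B ^ j) := by
  unfold PP
  refine (norm_sum_le _ _).trans ?_
  have : ∀ i : Fin (j + 1), ‖v i * (x ^ (j - (i:ℕ)) * y ^ (i:ℕ))‖ ≤ M * B ^ j := by
    intro i
    rw [norm_mul, norm_mul, norm_pow, norm_pow]
    have h1 : ‖x‖ ^ (j - (i:ℕ)) * ‖y‖ ^ (i:ℕ) ≤ B ^ (j - (i:ℕ)) * B ^ (i:ℕ) := by gcongr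
    rw [← pow_add, Nat.sub_add_cancel (by have := i.2; omega)] at h1
    have := hv i
    have h0 : 0 ≤ M := (norm_nonneg _).trans this
    gcongr
  refine (Finset.sum_le_sum fun i _ => this i).trans ?_
  simp

lemma koecher0 (hε : IsEps ε) (hF : IsSiegelCuspForm j 2 Sp4Z ε F) (ha : IsExp j F a) (n : Fin 3 → ℤ) (hn : n 0 < 0) :
    a n = 0 := by
  apply PP_eq_zero
  intro y
  choose C hC using fun i => a_bound ha i
  obtain ⟨M, hM⟩ := (Set.finite_range C).bddAbove
  have hM' : ∀ i m, ‖a m i‖ ≤ M * Real.exp (Real.pi * (m 0 + m 2)) := by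
    intro i m
    refine (hC i m).trans ?_
    gcongr
    exact hM ⟨i, rfl⟩
  have hM0 : 0 ≤ M := by
    have := (norm_nonneg _).trans (hM' 0 n)
    by_contra hc; push Not at hc
    have h2 := Real.exp_pos (Real.pi * (n 0 + n 2))
    nlinarith
  set B : ℝ := 1 + ‖y‖ with hB
  have hB1 : 1 ≤ B := by rw [hB]; linarith [norm_nonneg y]
  have hbd : ∀ K : ℕ, ‖PP j (a n) 1 y‖ ≤ (j + 1) * (M * Real.exp (Real.pi * n 2)) * B ^ j * Real.exp 1 *
      (((K:ℝ) + 1) ^ j * Real.exp (-((K:ℝ) + 1))) := by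
    intro K
    obtain ⟨k, hk1, hk2, hk3⟩ : ∃ k : ℤ, k * n 1 ≤ 0 ∧ k * k = K * K ∧ |k| = K := by
      rcases le_total 0 (n 1) with h | h
      · exact ⟨-K, by nlinarith, by ring, by simp⟩
      · exact ⟨K, by nlinarith, by ring, by simp⟩
    have h1 := a_equiv hF ha (e := 1) (p := 1) (q := k) (r := 0) (s := 1) (by norm_num) (by norm_num) n 1 y
    rw [h1, norm_mul]
    have h2 : ‖ε (edU 1 1 k 0 1)‖ = 1 := by
      rcases hε.1 _ (edU_mem (e := 1) (p := 1) (q := k) (r := 0) (s := 1) (by norm_num) (by norm_num)) with h | h <;> rw [h] <;> simp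
    rw [h2, one_mul]
    have hkn : ‖(k : ℂ)‖ = K := by
      rw [Complex.norm_intCast, ← Int.cast_abs, hk3]; simp
    have hKp : (0:ℝ) ≤ K := Nat.cast_nonneg K
    have hyn := norm_nonneg y
    refine (PP_norm_le _ _ _ (B * (K + 1)) (M * Real.exp (Real.pi * (n 2 - K))) (by nlinarith) ?_ ?_ ?_).trans ?_
    · simp
      refine (norm_sub_le _ _).trans ?_
      rw [norm_one, norm_mul, hkn, hB]; nlinarith
    · simp
      rw [hB]; nlinarith
    · intro i
      refine (hM' i _).trans ?_
      gcongr
      have : NU 1 k 0 1 n 0 + NU 1 k 0 1 n 2 ≤ n 2 - K := by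
        simp [NU]
        rw [hk2]
        have : (0:ℤ) ≤ K := Int.natCast_nonneg K
        nlinarith [sq_nonneg ((K:ℤ) - 1)]
      exact_mod_cast this
    · have : Real.exp (Real.pi * (n 2 - K)) ≤ Real.exp (Real.pi * n 2) * (Real.exp 1 * Real.exp (-((K:ℝ) + 1))) := by
        rw [← Real.exp_add, ← Real.exp_add]
        apply Real.exp_le_exp.2
        nlinarith [Real.pi_gt_three]
      rw [mul_pow]
      calc _ ≤ ((j:ℝ) + 1) * (M * (Real.exp (Real.pi * n 2) * (Real.exp 1 * Real.exp (-((K:ℝ) + 1)))) * (B ^ j * ((K:ℝ) + 1) ^ j)) := by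
            gcongr
        _ = _ := by ring
  have hlim : Tendsto (fun K : ℕ => (j + 1) * (M * Real.exp (Real.pi * n 2)) * B ^ j * Real.exp 1 *
      (((K:ℝ) + 1) ^ j * Real.exp (-((K:ℝ) + 1)))) atTop (𝓝 0) := by
    have h1 := (Real.tendsto_pow_mul_exp_neg_atTop_nhds_zero j).comp
      (tendsto_atTop_add_const_right atTop (1:ℝ) tendsto_natCast_atTop_atTop)
    have := h1.const_mul ((j + 1) * (M * Real.exp (Real.pi * n 2)) * B ^ j * Real.exp 1)
    rw [mul_zero] at this
    exact this
  have := ge_of_tendsto' hlim hbd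
  exact norm_le_zero_iff.1 this

lemma a_zero_of (hF : IsSiegelCuspForm j 2 Sp4Z ε F) (ha : IsExp j F a) {e p q r s : ℤ}
    (he : e * e = 1) (h : p * s - q * r = e) (n : Fin 3 → ℤ) (h0 : a (NU p q r s n) = 0) : a n = 0 := by
  apply PP_eq_zero
  intro y
  rw [a_equiv hF ha he h, h0, PP_zero, mul_zero]

lemma koecher (hε : IsEps ε) (hF : IsSiegelCuspForm j 2 Sp4Z ε F) (ha : IsExp j F a) (n : Fin 3 → ℤ) (hn : a n ≠ 0) :
    Odd (n 0) ∧ Odd (n 1) ∧ Odd (n 2) ∧ 0 < n 0 ∧ 0 < n 2 ∧ n 1 ^ 2 < 4 * n 0 * n 2 := by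
  have o : ∀ i, Odd (n i) := by
    intro i
    by_contra h
    exact hn (a_odd hε hF ha n i (Int.not_odd_iff_even.1 h))
  have g : ∀ p q r s : ℤ, p * s - q * r = 1 → 0 ≤ p*p*n 0 + p*r*n 1 + r*r*n 2 := by
    intro p q r s h
    by_contra hc; push Not at hc
    exact hn (a_zero_of hF ha (e := 1) (by norm_num) h n (koecher0 hε hF ha _ (by simpa [NU] using hc)))
  have h0 : 0 < n 0 := by
    have := g 1 0 0 1 (by norm_num)
    obtain ⟨m, hm⟩ := o 0
    simp at this; omega
  have h2 : 0 < n 2 := by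
    have := g 0 (-1) 1 0 (by norm_num)
    obtain ⟨m, hm⟩ := o 2
    simp at this; omega
  refine ⟨o 0, o 1, o 2, h0, h2, ?_⟩
  by_contra hc
  push Not at hc
  have hlt : 4 * n 0 * n 2 < n 1 ^ 2 := by
    refine lt_of_le_of_ne hc ?_
    intro h
    obtain ⟨m, hm⟩ := o 1
    rw [hm] at h
    have : (2 * m + 1) ^ 2 = 2 * (2 * m * m + 2 * m) + 1 := by ring
    rw [this, show 4 * n 0 * n 2 = 2 * (2 * (n 0 * n 2)) by ring] at h
    omega
  obtain ⟨p, q, r, s, hd, hk⟩ := exists_sl2_kill (2 * n 0) (n 1)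
  have hQ := g r (-p) s (-q) (by linarith)
  have h4 : 4 * n 0 * (r*r*n 0 + r*s*n 1 + s*s*n 2) = (4 * n 0 * n 2 - n 1 ^ 2) * (s * s) := by
    linear_combination (2 * n 0 * r + s * n 1) * hk
  have hs : s ≠ 0 := by
    rintro rfl
    have : r = 0 := by
      have : r * (2 * n 0) = 0 := by linarith
      rcases mul_eq_zero.1 this with h | h
      · exact h
      · omega
    rw [this] at hd; simp at hd
  have hss : 0 < s * s := mul_self_pos.2 hs
  nlinarith
end

section
open UpperHalfPlane ModularForm MatrixGroups Manifold

lemma cusp_zero (k : ℤ) (hk : k < 12) (f : ℍ → ℂ)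
    (hinv : ∀ (γ : Matrix.SpecialLinearGroup (Fin 2) ℤ) (z : ℍ), f (γ • z) = ((γ 1 0 : ℂ) * z + (γ 1 1 : ℂ)) ^ k * f z)
    (hol : DifferentiableOn ℂ (f ∘ UpperHalfPlane.ofComplex) {z | 0 < z.im})
    (h0 : UpperHalfPlane.IsZeroAtImInfty f) (z : ℍ) : f z = 0 := by
  have hs : ∀ γ : Matrix.SpecialLinearGroup (Fin 2) ℤ, f ∣[k] γ = f := by
    intro γ; funext z
    exact (ModularForm.slash_action_eq'_iff k f γ z).2 (hinv γ z)
  let G : CuspForm 𝒮ℒ k :=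
    { toFun := f
      slash_action_eq' := by
        rintro γ ⟨g, rfl⟩
        exact hs g
      holo' := UpperHalfPlane.mdifferentiable_iff.2 hol
      zero_at_cusps' := by
        intro c hc
        rw [OnePoint.isZeroAt_iff_forall_SL2Z hc]
        intro γ _
        rw [hs]
        exact h0 }
  have hG : G = 0 := rank_zero_iff_forall_zero.1 (CuspForm.rank_eq_zero_of_weight_lt_twelve hk) G
  have := congrArg (fun H : CuspForm 𝒮ℒ k => H z) hG
  exact this
end
section
variable {ε : Matrix (Fin 4) (Fin 4) ℤ → ℂ} {j : ℕ} {F : (Fin 2 → Fin 2 → ℂ) → (Fin (j + 1) → ℂ)}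
  {a : (Fin 3 → ℤ) → Fin (j + 1) → ℂ}

lemma symAct_diag (d : ℂ) (v : Fin (j + 1) → ℂ) (i : Fin (j + 1)) :
    symAct j !![1, 0; 0, d] v i = d ^ (i : ℕ) * v i := by
  have : symAct j !![1, 0; 0, d] v = fun i : Fin (j + 1) => d ^ (i : ℕ) * v i := by
    apply PP_ext; intro x y
    rw [PP_symAct]
    simp only [PP]
    apply Finset.sum_congr rfl
    intro i _
    simp [mul_pow]; ring
  rw [this]

lemma diag_Om {x y : ℂ} (hx : 0 < x.im) (hy : 0 < y.im) : (![x, 0, y] : Fin 3 → ℂ) ∈ Om := by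
  simp [Om, CC]; exact ⟨hx, by positivity⟩

lemma den_ei2 (p q r s : ℤ) (x y : ℂ) : den (ei2 p q r s) (TT ![x, 0, y]) = !![1, 0; 0, r * y + s] := by
  ext i k
  fin_cases i <;> fin_cases k <;> simp [den, blk, ei2, TT, Matrix.mul_apply, Fin.sum_univ_two]

lemma moeb_ei2 (p q r s : ℤ) (x y : ℂ) (hd : (r * y + s : ℂ) ≠ 0) :
    moeb (ei2 p q r s) (TT ![x, 0, y]) = TT ![x, 0, (p * y + q) / (r * y + s)] := by
  funext i k
  have hinv : (!![1, 0; 0, (r * y + s : ℂ)] : Matrix (Fin 2) (Fin 2) ℂ)⁻¹ = !![1, 0; 0, (r * y + s)⁻¹] := by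
    apply Matrix.inv_eq_right_inv
    ext i k; fin_cases i <;> fin_cases k <;> simp [Matrix.mul_apply, Fin.sum_univ_two, hd]
  simp only [moeb]
  rw [den_ei2, hinv]
  fin_cases i <;> fin_cases k <;> simp [blk, ei2, TT, Matrix.mul_apply, Fin.sum_univ_two]
  rfl

lemma diag_inv (hε : IsEps ε) (hF : IsSiegelCuspForm j 2 Sp4Z ε F) (i : Fin (j + 1)) {p q r s : ℤ} (h : p * s - q * r = 1)
    {x y : ℂ} (hx : 0 < x.im) (hy : 0 < y.im) (hd : (r * y + s : ℂ) ≠ 0) :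
    (F (TT ![x, 0, (p * y + q) / (r * y + s)]) i) ^ 2 = (r * y + s) ^ (4 + 2 * (i : ℕ)) * (F (TT ![x, 0, y]) i) ^ 2 := by
  have h1 := hF.2.1 (ei2 p q r s) (ei2_mem h) (TT ![x, 0, y]) ((TT_mem _).2 (diag_Om hx hy))
  rw [moeb_ei2 _ _ _ _ _ _ hd, den_ei2] at h1
  rw [h1]
  have h2 := eps_sq hε (ei2_mem h)
  simp only [wt, Pi.smul_apply, smul_eq_mul, symAct_diag, det_fin_two_of, one_mul, mul_zero, sub_zero]
  have e : ∀ u w f : ℂ, u * u = 1 → (u * (w ^ (2:ℤ) * (w ^ (i:ℕ) * f))) ^ 2 = w ^ (4 + 2 * (i:ℕ)) * f ^ 2 := by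
    intro u w f hu
    have : (u * (w ^ (2:ℤ) * (w ^ (i:ℕ) * f))) ^ 2 = (u * u) * (w ^ (4 + 2 * (i:ℕ)) * f ^ 2) := by
      rw [show ((2:ℤ)) = ((2:ℕ):ℤ) from rfl, zpow_natCast]; ring
    rw [this, hu, one_mul]
  apply e
  exact h2

lemma diag_bd (hε : IsEps ε) (hF : IsSiegelCuspForm j 2 Sp4Z ε F) (ha : IsExp j F a) (i : Fin (j + 1))
    {x : ℂ} (hx : 0 < x.im) : ∃ C : ℝ, 0 ≤ C ∧ ∀ y : ℂ, 1 ≤ y.im → ‖F (TT ![x, 0, y]) i‖ ≤ C * Real.exp (-(Real.pi * (y.im - 1))) := by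
  have h1 := (ha i _ (diag_Om hx (y := I) (by simp))).1
  refine ⟨∑' n, ‖a n i‖ * Real.exp (-(Real.pi * dotR n fun k => ((![x, 0, I] : Fin 3 → ℂ) k).im)), tsum_nonneg fun n => by positivity, ?_⟩
  intro y hy
  have h2 := (ha i _ (diag_Om hx (y := y) (by linarith))).2
  rw [← h2.tsum_eq, ← tsum_mul_right]
  apply tsum_of_norm_bounded (h1.mul_right _).hasSum
  intro n
  rw [norm_mul, exp_norm, mul_assoc, ← Real.exp_add]
  by_cases hn : a n = 0
  · simp [hn]
  obtain ⟨-, -, -, h0, h3, -⟩ := koecher hε hF ha n hn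
  apply mul_le_mul_of_nonneg_left _ (norm_nonneg _)
  apply Real.exp_le_exp.2
  have h3' : (1:ℝ) ≤ n 2 := by exact_mod_cast h3
  simp only [dotR, Fin.sum_univ_three]
  simp
  nlinarith [Real.pi_pos, mul_nonneg Real.pi_pos.le (mul_nonneg (sub_nonneg.2 h3') (sub_nonneg.2 hy))]

lemma diag_zero (hε : IsEps ε) (hF : IsSiegelCuspForm j 2 Sp4Z ε F) (i : Fin (j + 1)) (hi : (i : ℕ) < 4)
    {x y : ℂ} (hx : 0 < x.im) (hy : 0 < y.im) : F (TT ![x, 0, y]) i = 0 := by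
  obtain ⟨a, ha⟩ := exists_exp hε hF
  have key := cusp_zero (4 + 2 * (i : ℕ)) (by omega) (fun z => (F (TT ![x, 0, (z : ℂ)]) i) ^ 2) ?_ ?_ ?_ ⟨y, hy⟩
  · simpa using key
  · intro γ z
    have hdet := γ.det_coe
    rw [det_fin_two] at hdet
    have hd : ((γ 1 0 : ℂ) * z + γ 1 1) ≠ 0 := UpperHalfPlane.denom_ne_zero (γ : GL (Fin 2) ℝ) z
    have := diag_inv hε hF i hdet hx z.im_pos hd
    rw [UpperHalfPlane.specialLinearGroup_apply]
    simp only [algebraMap_int_eq, eq_intCast, Complex.ofReal_intCast]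
    rw [show ((4:ℤ) + 2 * (i:ℕ)) = ((4 + 2 * (i:ℕ) : ℕ) : ℤ) by push_cast; ring, zpow_natCast]
    exact this
  · have h2 : DifferentiableOn ℂ (fun w : ℂ => (F (TT ![x, 0, w]) i) ^ 2) {z | 0 < z.im} := by
      have h1 : DifferentiableOn ℂ (fun w : ℂ => F (TT ![x, 0, w])) {z | 0 < z.im} := by
        refine hF.1.comp ?_ (fun z hz => (TT_mem _).2 (diag_Om hx hz))
        apply Differentiable.differentiableOn
        rw [differentiable_pi]; intro k
        rw [differentiable_pi]; intro l
        fin_cases k <;> fin_cases l <;> simp [TT]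
      exact ((differentiableOn_pi.1 h1) i).pow 2
    refine h2.congr ?_
    intro w hw
    simp [UpperHalfPlane.ofComplex_apply_of_im_pos hw]
  · rw [UpperHalfPlane.isZeroAtImInfty_iff]
    intro e he
    obtain ⟨C, hC, hb⟩ := diag_bd hε hF ha i hx
    have ht : Tendsto (fun t : ℝ => (C * Real.exp (-(Real.pi * (t - 1)))) ^ 2) atTop (𝓝 ((C * 0) ^ 2)) := by
      apply Tendsto.pow
      apply Tendsto.const_mul
      apply Real.tendsto_exp_neg_atTop_nhds_zero.comp
      apply Tendsto.const_mul_atTop Real.pi_pos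
      exact tendsto_atTop_add_const_right _ _ tendsto_id
    have := (ht.eventually (gt_mem_nhds (show (C * 0) ^ 2 < e by simpa using he)))
    obtain ⟨A, hA⟩ := eventually_atTop.1 this
    refine ⟨max A 1, fun z hz => ?_⟩
    have hz1 : 1 ≤ (z : ℂ).im := le_trans (le_max_right _ _) hz
    have h3 := hA _ (le_trans (le_max_left _ _) hz)
    rw [norm_pow]
    refine le_trans (pow_le_pow_left₀ (norm_nonneg _) (hb z hz1) 2) ?_
    exact h3.le

lemma diag_coef (hε : IsEps ε) (hF : IsSiegelCuspForm j 2 Sp4Z ε F) (ha : IsExp j F a) (i : Fin (j + 1)) (hi : (i : ℕ) < 4) :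
    a ![1, 1, 1] i + a ![1, -1, 1] i = 0 := by
  have hO : ∀ t : ℝ, 0 < t → (![I * t, 0, I * t] : Fin 3 → ℂ) ∈ Om := fun t ht => diag_Om (by simpa) (by simpa)
  have hsum := (ha i _ (hO 1 one_pos)).1.mul_right (Real.exp (2 * Real.pi))
  have hlim := tendsto_tsum_of_dominated_convergence (𝓕 := (atTop : Filter ℝ))
    (f := fun t n => a n i * cexp (Real.pi * I * dot3 n ![I * t, 0, I * t]) * cexp (2 * Real.pi * t))
    (g := fun n => if n = ![1, 1, 1] ∨ n = ![1, -1, 1] then a n i else 0) hsum ?_ ?_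
  · have hz : ∀ᶠ t : ℝ in atTop, ∑' n, a n i * cexp (Real.pi * I * dot3 n ![I * t, 0, I * t]) * cexp (2 * Real.pi * t) = 0 := by
      filter_upwards [eventually_gt_atTop 0] with t ht
      rw [tsum_mul_right, (ha i _ (hO t ht)).2.tsum_eq, diag_zero hε hF i hi (by simpa) (by simpa), zero_mul]
    have h0 := tendsto_nhds_unique (hlim.congr' hz) tendsto_const_nhds
    rw [tsum_eq_sum (s := {![1, 1, 1], ![1, -1, 1]})] at h0
    · rw [Finset.sum_pair (by decide)] at h0
      simpa using h0
    · intro n hn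
      simp only [Finset.mem_insert, Finset.mem_singleton] at hn
      simp [hn]
  · intro n
    have hterm : ∀ t : ℝ, a n i * cexp (Real.pi * I * dot3 n ![I * t, 0, I * t]) * cexp (2 * Real.pi * t) = a n i * cexp ((-(Real.pi * (n 0 + n 2 - 2) * t) : ℝ)) := by
      intro t
      rw [mul_assoc, ← Complex.exp_add]; congr 2
      simp [dot3, Fin.sum_univ_three]
      linear_combination (Real.pi * (n 0 + n 2) * t : ℂ) * I_mul_I
    simp only [hterm]
    by_cases hn : a n = 0
    · simp [hn]
    obtain ⟨h1, h2, h3, h4, h5, h6⟩ := koecher hε hF ha n hn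
    split_ifs with hc
    · have e0 : n 0 = 1 := by rcases hc with rfl | rfl <;> rfl
      have e2 : n 2 = 1 := by rcases hc with rfl | rfl <;> rfl
      rw [e0, e2]; norm_num
    · have h8 : 2 < n 0 + n 2 := by
        by_contra hh
        have e0 : n 0 = 1 := by omega
        have e2 : n 2 = 1 := by omega
        rw [e0, e2] at h6
        have : n 1 < 2 := by nlinarith
        have : -2 < n 1 := by nlinarith
        obtain ⟨k, hk⟩ := h2
        have : n 1 = 1 ∨ n 1 = -1 := by omega
        apply hc
        rcases this with h | h
        · left; funext k; fin_cases k <;> simp [e0, e2, h]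
        · right; funext k; fin_cases k <;> simp [e0, e2, h]
      have h8' : (0:ℝ) < Real.pi * (n 0 + n 2 - 2) := by
        have : (2:ℝ) < n 0 + n 2 := by exact_mod_cast h8
        exact mul_pos Real.pi_pos (by linarith)
      rw [show (0:ℂ) = a n i * ((0:ℝ):ℂ) by simp]
      apply Tendsto.const_mul
      simp only [← Complex.ofReal_exp]
      refine (Complex.continuous_ofReal.tendsto 0).comp ?_
      exact Real.tendsto_exp_neg_atTop_nhds_zero.comp (tendsto_id.const_mul_atTop h8')
  · filter_upwards [eventually_ge_atTop 1] with t ht n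
    by_cases hn : a n = 0
    · simp [hn]
    obtain ⟨h1, h2, h3, h4, h5, h6⟩ := koecher hε hF ha n hn
    rw [norm_mul, norm_mul, exp_norm, Complex.norm_exp, mul_assoc ‖a n i‖, ← Real.exp_add, mul_assoc ‖a n i‖, ← Real.exp_add]
    apply mul_le_mul_of_nonneg_left _ (norm_nonneg _)
    apply Real.exp_le_exp.2
    have h3' : (1:ℝ) ≤ n 2 := by exact_mod_cast h5
    have h3'' : (1:ℝ) ≤ n 0 := by exact_mod_cast h4
    simp [dotR, Fin.sum_univ_three]
    nlinarith [Real.pi_pos, mul_nonneg Real.pi_pos.le (mul_nonneg (show (0:ℝ) ≤ n 0 + n 2 - 2 by linarith) (sub_nonneg.2 ht))]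
end

lemma la0 (c : ℕ → ℂ) (σ : ℂ) (hσ : σ = 1 ∨ σ = -1) (h0 : c 0 = 0) (h2 : 2 ≤ 0 → c 2 = 0)
    (hs : ∀ i ≤ 0, c i = σ * c (0 - i))
    (hr : ∀ t : ℂ, ∑ i ∈ Finset.range 1, c i * (1 ^ (0 - i) * t ^ i) = ∑ i ∈ Finset.range 1, c i * ((t - 1) ^ (0 - i) * (-1) ^ i)) :
    ∀ i ≤ 0, c i = 0 := by
  have s0 := hs 0 (by norm_num)
  norm_num at s0
  rcases hσ with rfl | rfl
  · intro i hi
    interval_cases i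
    · linear_combination (1) * h0
  · intro i hi
    interval_cases i
    · linear_combination (1/2) * s0
lemma la2 (c : ℕ → ℂ) (σ : ℂ) (hσ : σ = 1 ∨ σ = -1) (h0 : c 0 = 0) (h2 : 2 ≤ 2 → c 2 = 0)
    (hs : ∀ i ≤ 2, c i = σ * c (2 - i))
    (hr : ∀ t : ℂ, ∑ i ∈ Finset.range 3, c i * (1 ^ (2 - i) * t ^ i) = ∑ i ∈ Finset.range 3, c i * ((t - 1) ^ (2 - i) * (-1) ^ i)) :
    ∀ i ≤ 2, c i = 0 := by
  replace h2 := h2 (by norm_num)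
  have r0 := hr (0)
  have r2 := hr (2)
  have r3 := hr (3)
  have rm1 := hr (-1)
  have r4 := hr (4)
  have s0 := hs 0 (by norm_num)
  have s1 := hs 1 (by norm_num)
  simp only [Finset.sum_range_succ, Finset.sum_range_zero] at r0 r2 r3 rm1 r4
  norm_num at r0 r2 r3 rm1 r4 s0 s1
  rcases hσ with rfl | rfl
  · intro i hi
    interval_cases i
    · linear_combination (1) * h2 + (-7/45) * rm1 + (-1/15) * r4
    · linear_combination (-1) * h2 + (-8/45) * rm1 + (1/15) * r4
    · linear_combination (1) * h2
  · intro i hi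
    interval_cases i
    · linear_combination (-1/2) * s1 + (-1/3) * rm1
    · linear_combination (1/2) * s1
    · linear_combination (-1/2) * s1 + (-8/45) * rm1 + (1/15) * r4
lemma la4 (c : ℕ → ℂ) (σ : ℂ) (hσ : σ = 1 ∨ σ = -1) (h0 : c 0 = 0) (h2 : 2 ≤ 4 → c 2 = 0)
    (hs : ∀ i ≤ 4, c i = σ * c (4 - i))
    (hr : ∀ t : ℂ, ∑ i ∈ Finset.range 5, c i * (1 ^ (4 - i) * t ^ i) = ∑ i ∈ Finset.range 5, c i * ((t - 1) ^ (4 - i) * (-1) ^ i)) :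
    ∀ i ≤ 4, c i = 0 := by
  replace h2 := h2 (by norm_num)
  have r0 := hr (0)
  have r2 := hr (2)
  have r3 := hr (3)
  have rm1 := hr (-1)
  have r4 := hr (4)
  have s0 := hs 0 (by norm_num)
  have s1 := hs 1 (by norm_num)
  have s2 := hs 2 (by norm_num)
  simp only [Finset.sum_range_succ, Finset.sum_range_zero] at r0 r2 r3 rm1 r4
  norm_num at r0 r2 r3 rm1 r4 s0 s1 s2
  rcases hσ with rfl | rfl
  · intro i hi
    interval_cases i
    · linear_combination (1/3) * h2 + (-289/630) * r2 + (17/60) * r3 + (-5/252) * rm1 + (-13/210) * r4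
    · linear_combination (-2/3) * h2 + (38/63) * r2 + (-5/12) * r3 + (-23/252) * rm1 + (2/21) * r4
    · linear_combination (1) * h2
    · linear_combination (-2/3) * h2 + (61/126) * r2 + (-1/6) * r3 + (5/126) * rm1 + (1/42) * r4
    · linear_combination (1/3) * h2 + (-31/90) * r2 + (11/60) * r3 + (-1/180) * rm1 + (-1/30) * r4
  · intro i hi
    interval_cases i
    · linear_combination (1/6) * s2 + (-289/630) * r2 + (17/60) * r3 + (-5/252) * rm1 + (-13/210) * r4
    · linear_combination (-1/3) * s2 + (38/63) * r2 + (-5/12) * r3 + (-23/252) * rm1 + (2/21) * r4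
    · linear_combination (1/2) * s2
    · linear_combination (-1/3) * s2 + (61/126) * r2 + (-1/6) * r3 + (5/126) * rm1 + (1/42) * r4
    · linear_combination (1/6) * s2 + (-31/90) * r2 + (11/60) * r3 + (-1/180) * rm1 + (-1/30) * r4
lemma la6 (c : ℕ → ℂ) (σ : ℂ) (hσ : σ = 1 ∨ σ = -1) (h0 : c 0 = 0) (h2 : 2 ≤ 6 → c 2 = 0)
    (hs : ∀ i ≤ 6, c i = σ * c (6 - i))
    (hr : ∀ t : ℂ, ∑ i ∈ Finset.range 7, c i * (1 ^ (6 - i) * t ^ i) = ∑ i ∈ Finset.range 7, c i * ((t - 1) ^ (6 - i) * (-1) ^ i)) :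
    ∀ i ≤ 6, c i = 0 := by
  replace h2 := h2 (by norm_num)
  have r0 := hr (0)
  have r2 := hr (2)
  have r3 := hr (3)
  have rm1 := hr (-1)
  have r4 := hr (4)
  have s0 := hs 0 (by norm_num)
  have s1 := hs 1 (by norm_num)
  have s2 := hs 2 (by norm_num)
  have s3 := hs 3 (by norm_num)
  simp only [Finset.sum_range_succ, Finset.sum_range_zero] at r0 r2 r3 rm1 r4
  norm_num at r0 r2 r3 rm1 r4 s0 s1 s2 s3
  rcases hσ with rfl | rfl
  · intro i hi
    interval_cases i
    · linear_combination (1) * h0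
    · linear_combination (-3) * h0 + (-1/5) * s2 + (-379/3150) * r2 + (11/350) * r3 + (-113/3150) * rm1 + (-17/4550) * r4
    · linear_combination (1) * h2
    · linear_combination (5) * h0 + (-2) * h2 + (1) * s2 + (313/630) * r2 + (-19/140) * r3 + (31/1260) * rm1 + (3/182) * r4
    · linear_combination (1) * h2 + (-1) * s2
    · linear_combination (-3) * h0 + (1/5) * s2 + (-263/1575) * r2 + (43/700) * r3 + (-79/6300) * rm1 + (-19/2275) * r4
    · linear_combination (1) * h0 + (4/105) * r2 + (-1/70) * r3 + (1/210) * rm1 + (1/455) * r4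
  · intro i hi
    interval_cases i
    · linear_combination (1/5) * s2 + (1/10) * s3 + (-313/3150) * r2 + (19/700) * r3 + (-31/6300) * rm1 + (-3/910) * r4
    · linear_combination (-2/5) * h2 + (-2/5) * s2 + (-3/10) * s3 + (8/45) * r2 + (-1/20) * r3 + (-19/900) * rm1 + (2/325) * r4
    · linear_combination (1) * h2
    · linear_combination (1/2) * s3
    · linear_combination (-1) * h2 + (1) * s2
    · linear_combination (2/5) * h2 + (-4/5) * s2 + (-3/10) * s3 + (59/450) * r2 + (-1/50) * r3 + (1/450) * rm1 + (1/650) * r4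
    · linear_combination (1/5) * s2 + (1/10) * s3 + (-193/3150) * r2 + (9/700) * r3 + (-1/6300) * rm1 + (-1/910) * r4
lemma la8 (c : ℕ → ℂ) (σ : ℂ) (hσ : σ = 1 ∨ σ = -1) (h0 : c 0 = 0) (h2 : 2 ≤ 8 → c 2 = 0)
    (hs : ∀ i ≤ 8, c i = σ * c (8 - i))
    (hr : ∀ t : ℂ, ∑ i ∈ Finset.range 9, c i * (1 ^ (8 - i) * t ^ i) = ∑ i ∈ Finset.range 9, c i * ((t - 1) ^ (8 - i) * (-1) ^ i)) :
    ∀ i ≤ 8, c i = 0 := by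
  replace h2 := h2 (by norm_num)
  have r0 := hr (0)
  have r2 := hr (2)
  have r3 := hr (3)
  have rm1 := hr (-1)
  have r4 := hr (4)
  have s0 := hs 0 (by norm_num)
  have s1 := hs 1 (by norm_num)
  have s2 := hs 2 (by norm_num)
  have s3 := hs 3 (by norm_num)
  have s4 := hs 4 (by norm_num)
  simp only [Finset.sum_range_succ, Finset.sum_range_zero] at r0 r2 r3 rm1 r4
  norm_num at r0 r2 r3 rm1 r4 s0 s1 s2 s3 s4
  rcases hσ with rfl | rfl
  · intro i hi
    interval_cases i
    · linear_combination (1) * h0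
    · linear_combination (-4) * h0 + (-790/609) * s2 + (-703/609) * s3 + (-528/203) * r0 + (-17488/63945) * r2 + (353/12180) * r3 + (923/255780) * rm1 + (-8/4263) * r4
    · linear_combination (1) * h2
    · linear_combination (14) * h0 + (-3) * h2 + (8047/783) * s2 + (7264/783) * s3 + (142649/6264) * r0 + (106717/46980) * r2 + (-3751/15660) * r3 + (-4883/46980) * rm1 + (97/6264) * r4
    · linear_combination (-21) * h0 + (4) * h2 + (-497/29) * s2 + (-439/29) * s3 + (-2353/58) * r0 + (-23893/6090) * r2 + (239/580) * r3 + (771/4060) * rm1 + (-27/1015) * r4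
    · linear_combination (14) * h0 + (-3) * h2 + (8047/783) * s2 + (6481/783) * s3 + (142649/6264) * r0 + (106717/46980) * r2 + (-3751/15660) * r3 + (-4883/46980) * rm1 + (97/6264) * r4
    · linear_combination (1) * h2 + (-1) * s2
    · linear_combination (-4) * h0 + (-7730/5481) * s2 + (-8513/5481) * s3 + (-90599/21924) * r0 + (-244667/575505) * r2 + (1283/27405) * r3 + (9853/575505) * rm1 + (-475/153468) * r4
    · linear_combination (1) * h0 + (76/261) * s2 + (76/261) * s3 + (395/522) * r0 + (2161/27405) * r2 + (-23/2610) * r3 + (-151/54810) * rm1 + (11/18270) * r4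
  · intro i hi
    interval_cases i
    · linear_combination (8069/43239) * s2 + (3951/14413) * s3 + (13745/86478) * s4 + (143/348) * r0 + (8068/4540095) * r2 + (41/123540) * r3 + (-61423/18160380) * rm1 + (-41/1210692) * r4
    · linear_combination (-2/7) * h2 + (-19772/43239) * s2 + (-9477/14413) * s3 + (-14836/43239) * s4 + (-1201/2436) * r0 + (194563/9080190) * r2 + (-933/288260) * r3 + (-50117/18160380) * rm1 + (1411/6053460) * r4
    · linear_combination (1) * h2
    · linear_combination (-1) * h2 + (31/71) * s2 + (22/71) * s3 + (-9/71) * s4 + (-13/8) * r0 + (-3901/29820) * r2 + (19/1420) * r3 + (257/29820) * rm1 + (-17/19880) * r4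
    · linear_combination (1/2) * s4
    · linear_combination (1) * h2 + (-31/71) * s2 + (49/71) * s3 + (9/71) * s4 + (13/8) * r0 + (3901/29820) * r2 + (-19/1420) * r3 + (-257/29820) * rm1 + (17/19880) * r4
    · linear_combination (-1) * h2 + (1) * s2
    · linear_combination (2/7) * h2 + (-9980/14413) * s2 + (-7291/14413) * s3 + (-3488/14413) * s4 + (-887/1218) * r0 + (-78311/3026730) * r2 + (1697/432390) * r3 + (11737/3026730) * rm1 + (-153/504455) * r4
    · linear_combination (6473/43239) * s2 + (2355/14413) * s3 + (7361/86478) * s4 + (77/348) * r0 + (4037/908019) * r2 + (-17/24708) * r3 + (-4061/3632076) * rm1 + (85/1210692) * r4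
lemma la10 (c : ℕ → ℂ) (σ : ℂ) (hσ : σ = 1 ∨ σ = -1) (h0 : c 0 = 0) (h2 : 2 ≤ 10 → c 2 = 0)
    (hs : ∀ i ≤ 10, c i = σ * c (10 - i))
    (hr : ∀ t : ℂ, ∑ i ∈ Finset.range 11, c i * (1 ^ (10 - i) * t ^ i) = ∑ i ∈ Finset.range 11, c i * ((t - 1) ^ (10 - i) * (-1) ^ i)) :
    ∀ i ≤ 10, c i = 0 := by
  replace h2 := h2 (by norm_num)
  have r0 := hr (0)
  have r2 := hr (2)
  have r3 := hr (3)
  have rm1 := hr (-1)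
  have r4 := hr (4)
  have s0 := hs 0 (by norm_num)
  have s1 := hs 1 (by norm_num)
  have s2 := hs 2 (by norm_num)
  have s3 := hs 3 (by norm_num)
  have s4 := hs 4 (by norm_num)
  have s5 := hs 5 (by norm_num)
  simp only [Finset.sum_range_succ, Finset.sum_range_zero] at r0 r2 r3 rm1 r4
  norm_num at r0 r2 r3 rm1 r4 s0 s1 s2 s3 s4 s5
  rcases hσ with rfl | rfl
  · intro i hi
    interval_cases i
    · linear_combination (1) * h0
    · linear_combination (-5) * h0 + (-60640/29667) * s1 + (-66367/49445) * s2 + (-98902/148335) * s3 + (-1343/5115) * s4 + (3/116) * r0 + (-55082/15575175) * r2 + (-1/4350) * r3 + (-174613/31150350) * rm1 + (1/60900) * r4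
    · linear_combination (1) * h2
    · linear_combination (30) * h0 + (-4) * h2 + (8247815/356004) * s1 + (778523/59334) * s2 + (485647/89001) * s3 + (11203/6138) * s4 + (-3211/4176) * r0 + (-127865/7476084) * r2 + (23/4176) * r3 + (6100349/149521680) * rm1 + (-43/146160) * r4
    · linear_combination (-75) * h0 + (8) * h2 + (-3766805/59334) * s1 + (-298794/9889) * s2 + (-279293/29667) * s3 + (-2533/1023) * s4 + (2225/348) * r0 + (84703/356004) * r2 + (-17/696) * r3 + (-410237/3560040) * rm1 + (1/870) * r4
    · linear_combination (99) * h0 + (-10) * h2 + (1379087/16182) * s1 + (507382/13485) * s2 + (409867/40455) * s3 + (3878/1395) * s4 + (-25685/2088) * r0 + (-264304/606825) * r2 + (1999/52200) * r3 + (772381/4854600) * rm1 + (-91/52200) * r4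
    · linear_combination (-75) * h0 + (8) * h2 + (-3766805/59334) * s1 + (-298794/9889) * s2 + (-279293/29667) * s3 + (-3556/1023) * s4 + (2225/348) * r0 + (84703/356004) * r2 + (-17/696) * r3 + (-410237/3560040) * rm1 + (1/870) * r4
    · linear_combination (30) * h0 + (-4) * h2 + (8247815/356004) * s1 + (778523/59334) * s2 + (396646/89001) * s3 + (11203/6138) * s4 + (-3211/4176) * r0 + (-127865/7476084) * r2 + (23/4176) * r3 + (6100349/149521680) * rm1 + (-43/146160) * r4
    · linear_combination (1) * h2 + (-1) * s2
    · linear_combination (-5) * h0 + (-90307/29667) * s1 + (-66367/49445) * s2 + (-98902/148335) * s3 + (-1343/5115) * s4 + (3/116) * r0 + (-55082/15575175) * r2 + (-1/4350) * r3 + (-174613/31150350) * rm1 + (1/60900) * r4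
    · linear_combination (1) * h0 + (170/341) * s1 + (84/341) * s2 + (40/341) * s3 + (16/341) * s4 + (1/1023) * r2 + (1/1023) * rm1
  · intro i hi
    interval_cases i
    · linear_combination (169/341) * s1 + (255/341) * s2 + (295/341) * s3 + (315/341) * s4 + (29/62) * s5 + (1) * r0 + (1/1023) * r2 + (-1/1023) * rm1
    · linear_combination (-2/9) * h2 + (-33196/5859) * s1 + (-600758/87885) * s2 + (-13799/1953) * s3 + (-625334/87885) * s4 + (-41725/11718) * s5 + (-2321/324) * r0 + (-22441/18455850) * r2 + (1/8100) * r3 + (22283/36911700) * rm1 + (-1/79380) * r4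
    · linear_combination (1) * h2
    · linear_combination (-16/9) * h2 + (2674825/23436) * s1 + (4496279/35154) * s2 + (500251/3906) * s3 + (4502459/35154) * s4 + (1503065/23436) * s5 + (168971/1296) * r0 + (684529/7382340) * r2 + (-53/6480) * r3 + (-120251/5905872) * rm1 + (157/317520) * r4
    · linear_combination (14/9) * h2 + (-197330/837) * s1 + (-660710/2511) * s2 + (-73582/279) * s3 + (-664397/2511) * s4 + (-222335/1674) * s5 + (-175703/648) * r0 + (-252821/1054620) * r2 + (31/1620) * r3 + (46919/1054620) * rm1 + (-5/4536) * r4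
    · linear_combination (1/2) * s5
    · linear_combination (-14/9) * h2 + (197330/837) * s1 + (660710/2511) * s2 + (73582/279) * s3 + (666908/2511) * s4 + (222335/1674) * s5 + (175703/648) * r0 + (252821/1054620) * r2 + (-31/1620) * r3 + (-46919/1054620) * rm1 + (5/4536) * r4
    · linear_combination (16/9) * h2 + (-2674825/23436) * s1 + (-4496279/35154) * s2 + (-496345/3906) * s3 + (-4502459/35154) * s4 + (-1503065/23436) * s5 + (-168971/1296) * r0 + (-684529/7382340) * r2 + (53/6480) * r3 + (120251/5905872) * rm1 + (-157/317520) * r4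
    · linear_combination (-1) * h2 + (1) * s2
    · linear_combination (2/9) * h2 + (39055/5859) * s1 + (600758/87885) * s2 + (13799/1953) * s3 + (625334/87885) * s4 + (41725/11718) * s5 + (2321/324) * r0 + (22441/18455850) * r2 + (-1/8100) * r3 + (-22283/36911700) * rm1 + (1/79380) * r4
    · linear_combination (-1) * s1 + (-1) * s2 + (-1) * s3 + (-1) * s4 + (-1/2) * s5 + (-1) * r0

section
variable {ε : Matrix (Fin 4) (Fin 4) ℤ → ℂ} {j : ℕ} {F : (Fin 2 → Fin 2 → ℂ) → (Fin (j + 1) → ℂ)}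
  {a : (Fin 3 → ℤ) → Fin (j + 1) → ℂ}

lemma a111_eq (hε : IsEps ε) (hF : IsSiegelCuspForm j 2 Sp4Z ε F) (ha : IsExp j F a) (i : Fin (j + 1)) :
    a ![1, 1, 1] i = (-1) ^ (i : ℕ) * a ![1, -1, 1] i := by
  have : a ![1, 1, 1] = fun i : Fin (j + 1) => (-1) ^ (i : ℕ) * a ![1, -1, 1] i := by
    apply PP_ext; intro x y
    rw [a_equiv hF ha (e := -1) (p := 1) (q := 0) (r := 0) (s := -1) (by norm_num) (by norm_num), eps_diag hε]
    have : NU 1 0 0 (-1) ![1, 1, 1] = ![1, -1, 1] := by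
      funext k; fin_cases k <;> simp [NU]
    rw [this]
    simp only [PP, one_mul]
    apply Finset.sum_congr rfl
    intro i _
    push_cast
    rw [show (-1 : ℂ) * (-1 * x - 0 * y) = x by ring, show (-1 : ℂ) * (-0 * x + 1 * y) = (-1) * y by ring, mul_pow]
    ring
  rw [this]

lemma b_even (hε : IsEps ε) (hF : IsSiegelCuspForm j 2 Sp4Z ε F) (ha : IsExp j F a) (i : Fin (j + 1)) (hi : (i : ℕ) = 0 ∨ (i : ℕ) = 2) :
    a ![1, -1, 1] i = 0 := by
  have h := diag_coef hε hF ha i (by omega)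
  rw [a111_eq hε hF ha] at h
  have : (-1 : ℂ) ^ (i : ℕ) = 1 := by rcases hi with h | h <;> rw [h] <;> norm_num
  rw [this] at h
  linear_combination h / 2

lemma b_swap (hF : IsSiegelCuspForm j 2 Sp4Z ε F) (ha : IsExp j F a) (i : Fin (j + 1)) :
    a ![1, -1, 1] i = ε (edU (-1) 0 1 1 0) * a ![1, -1, 1] (Fin.rev i) := by
  have : a ![1, -1, 1] = fun i => ε (edU (-1) 0 1 1 0) * a ![1, -1, 1] (Fin.rev i) := by
    apply PP_ext; intro x y
    rw [a_equiv hF ha (e := -1) (p := 0) (q := 1) (r := 1) (s := 0) (by norm_num) (by norm_num)]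
    have : NU 0 1 1 0 ![1, -1, 1] = ![1, -1, 1] := by
      funext k; fin_cases k <;> simp [NU]
    rw [this]
    simp only [PP, Finset.mul_sum]
    rw [← Equiv.sum_comp Fin.revPerm]
    apply Finset.sum_congr rfl
    intro i _
    push_cast
    rw [show (-1 : ℂ) * (0 * x - 1 * y) = y by ring, show (-1 : ℂ) * (-1 * x + 0 * y) = x by ring]
    simp only [Fin.revPerm_apply, Fin.val_rev]
    have := i.isLt
    rw [show j - (j + 1 - ((i:ℕ) + 1)) = i by omega, show j + 1 - ((i:ℕ) + 1) = j - i by omega]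
    ring
  exact congrFun this i

lemma b_rot (hε : IsEps ε) (hF : IsSiegelCuspForm j 2 Sp4Z ε F) (ha : IsExp j F a) (t : ℂ) :
    PP j (a ![1, -1, 1]) 1 t = PP j (a ![1, -1, 1]) (t - 1) (-1) := by
  rw [a_equiv hF ha (e := 1) (p := 0) (q := -1) (r := 1) (s := -1) (by norm_num) (by norm_num), eps_rot hε]
  have : NU 0 (-1) 1 (-1) ![1, -1, 1] = ![1, -1, 1] := by
    funext k; fin_cases k <;> simp [NU]
  rw [this]
  push_cast
  rw [show (1 : ℂ) * (-1 * 1 - -1 * t) = t - 1 by ring, show (1 : ℂ) * (-1 * 1 + 0 * t) = -1 by ring, one_mul]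

lemma b_zero (hε : IsEps ε) (hF : IsSiegelCuspForm j 2 Sp4Z ε F) (ha : IsExp j F a)
    (hj : j = 0 ∨ j = 2 ∨ j = 4 ∨ j = 6 ∨ j = 8 ∨ j = 10) : a ![1, -1, 1] = 0 := by
  set b := a ![1, -1, 1] with hb
  let c : ℕ → ℂ := fun i => if h : i < j + 1 then b ⟨i, h⟩ else 0
  have hc : ∀ i : Fin (j + 1), c i = b i := fun i => by simp only [c]; rw [dif_pos i.isLt]
  have hPP : ∀ x y : ℂ, PP j b x y = ∑ i ∈ Finset.range (j + 1), c i * (x ^ (j - i) * y ^ i) := by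
    intro x y
    rw [Finset.sum_range]
    simp only [PP, hc]
  have hσ := hε.1 _ (edU_mem (e := -1) (p := 0) (q := 1) (r := 1) (s := 0) (by norm_num) (by norm_num))
  have h0 : c 0 = 0 := by
    rw [show c 0 = b 0 from hc 0]; exact b_even hε hF ha 0 (by simp)
  have h2 : 2 ≤ j → c 2 = 0 := by
    intro h
    rw [show c 2 = b ⟨2, by omega⟩ from hc ⟨2, by omega⟩]; exact b_even hε hF ha _ (by simp)
  have hs : ∀ i ≤ j, c i = ε (edU (-1) 0 1 1 0) * c (j - i) := by
    intro i hi
    rw [show c i = b ⟨i, by omega⟩ from hc ⟨i, by omega⟩, hb, b_swap hF ha, ← hb, ← hc]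
    congr 2
    simp [Fin.val_rev]
  have hr : ∀ t : ℂ, ∑ i ∈ Finset.range (j + 1), c i * (1 ^ (j - i) * t ^ i) = ∑ i ∈ Finset.range (j + 1), c i * ((t - 1) ^ (j - i) * (-1) ^ i) := by
    intro t
    rw [← hPP, ← hPP]; exact b_rot hε hF ha t
  have key : ∀ i ≤ j, c i = 0 := by
    clear_value c b
    rcases hj with rfl | rfl | rfl | rfl | rfl | rfl
    · exact la0 c _ hσ h0 h2 hs hr
    · exact la2 c _ hσ h0 h2 hs hr
    · exact la4 c _ hσ h0 h2 hs hr
    · exact la6 c _ hσ h0 h2 hs hr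
    · exact la8 c _ hσ h0 h2 hs hr
    · exact la10 c _ hσ h0 h2 hs hr
  funext i
  rw [← hc]
  exact key i (by omega)

lemma supp (hε : IsEps ε) (hF : IsSiegelCuspForm j 2 Sp4Z ε F) (ha : IsExp j F a)
    (hj : j = 0 ∨ j = 2 ∨ j = 4 ∨ j = 6 ∨ j = 8 ∨ j = 10) (n : Fin 3 → ℤ) (hn : a n ≠ 0) :
    0 < n 0 ∧ 0 < n 2 ∧ n 1 ^ 2 < 4 * n 0 * n 2 ∧ 6 + |n 1| ≤ 2 * (n 0 + n 2) := by
  obtain ⟨h1, h2, h3, h4, h5, h6⟩ := koecher hε hF ha n hn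
  refine ⟨h4, h5, h6, ?_⟩
  have bm : a ![1, -1, 1] = 0 := b_zero hε hF ha hj
  have bp : a ![1, 1, 1] = 0 := by
    funext i; rw [a111_eq hε hF ha, bm]; simp
  have e3 : ∀ p q r : ℤ, n 0 = p → n 1 = q → n 2 = r → n = ![p, q, r] := by
    intro p q r h h' h''
    funext k; fin_cases k <;> simp [h, h', h'']
  have step : ∀ p q r s : ℤ, p * s - q * r = 1 → NU p q r s n ≠ ![1, 1, 1] ∧ NU p q r s n ≠ ![1, -1, 1] := by
    intro p q r s h
    constructor
    · intro h'; exact hn (a_zero_of hF ha (e := 1) (by norm_num) h n (by rw [h', bp]))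
    · intro h'; exact hn (a_zero_of hF ha (e := 1) (by norm_num) h n (by rw [h', bm]))
  obtain ⟨k1, hk1⟩ := h1
  obtain ⟨k2, hk2⟩ := h2
  obtain ⟨k3, hk3⟩ := h3
  by_cases hbig : 6 ≤ n 0 + n 2
  · have : |n 1| ≤ n 0 + n 2 := by
      apply abs_le_of_sq_le_sq _ (by omega)
      nlinarith [sq_nonneg (n 0 - n 2)]
    omega
  · have hlt : |n 1| < 4 := by
      apply abs_lt_of_sq_lt_sq _ (by norm_num)
      have : n 0 * n 2 ≤ 3 := by
        have : n 0 = 1 ∨ n 2 = 1 := by omega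
        rcases this with h | h <;> rw [h] <;> omega
      nlinarith
    have c1 : n 1 = 1 ∨ n 1 = -1 ∨ n 1 = 3 ∨ n 1 = -3 := by
      rw [abs_lt] at hlt; omega
    have c0 : (n 0 = 1 ∧ n 2 = 1) ∨ (n 0 = 1 ∧ n 2 = 3) ∨ (n 0 = 3 ∧ n 2 = 1) := by omega
    rcases c0 with ⟨u, v⟩ | ⟨u, v⟩ | ⟨u, v⟩ <;> rcases c1 with w | w | w | w <;> rw [u, v, w] at h6 ⊢ <;> try norm_num at h6
    all_goals first | (norm_num; done) | skip
    · exact absurd (e3 _ _ _ u w v) (fun h => hn (by rw [h, bp]))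
    · exact absurd (e3 _ _ _ u w v) (fun h => hn (by rw [h, bm]))
    · exact absurd (by funext k; fin_cases k <;> simp [NU, u, v, w]) (step 1 (-1) 0 1 (by norm_num)).1
    · exact absurd (by funext k; fin_cases k <;> simp [NU, u, v, w]) (step 1 1 0 1 (by norm_num)).2
    · exact absurd (by funext k; fin_cases k <;> simp [NU, u, v, w]) (step 1 0 (-1) 1 (by norm_num)).1
    · exact absurd (by funext k; fin_cases k <;> simp [NU, u, v, w]) (step 1 0 1 1 (by norm_num)).2

lemma dot_lower (n : Fin 3 → ℤ) (h0 : 0 < n 0) (h2 : 0 < n 2) (h6 : 6 + |n 1| ≤ 2 * (n 0 + n 2))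
    (y : Fin 3 → ℝ) (hy0 : 0 < y 0) (hy1 : 2 * |y 1| ≤ y 0) (hy2 : y 0 ≤ y 2) : 3 * y 0 ≤ dotR n y := by
  have e : dotR n y = n 0 * y 0 + n 1 * y 1 + n 2 * y 2 := by simp [dotR, Fin.sum_univ_three]
  have a1 : (6:ℝ) + |(n 1 : ℝ)| ≤ 2 * (n 0 + n 2) := by exact_mod_cast h6
  have a2 : -(|(n 1:ℝ)| * |y 1|) ≤ n 1 * y 1 := by rw [← abs_mul]; exact neg_abs_le _
  have a3 : |(n 1:ℝ)| * |y 1| ≤ |(n 1:ℝ)| * (y 0 / 2) := mul_le_mul_of_nonneg_left (by linarith) (abs_nonneg _)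
  have a4 : (n 2:ℝ) * y 0 ≤ n 2 * y 2 := mul_le_mul_of_nonneg_left hy2 (by exact_mod_cast h2.le)
  nlinarith

lemma dot_lower2 (n : Fin 3 → ℤ) (h0 : 0 < n 0) (h2 : 0 < n 2) (h6 : n 1 ^ 2 < 4 * n 0 * n 2)
    (y : Fin 3 → ℝ) (hy0 : 0 < y 0) (hy1 : 2 * |y 1| ≤ y 0) (hy2 : y 0 ≤ y 2) : (n 0 * y 0 + n 2 * y 2) / 2 ≤ dotR n y := by
  have e : dotR n y = n 0 * y 0 + n 1 * y 1 + n 2 * y 2 := by simp [dotR, Fin.sum_univ_three]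
  have a0 : (0:ℝ) < n 0 := by exact_mod_cast h0
  have a2 : (0:ℝ) < n 2 := by exact_mod_cast h2
  have a6 : (n 1:ℝ) ^ 2 ≤ 4 * n 0 * n 2 := by exact_mod_cast h6.le
  have k : |(n 1 : ℝ) * y 1| ≤ (n 0 * y 0 + n 2 * y 2) / 2 := by
    have hy2' : 0 < y 2 := by linarith
    apply abs_le_of_sq_le_sq _ (by positivity)
    have b1 : y 1 ^ 2 ≤ y 0 ^ 2 / 4 := by
      have := sq_abs (y 1)
      nlinarith [abs_nonneg (y 1)]
    have b2 : (n 1:ℝ) ^ 2 * y 1 ^ 2 ≤ (4 * n 0 * n 2) * (y 0 ^ 2 / 4) := mul_le_mul a6 b1 (sq_nonneg _) (by positivity)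
    have b3 : (n 0:ℝ) * n 2 * (y 0 * y 0) ≤ n 0 * n 2 * (y 0 * y 2) := by gcongr
    nlinarith [sq_nonneg (n 0 * y 0 - n 2 * y 2)]
  have := neg_abs_le ((n 1 : ℝ) * y 1)
  rw [e]; linarith
end

section
variable {ε : Matrix (Fin 4) (Fin 4) ℤ → ℂ} {j : ℕ} {F : (Fin 2 → Fin 2 → ℂ) → (Fin (j + 1) → ℂ)}
  {a : (Fin 3 → ℤ) → Fin (j + 1) → ℂ}

def Phi (j : ℕ) (h : ℕ) (F : (Fin 2 → Fin 2 → ℂ) → (Fin (j + 1) → ℂ)) (τ : Fin 2 → Fin 2 → ℂ) (x y : ℂ) : ℝ :=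
  ‖PP j (F τ) x y‖ * dY τ ^ (1 + h) / hY τ x y ^ h

lemma phi_inv (hε : IsEps ε) (hF : IsSiegelCuspForm j 2 Sp4Z ε F) (h : ℕ) {γ} (hγ : γ ∈ Sp4Z) {τ} (hτ : τ ∈ H2)
    (x y : ℂ) : Phi j h F (moeb γ τ) x y =
      Phi j h F τ (den γ τ 0 0 * x + den γ τ 1 0 * y) (den γ τ 0 1 * x + den γ τ 1 1 * y) := by
  have hD : 0 < normSq (den γ τ).det := normSq_pos.2 (den_det_ne hγ hτ)
  have h1 := moeb_dY hγ hτ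
  have h2 := moeb_hY hγ hτ x y
  have h3 : ‖PP j (F (moeb γ τ)) x y‖ = normSq (den γ τ).det *
      ‖PP j (F τ) (den γ τ 0 0 * x + den γ τ 1 0 * y) (den γ τ 0 1 * x + den γ τ 1 1 * y)‖ := by
    rw [hF.2.1 γ hγ τ hτ, PP_smul, wt, PP_smul, PP_symAct, norm_mul, norm_mul]
    have e1 : ‖ε γ‖ = 1 := by rcases hε.1 γ hγ with h | h <;> rw [h] <;> simp
    rw [e1, one_mul, norm_zpow, normSq_eq_norm_sq]
    norm_cast
  unfold Phi
  rw [← h2, ← h1, h3]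
  generalize normSq (den γ τ).det = D at *
  rw [mul_pow, mul_pow]
  by_cases hh : hY (moeb γ τ) x y ^ h = 0
  · simp [hh]
  · field_simp
    ring

lemma norm_PP_le (h : ℕ) (hj : j = 2 * h) (v : Fin (j + 1) → ℂ) (x y : ℂ) :
    ‖PP j v x y‖ ≤ (∑ i, ‖v i‖) * (normSq x + normSq y) ^ h := by
  unfold PP
  rw [Finset.sum_mul]
  refine (norm_sum_le _ _).trans (Finset.sum_le_sum fun i _ => ?_)
  rw [norm_mul, norm_mul, norm_pow, norm_pow]
  apply mul_le_mul_of_nonneg_left _ (norm_nonneg _)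
  have hN : 0 ≤ normSq x + normSq y := add_nonneg (normSq_nonneg _) (normSq_nonneg _)
  set s := Real.sqrt (normSq x + normSq y) with hs
  have hx : ‖x‖ ≤ s := Real.le_sqrt_of_sq_le (by rw [← normSq_eq_norm_sq]; linarith [normSq_nonneg y])
  have hy : ‖y‖ ≤ s := Real.le_sqrt_of_sq_le (by rw [← normSq_eq_norm_sq]; linarith [normSq_nonneg x])
  have e : (normSq x + normSq y) ^ h = s ^ (j - (i:ℕ)) * s ^ (i:ℕ) := by
    rw [← pow_add, show j - (i:ℕ) + i = 2 * h by omega, pow_mul, hs, Real.sq_sqrt hN]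
  rw [e]
  gcongr

lemma phi_le (h : ℕ) (hj : j = 2 * h) {τ} (hτ : τ ∈ H2) {x y : ℂ} (hxy : x ≠ 0 ∨ y ≠ 0) :
    Phi j h F τ x y ≤ (∑ i, ‖F τ i‖) * tY τ ^ (h + 2) := by
  have hh := hY_pos hτ hxy
  have hd := dY_pos hτ
  have ht := tY_pos hτ
  have hl := hY_lower τ x y
  unfold Phi
  rw [div_le_iff₀ (by positivity)]
  have h1 := norm_PP_le h hj (F τ) x y
  have hN : 0 ≤ normSq x + normSq y := add_nonneg (normSq_nonneg _) (normSq_nonneg _)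
  have hS : 0 ≤ ∑ i, ‖F τ i‖ := Finset.sum_nonneg fun i _ => norm_nonneg _
  have hdt : dY τ ≤ tY τ ^ 2 := by
    have := y1_pos hτ; have := y2_pos hτ
    unfold dY tY; nlinarith [sq_nonneg (τ 0 1).im]
  calc ‖PP j (F τ) x y‖ * dY τ ^ (1 + h) ≤ ((∑ i, ‖F τ i‖) * (normSq x + normSq y) ^ h) * dY τ ^ (1 + h) := by gcongr
    _ = (∑ i, ‖F τ i‖) * (dY τ * (dY τ * (normSq x + normSq y)) ^ h) := by rw [mul_pow]; ring
    _ ≤ (∑ i, ‖F τ i‖) * (tY τ ^ 2 * (tY τ * hY τ x y) ^ h) := by gcongr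
    _ = _ := by rw [mul_pow]; ring

lemma F_RR (hε : IsEps ε) (hF : IsSiegelCuspForm j 2 Sp4Z ε F) (ha : IsExp j F a) (i : Fin (j + 1)) :
    ∃ C : ℝ, 0 ≤ C ∧ ∀ τ ∈ RR, ‖F τ i‖ ≤ C * Real.exp (-(Real.pi * (tY τ / 2))) := by
  have hO : (![I / 4, 0, I / 4] : Fin 3 → ℂ) ∈ Om := diag_Om (by simp) (by simp)
  have h1 := (ha i _ hO).1
  refine ⟨(∑' n, ‖a n i‖ * Real.exp (-(Real.pi * dotR n fun k => ((![I / 4, 0, I / 4] : Fin 3 → ℂ) k).im))) * Real.exp (Real.pi / 2),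
    mul_nonneg (tsum_nonneg fun n => by positivity) (by positivity), ?_⟩
  rintro τ ⟨hτ, hr1, hr2, hr3⟩
  have hz : ![τ 0 0, τ 0 1, τ 1 1] ∈ Om := by rw [← TT_mem, TT_surj hτ]; exact hτ
  have h2 := (ha i _ hz).2
  rw [TT_surj hτ] at h2
  rw [← h2.tsum_eq, mul_assoc, ← tsum_mul_right]
  apply tsum_of_norm_bounded (h1.mul_right _).hasSum
  intro n
  rw [norm_mul, exp_norm, mul_assoc, ← Real.exp_add, ← Real.exp_add]
  by_cases hn : a n = 0
  · simp [hn]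
  obtain ⟨-, -, -, h0, h3, h4⟩ := koecher hε hF ha n hn
  apply mul_le_mul_of_nonneg_left _ (norm_nonneg _)
  apply Real.exp_le_exp.2
  have hy0 : 0 < (τ 0 0).im := y1_pos hτ
  have hd := dot_lower2 n h0 h3 h4 (fun k => ((![τ 0 0, τ 0 1, τ 1 1] : Fin 3 → ℂ) k).im) (by simpa) (by simpa) (by simpa)
  have e : dotR n (fun k => ((![I / 4, 0, I / 4] : Fin 3 → ℂ) k).im) = (n 0 + n 2) / 4 := by
    simp [dotR, Fin.sum_univ_three]; ring
  rw [e]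
  have h3' : (1:ℝ) ≤ n 2 := by exact_mod_cast h3
  have h0' : (1:ℝ) ≤ n 0 := by exact_mod_cast h0
  have hd' : (n 0 * (τ 0 0).im + n 2 * (τ 1 1).im) / 2 ≤ dotR n (fun k => ((![τ 0 0, τ 0 1, τ 1 1] : Fin 3 → ℂ) k).im) := hd
  have hr4 : (0.86:ℝ) ≤ (τ 1 1).im := hr3.trans hr2
  have key : ((n 0 : ℝ) + n 2) / 4 - 1 / 2 + tY τ / 2 ≤ dotR n (fun k => ((![τ 0 0, τ 0 1, τ 1 1] : Fin 3 → ℂ) k).im) := by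
    refine le_trans ?_ hd'
    unfold tY
    nlinarith [mul_nonneg (sub_nonneg.2 h0') (show (0:ℝ) ≤ (τ 0 0).im - 1 / 2 by norm_num at hr3 ⊢; linarith),
      mul_nonneg (sub_nonneg.2 h3') (show (0:ℝ) ≤ (τ 1 1).im - 1 / 2 by norm_num at hr4 ⊢; linarith)]
  nlinarith [mul_le_mul_of_nonneg_left key Real.pi_pos.le]

lemma phi_bdd (hε : IsEps ε) (hF : IsSiegelCuspForm j 2 Sp4Z ε F) (h : ℕ) (hj : j = 2 * h) :
    ∃ B : ℝ, ∀ τ ∈ RR, ∀ x y : ℂ, (x ≠ 0 ∨ y ≠ 0) → Phi j h F τ x y ≤ B := by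
  obtain ⟨a, ha⟩ := exists_exp hε hF
  choose C hC hb using F_RR hε hF ha
  refine ⟨(∑ i, C i) * ((h + 2).factorial : ℝ), fun τ hτ x y hxy => ?_⟩
  refine (phi_le h hj hτ.1 hxy).trans ?_
  have ht := tY_pos hτ.1
  have h1 : ∑ i, ‖F τ i‖ ≤ (∑ i, C i) * Real.exp (-(Real.pi * (tY τ / 2))) := by
    rw [Finset.sum_mul]; exact Finset.sum_le_sum fun i _ => hb i τ hτ
  have hp := Real.pi_gt_three
  have h2 : tY τ ^ (h + 2) ≤ (h + 2).factorial * Real.exp (Real.pi * (tY τ / 2)) := by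
    have h3 : tY τ ^ (h + 2) ≤ (Real.pi * (tY τ / 2)) ^ (h + 2) := by
      gcongr; nlinarith
    have h4 := Real.pow_div_factorial_le_exp (Real.pi * (tY τ / 2)) (by positivity) (h + 2)
    rw [div_le_iff₀ (by positivity)] at h4
    linarith
  have hCS : 0 ≤ ∑ i, C i := Finset.sum_nonneg fun i _ => hC i
  calc _ ≤ ((∑ i, C i) * Real.exp (-(Real.pi * (tY τ / 2)))) * ((h + 2).factorial * Real.exp (Real.pi * (tY τ / 2))) := by gcongr
    _ = (∑ i, C i) * (h + 2).factorial * (Real.exp (-(Real.pi * (tY τ / 2))) * Real.exp (Real.pi * (tY τ / 2))) := by ring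
    _ = _ := by rw [← Real.exp_add]; simp

lemma phi_red (hε : IsEps ε) (hF : IsSiegelCuspForm j 2 Sp4Z ε F) (h : ℕ) {τ} (hτ : τ ∈ H2) {x y : ℂ} (hxy : x ≠ 0 ∨ y ≠ 0) :
    ∃ τ' ∈ RR, ∃ x' y' : ℂ, (x' ≠ 0 ∨ y' ≠ 0) ∧ Phi j h F τ' x' y' = Phi j h F τ x y := by
  obtain ⟨γ, hγ, hR⟩ := exists_red hτ
  have hdet := den_det_ne hγ hτ
  set m := den γ τ with hm
  rw [det_fin_two] at hdet
  set D := m 0 0 * m 1 1 - m 0 1 * m 1 0 with hDdef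
  refine ⟨moeb γ τ, hR, (m 1 1 * x - m 1 0 * y) / D, (m 0 0 * y - m 0 1 * x) / D, ?_, ?_⟩
  · by_contra hc
    push Not at hc
    obtain ⟨c1, c2⟩ := hc
    rw [div_eq_zero_iff] at c1 c2
    replace c1 := c1.resolve_right hdet
    replace c2 := c2.resolve_right hdet
    have ex : D * x = 0 := by rw [hDdef]; linear_combination (m 0 0) * c1 + (m 1 0) * c2
    have ey : D * y = 0 := by rw [hDdef]; linear_combination (m 0 1) * c1 + (m 1 1) * c2
    rcases hxy with h | h
    · exact h ((mul_eq_zero.1 ex).resolve_left hdet)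
    · exact h ((mul_eq_zero.1 ey).resolve_left hdet)
  · rw [phi_inv hε hF h hγ hτ, ← hm]
    congr 1
    · field_simp; rw [hDdef]; ring
    · field_simp; rw [hDdef]; ring
end

section
variable {ε : Matrix (Fin 4) (Fin 4) ℤ → ℂ} {j : ℕ} {F : (Fin 2 → Fin 2 → ℂ) → (Fin (j + 1) → ℂ)}
  {a : (Fin 3 → ℤ) → Fin (j + 1) → ℂ}

/-- the affine line `X + w Y` through a point of the half space -/
def lineZ (z : Fin 3 → ℂ) (w : ℂ) : Fin 3 → ℂ := fun i => ((z i).re : ℂ) + w * ((z i).im : ℂ)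

lemma lineZ_im (z : Fin 3 → ℂ) (w : ℂ) (i : Fin 3) : (lineZ z w i).im = w.im * (z i).im := by
  simp [lineZ]

lemma lineZ_I (z : Fin 3 → ℂ) : lineZ z I = z := by
  funext i; simp only [lineZ]; rw [mul_comm]; exact re_add_im _

lemma lineZ_Om {z : Fin 3 → ℂ} (hz : z ∈ Om) {w : ℂ} (hw : 0 < w.im) : lineZ z w ∈ Om := by
  have hz' : 0 < (z 0).im ∧ (z 1).im ^ 2 < (z 0).im * (z 2).im := hz
  show 0 < (lineZ z w 0).im ∧ (lineZ z w 1).im ^ 2 < (lineZ z w 0).im * (lineZ z w 2).im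
  simp only [lineZ_im]
  refine ⟨mul_pos hw hz'.1, ?_⟩
  have := mul_pos (mul_pos hw hw) (sub_pos.2 hz'.2)
  nlinarith

lemma line_hY (z : Fin 3 → ℂ) (w x y : ℂ) : hY (TT (lineZ z w)) x y = w.im * hY (TT z) x y := by
  simp only [hY, TT]
  simp [lineZ_im]; ring

lemma line_dY (z : Fin 3 → ℂ) (w : ℂ) : dY (TT (lineZ z w)) = w.im ^ 2 * dY (TT z) := by
  simp only [dY, TT]
  simp [lineZ_im]; ring

lemma line_dot (z : Fin 3 → ℂ) (w : ℂ) (n : Fin 3 → ℤ) :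
    dotR n (fun i => (lineZ z w i).im) = w.im * dotR n fun i => (z i).im := by
  simp only [dotR, lineZ_im, Finset.mul_sum]
  exact Finset.sum_congr rfl fun i _ => by ring

lemma num_ineq : 1 ≤ (0.95:ℝ) * 0.9 ^ 7 * Real.exp (0.258 * Real.pi) := by
  have h1 : (0.81:ℝ) ≤ 0.258 * Real.pi := by nlinarith [Real.pi_gt_d6]
  have h2 : Real.exp 0.81 ≤ Real.exp (0.258 * Real.pi) := Real.exp_le_exp.2 h1
  have h3 := Real.quadratic_le_exp_of_nonneg (x := 0.405) (by norm_num)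
  have h4 : Real.exp 0.81 = Real.exp 0.405 * Real.exp 0.405 := by rw [← Real.exp_add]; norm_num
  have h5 : (1.487:ℝ) ≤ Real.exp 0.405 := by norm_num at h3 ⊢; linarith
  have h6 : (1.487:ℝ) * 1.487 ≤ Real.exp 0.405 * Real.exp 0.405 := mul_le_mul h5 h5 (by norm_num) (by positivity)
  have h7 : (2.2111:ℝ) ≤ Real.exp (0.258 * Real.pi) := by rw [h4] at h2; norm_num at h6 h2 ⊢; linarith
  have h8 : (0.95:ℝ) * 0.9 ^ 7 * 2.2111 ≤ 0.95 * 0.9 ^ 7 * Real.exp (0.258 * Real.pi) := mul_le_mul_of_nonneg_left h7 (by norm_num)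
  exact le_trans (by norm_num) h8

lemma line_bound (hε : IsEps ε) (hF : IsSiegelCuspForm j 2 Sp4Z ε F)
    (hj : j = 0 ∨ j = 2 ∨ j = 4 ∨ j = 6 ∨ j = 8 ∨ j = 10) {z : Fin 3 → ℂ} (hz : z ∈ Om)
    (hy1 : 2 * |(z 1).im| ≤ (z 0).im) (hy2 : (z 0).im ≤ (z 2).im) (hy3 : 0.86 ≤ (z 0).im)
    (x y : ℂ) (C : ℝ) (hC : ∀ w : ℂ, w.im = 0.9 → ‖PP j (F (TT (lineZ z w))) x y‖ ≤ C) :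
    ‖PP j (F (TT z)) x y‖ * Real.exp (0.258 * Real.pi) ≤ C := by
  obtain ⟨a, ha⟩ := exists_exp hε hF
  let f : ℂ → ℂ := fun w => PP j (F (TT (lineZ z w))) x y
  have hf : DifferentiableOn ℂ f {w | 0 < w.im} := by
    have h1 : DifferentiableOn ℂ (fun w : ℂ => F (TT (lineZ z w))) {w | 0 < w.im} := by
      refine hF.1.comp ?_ (fun w hw => (TT_mem _).2 (lineZ_Om hz hw))
      apply Differentiable.differentiableOn
      rw [differentiable_pi]; intro k
      rw [differentiable_pi]; intro l
      fin_cases k <;> fin_cases l <;> simp [TT, lineZ] <;> fun_prop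
    simp only [f, PP]
    apply DifferentiableOn.fun_sum
    intro i _
    exact ((differentiableOn_pi.1 h1) i).mul_const _
  let G : ℂ → ℂ := fun ζ => f (I * (ζ + 0.9)) * cexp (2.58 * Real.pi * (ζ + 0.9))
  have him : ∀ ζ : ℂ, (I * (ζ + 0.9)).im = ζ.re + 0.9 := by
    intro ζ
    rw [show (0.9:ℂ) = ((0.9:ℝ):ℂ) by push_cast; norm_num]
    simp
  have hexpn : ∀ ζ : ℂ, ‖cexp (2.58 * Real.pi * (ζ + 0.9))‖ = Real.exp (2.58 * Real.pi * (ζ.re + 0.9)) := by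
    intro ζ
    rw [Complex.norm_exp]
    rw [show (0.9:ℂ) = ((0.9:ℝ):ℂ) by push_cast; norm_num, show (2.58:ℂ) = ((2.58:ℝ):ℂ) by push_cast; norm_num, ← Complex.ofReal_mul, Complex.re_ofReal_mul]
    simp
  have hG : DifferentiableOn ℂ G {ζ | -0.9 < ζ.re} := by
    apply DifferentiableOn.mul
    · refine hf.comp (by fun_prop) ?_
      intro ζ hζ
      have hζ' : -0.9 < ζ.re := hζ
      show 0 < (I * (ζ + 0.9)).im
      rw [him]; linarith
    · fun_prop
  have hcl : DiffContOnCl ℂ G {ζ | 0 < ζ.re} := by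
    apply DifferentiableOn.diffContOnCl
    apply hG.mono
    rw [Complex.closure_setOf_lt_re]
    intro ζ hζ
    have : (0:ℝ) ≤ ζ.re := hζ
    show -0.9 < ζ.re
    norm_num; linarith
  have h09 : (0.9 * I : ℂ).im = 0.9 := by
    rw [show (0.9:ℂ) = ((0.9:ℝ):ℂ) by push_cast; norm_num]; simp
  have hsum := PP_summable ha x y (lineZ_Om hz (w := 0.9 * I) (by rw [h09]; norm_num))
  simp only [line_dot, h09] at hsum
  have hy0 : 0 < (z 0).im := by norm_num at hy3; linarith
  obtain ⟨B, hB⟩ : ∃ B : ℝ, ∀ ζ : ℂ, 0 ≤ ζ.re → ‖G ζ‖ ≤ B := by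
    refine ⟨(∑' n, ‖PP j (a n) x y‖ * Real.exp (-(Real.pi * (0.9 * dotR n fun i => (z i).im)))) * Real.exp (2.58 * Real.pi * 0.9), ?_⟩
    intro ζ hζ
    have hw : 0 < (I * (ζ + 0.9)).im := by rw [him]; linarith
    have h1 := PP_hasSum ha x y (lineZ_Om hz hw)
    simp only [G, f]
    rw [norm_mul, hexpn]
    have h2 : ‖PP j (F (TT (lineZ z (I * (ζ + 0.9))))) x y‖ ≤ (∑' n, ‖PP j (a n) x y‖ * Real.exp (-(Real.pi * (0.9 * dotR n fun i => (z i).im)))) * Real.exp (-(2.58 * Real.pi * ζ.re)) := by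
      rw [← h1.tsum_eq, ← tsum_mul_right]
      apply tsum_of_norm_bounded (hsum.mul_right _).hasSum
      intro n
      rw [norm_mul, exp_norm, line_dot, him, mul_assoc, ← Real.exp_add]
      by_cases hn : a n = 0
      · simp [hn, PP_zero]
      obtain ⟨s1, s2, s3, s4⟩ := supp hε hF ha hj n hn
      have hd := dot_lower n s1 s2 s4 (fun i => (z i).im) hy0 hy1 hy2
      have hd2 : 2.58 ≤ dotR n fun i => (z i).im := by
        refine le_trans ?_ hd
        show 2.58 ≤ 3 * (z 0).im
        norm_num at hy3 ⊢; linarith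
      apply mul_le_mul_of_nonneg_left _ (norm_nonneg _)
      apply Real.exp_le_exp.2
      nlinarith [mul_nonneg (mul_nonneg Real.pi_pos.le hζ) (sub_nonneg.2 hd2)]
    calc _ ≤ _ := mul_le_mul_of_nonneg_right h2 (Real.exp_pos _).le
      _ = _ := by
        rw [mul_assoc, ← Real.exp_add]; congr 2; ring
  have hmain := PhragmenLindelof.right_half_plane_of_bounded_on_real (f := G)
    (C := C * Real.exp (2.58 * Real.pi * 0.9)) (z := 0.1) hcl ?_ ?_ ?_ ?_
  · have e1 : I * ((0.1:ℂ) + 0.9) = I := by norm_num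
    simp only [G] at hmain
    rw [norm_mul, hexpn, e1] at hmain
    simp only [f, lineZ_I] at hmain
    have e2 : (0.1:ℂ).re = 0.1 := by
      rw [show (0.1:ℂ) = ((0.1:ℝ):ℂ) by push_cast; norm_num]; simp
    rw [e2] at hmain
    have e3 : Real.exp (2.58 * Real.pi * (0.1 + 0.9)) = Real.exp (0.258 * Real.pi) * Real.exp (2.58 * Real.pi * 0.9) := by
      rw [← Real.exp_add]; congr 1; ring
    rw [e3, ← mul_assoc] at hmain
    exact le_of_mul_le_mul_right hmain (Real.exp_pos _)
  · refine ⟨0, by norm_num, 0, ?_⟩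
    apply Asymptotics.IsBigO.of_bound B
    have : ∀ᶠ ζ : ℂ in 𝓟 {ζ : ℂ | 0 < ζ.re}, ‖G ζ‖ ≤ B * ‖Real.exp (0 * ‖ζ‖ ^ (0:ℝ))‖ := by
      rw [eventually_principal]
      intro ζ hζ
      simpa using hB ζ (le_of_lt hζ)
    exact this.filter_mono inf_le_right
  · refine ⟨B, ?_⟩
    rw [eventually_map]
    filter_upwards [eventually_ge_atTop 0] with t ht
    exact hB t (by simpa)
  · intro t
    simp only [G]
    rw [norm_mul, hexpn]
    have : ((t:ℂ) * I).re = 0 := by simp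
    rw [this, zero_add]
    apply mul_le_mul_of_nonneg_right _ (Real.exp_pos _).le
    apply hC
    rw [him, this, zero_add]
  · rw [show (0.1:ℂ) = ((0.1:ℝ):ℂ) by push_cast; norm_num, Complex.ofReal_re]; norm_num

lemma F_zero (hε : IsEps ε) (hF : IsSiegelCuspForm j 2 Sp4Z ε F)
    (hj : j = 0 ∨ j = 2 ∨ j = 4 ∨ j = 6 ∨ j = 8 ∨ j = 10) {τ} (hτ : τ ∈ H2) : F τ = 0 := by
  obtain ⟨h, hh, h5⟩ : ∃ h : ℕ, j = 2 * h ∧ h ≤ 5 := ⟨j / 2, by omega, by omega⟩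
  obtain ⟨B, hB⟩ := phi_bdd hε hF h hh
  let S : Set ℝ := {r | ∃ τ ∈ H2, ∃ x y : ℂ, (x ≠ 0 ∨ y ≠ 0) ∧ Phi j h F τ x y = r}
  have hbdd : BddAbove S := by
    refine ⟨B, ?_⟩
    rintro r ⟨τ, hτ, x, y, hxy, rfl⟩
    obtain ⟨τ', hτ', x', y', hxy', he⟩ := phi_red hε hF h hτ hxy
    rw [← he]; exact hB τ' hτ' x' y' hxy'
  have hne : S.Nonempty := ⟨_, τ, hτ, 1, 0, Or.inl one_ne_zero, rfl⟩
  set M := sSup S with hM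
  have hle : ∀ τ ∈ H2, ∀ x y : ℂ, (x ≠ 0 ∨ y ≠ 0) → Phi j h F τ x y ≤ M :=
    fun τ hτ x y hxy => le_csSup hbdd ⟨τ, hτ, x, y, hxy, rfl⟩
  have hM0 : M ≤ 0 := by
    by_contra hpos
    push Not at hpos
    obtain ⟨r, ⟨τ1, hτ1, x1, y1, hxy1, rfl⟩, hlt⟩ := exists_lt_of_lt_csSup hne (show 0.95 * M < sSup S by rw [← hM]; norm_num; linarith)
    obtain ⟨τ0, hτ0, x, y, hxy, he⟩ := phi_red hε hF h hτ1 hxy1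
    rw [← he] at hlt
    obtain ⟨hH, hy1, hy2, hy3⟩ := hτ0
    set z : Fin 3 → ℂ := ![τ0 0 0, τ0 0 1, τ0 1 1] with hz
    have hT : TT z = τ0 := TT_surj hH
    have hzO : z ∈ Om := by rw [← TT_mem, hT]; exact hH
    have hh0 := hY_pos hH hxy
    have hd0 := dY_pos hH
    have key := line_bound hε hF hj hzO hy1 hy2 hy3 x y (M * hY τ0 x y ^ h / dY τ0 ^ (1 + h) / 0.9 ^ 7) ?_
    · rw [hT] at key
      unfold Phi at hlt
      rw [lt_div_iff₀ (by positivity)] at hlt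
      rw [div_div, le_div_iff₀ (by positivity)] at key
      have hn := num_ineq
      have hK : 0 < M * hY τ0 x y ^ h := by positivity
      have hE : 0 < Real.exp (0.258 * Real.pi) := Real.exp_pos _
      have : (0.95 * M * hY τ0 x y ^ h) * (Real.exp (0.258 * Real.pi) * 0.9 ^ 7) < (‖PP j (F τ0) x y‖ * dY τ0 ^ (1 + h)) * (Real.exp (0.258 * Real.pi) * 0.9 ^ 7) :=
        mul_lt_mul_of_pos_right hlt (by positivity)
      nlinarith [mul_le_mul_of_nonneg_left hn hK.le]
    · intro w hw
      have h1 := hle (TT (lineZ z w)) ((TT_mem _).2 (lineZ_Om hzO (by rw [hw]; norm_num))) x y hxy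
      unfold Phi at h1
      rw [line_hY, line_dY, hw, hT, div_le_iff₀ (by positivity)] at h1
      rw [div_div, le_div_iff₀ (by positivity)]
      set N := ‖PP j (F (TT (lineZ z w))) x y‖ with hN
      have hNn : 0 ≤ N := norm_nonneg _
      have e1 : (0.9 ^ 2 * dY τ0) ^ (1 + h) = 0.9 ^ h * (0.9 ^ (2 + h) * dY τ0 ^ (1 + h)) := by
        rw [mul_pow, ← pow_mul, ← mul_assoc, ← pow_add]; congr 2; ring
      rw [e1, mul_pow] at h1
      have h2 : N * (0.9 ^ (2 + h) * dY τ0 ^ (1 + h)) ≤ M * hY τ0 x y ^ h := by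
        have : (0.9:ℝ) ^ h * (N * (0.9 ^ (2 + h) * dY τ0 ^ (1 + h))) ≤ 0.9 ^ h * (M * hY τ0 x y ^ h) := by linarith
        exact le_of_mul_le_mul_left this (by positivity)
      have h3 : (0.9:ℝ) ^ 7 ≤ 0.9 ^ (2 + h) := pow_le_pow_of_le_one (by norm_num) (by norm_num) (by omega)
      refine le_trans ?_ h2
      rw [mul_comm (dY τ0 ^ (1 + h))]
      gcongr
  apply PP_eq_zero
  intro y
  have h1 := (hle τ hτ 1 y (Or.inl one_ne_zero)).trans hM0
  unfold Phi at h1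
  have hh0 := hY_pos hτ (x := 1) (y := y) (Or.inl one_ne_zero)
  have hd0 := dY_pos hτ
  rw [div_le_iff₀ (by positivity), zero_mul] at h1
  have h2 : ‖PP j (F τ) 1 y‖ ≤ 0 := by
    by_contra hc
    push Not at hc
    have : 0 < ‖PP j (F τ) 1 y‖ * dY τ ^ (1 + h) := by positivity
    linarith
  exact norm_le_zero_iff.1 h2
end

/-- For `j = 0, 2, 4, 6, 8` and `10`, the space `S_{j,2}(Γ₂,ε)` is zero. -/
theorem vanishing_Sj2_eps_small (ε : Matrix (Fin 4) (Fin 4) ℤ → ℂ) (hε : IsEps ε)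
    (j : ℕ) (hj : j = 0 ∨ j = 2 ∨ j = 4 ∨ j = 6 ∨ j = 8 ∨ j = 10) :
    SiegelCusp j 2 Sp4Z ε = ⊥ := by
  rw [eq_bot_iff]
  intro F hF
  rw [Submodule.mem_bot]
  have hF' : IsSiegelCuspForm j 2 Sp4Z ε F := hF
  funext τ
  by_cases hτ : τ ∈ H2
  · exact F_zero hε hF' hj hτ
  · exact hF'.2.2.2 τ hτ
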